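/- arXiv:0904.1691 — 2 statements merged into one kernel-verified Lean document; each statement's English description precedes it below -/
import Mathlib

section
/- Let 1 ≤ p, q, r ≤ ∞ satisfy 1/p ≥ |1/r − 1/2| + 1/q' and q ≤ min{r, r'}. Then there exists a constant C > 0 such that for every Schwartz function a on ℝ^{2d} and every Schwartz function f on ℝ^d one has ‖a(x,D)f‖_{L^r(ℝ^d)} ≤ C · ‖a‖_{M^{p,q}} · ‖f‖_{L^r(ℝ^d)}. -/
open MeasureTheory SchwartzMap Complex ENNReal NNReal

noncomputable section

/-- Mixed `L^p`-type norm of an `ℝ≥0∞`-valued function, with the usual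
`essSup` modification when `p = ∞`. -/
def lqNorm {α : Type*} [MeasurableSpace α] (μ : Measure α) (p : ℝ≥0∞)
    (f : α → ℝ≥0∞) : ℝ≥0∞ :=
  if p = ∞ then essSup f μ else (∫⁻ a, f a ^ p.toReal ∂μ) ^ (1 / p.toReal)

/-- Conjugate exponent in `ℝ≥0∞` : `1/p + 1/p' = 1`, with `1' = ∞`, `∞' = 1`. -/
def dualExp (p : ℝ≥0∞) : ℝ≥0∞ :=
  if p = 1 then ∞ else if p = ∞ then 1 else ENNReal.ofReal (p.toReal / (p.toReal - 1))

/-- `1/p` as a real number, with the convention `1/∞ = 0`. -/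
def invR (p : ℝ≥0∞) : ℝ := (p⁻¹).toReal

/-- The Gaussian window `G(t) = exp(-π |t|²)` (as a complex-valued function). -/
def gaussWin {ι : Type*} [Fintype ι] (t : EuclideanSpace ℝ ι) : ℂ :=
  Complex.exp (-(Real.pi * ‖t‖ ^ 2))

/-- Short-time Fourier transform with Gaussian window:
`V_G F (x, ω) = ∫ F t * conj (G (t - x)) * exp (-2πi ω⬝t) dt`. -/
def STFT {ι : Type*} [Fintype ι] (F : EuclideanSpace ℝ ι → ℂ)
    (x ω : EuclideanSpace ℝ ι) : ℂ :=
  ∫ t, F t * (starRingEnd ℂ) (gaussWin (t - x)) *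
    Complex.exp (Complex.I * (-(2 * Real.pi * (inner ℝ ω t : ℝ))))

/-- Modulation space norm `M^{p,q}`. -/
def modNorm {ι : Type*} [Fintype ι] (p q : ℝ≥0∞)
    (F : EuclideanSpace ℝ ι → ℂ) : ℝ≥0∞ :=
  lqNorm volume q fun ω => lqNorm volume p fun x => (‖STFT F x ω‖₊ : ℝ≥0∞)

/-- Wiener amalgam norm `W(𝓕 L^p, L^q)` (local component Fourier–Lebesgue). -/
def wFLNorm {ι : Type*} [Fintype ι] (p q : ℝ≥0∞)
    (F : EuclideanSpace ℝ ι → ℂ) : ℝ≥0∞ :=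
  lqNorm volume q fun x => lqNorm volume p fun ω => (‖STFT F x ω‖₊ : ℝ≥0∞)

/-- The unit cube `[0,1)^d`. -/
def unitCube (d : ℕ) : Set (EuclideanSpace ℝ (Fin d)) :=
  {x | ∀ i, x i ∈ Set.Ico (0 : ℝ) 1}

/-- Wiener amalgam norm
`‖f‖_{W(L^r,L^s)} = ( Σ_{n ∈ ℤ^d} ( ∫_{[0,1)^d} |f(x+n)|^r dx )^{s/r} )^{1/s}`. -/
def wNorm (d : ℕ) (r s : ℝ≥0∞) (f : EuclideanSpace ℝ (Fin d) → ℂ) : ℝ≥0∞ :=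
  lqNorm (Measure.count : Measure (Fin d → ℤ)) s fun n =>
    lqNorm (volume.restrict (unitCube d)) r fun x =>
      (‖f (x + show EuclideanSpace ℝ (Fin d) from WithLp.toLp 2 fun i => (n i : ℝ))‖₊ : ℝ≥0∞)

/-- Pairing `(x, ω) ∈ ℝ^d × ℝ^d ↦ ℝ^{2d}`. -/
def pairE {d : ℕ} (x ω : EuclideanSpace ℝ (Fin d)) :
    EuclideanSpace ℝ (Fin d ⊕ Fin d) :=
  WithLp.toLp 2 fun i => Sum.elim (fun j => x j) (fun j => ω j) i

/-- First (space) component of a point of `ℝ^{2d}`. -/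
def xpart {d : ℕ} (z : EuclideanSpace ℝ (Fin d ⊕ Fin d)) :
    EuclideanSpace ℝ (Fin d) := WithLp.toLp 2 fun i => z (Sum.inl i)

/-- Second (frequency) component of a point of `ℝ^{2d}`. -/
def wpart {d : ℕ} (z : EuclideanSpace ℝ (Fin d ⊕ Fin d)) :
    EuclideanSpace ℝ (Fin d) := WithLp.toLp 2 fun i => z (Sum.inr i)

/-- Fourier transform `f̂(ω) = ∫ f t e^{-2πi t⬝ω} dt`. -/
def fTrans {ι : Type*} [Fintype ι] (f : EuclideanSpace ℝ ι → ℂ)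
    (ω : EuclideanSpace ℝ ι) : ℂ :=
  ∫ t, f t * Complex.exp (Complex.I * (-(2 * Real.pi * (inner ℝ t ω : ℝ))))

/-- Kohn–Nirenberg operator `a(x,D) f (x) = ∫ a(x,ω) f̂(ω) e^{2πi x⬝ω} dω`. -/
def KNop {d : ℕ} (a : EuclideanSpace ℝ (Fin d ⊕ Fin d) → ℂ)
    (f : EuclideanSpace ℝ (Fin d) → ℂ) (x : EuclideanSpace ℝ (Fin d)) : ℂ :=
  ∫ ω, a (pairE x ω) * fTrans f ω *
    Complex.exp (Complex.I * (2 * Real.pi * (inner ℝ x ω : ℝ)))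

/-- Weyl operator `L_σ f (x) = ∫∫ e^{2πi (x-y)⬝ω} σ((x+y)/2, ω) f(y) dy dω`. -/
def weylOp {d : ℕ} (σ : EuclideanSpace ℝ (Fin d ⊕ Fin d) → ℂ)
    (f : EuclideanSpace ℝ (Fin d) → ℂ) (x : EuclideanSpace ℝ (Fin d)) : ℂ :=
  ∫ y, ∫ ω, Complex.exp (Complex.I * (2 * Real.pi * (inner ℝ (x - y) ω : ℝ))) *
    σ (pairE ((2 : ℝ)⁻¹ • (x + y)) ω) * f y

/-- Cross-Wigner distribution
`W(g,f)(x,ω) = ∫ g(x+t/2) conj(f(x−t/2)) e^{−2πi ω⬝t} dt`. -/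
def wigner {d : ℕ} (g f : EuclideanSpace ℝ (Fin d) → ℂ)
    (z : EuclideanSpace ℝ (Fin d ⊕ Fin d)) : ℂ :=
  ∫ t, g (xpart z + (2 : ℝ)⁻¹ • t) * (starRingEnd ℂ) (f (xpart z - (2 : ℝ)⁻¹ • t)) *
    Complex.exp (Complex.I * (-(2 * Real.pi * (inner ℝ (wpart z) t : ℝ))))

end

/-!
Testing `a(x,D)f` against `g` pairs `a` with the chirped tensor product of `g` and `f̂`. Inverting
the short-time Fourier transform turns this pairing into the integral over `z = (x, ω)` and
`ζ = (ξ, y)` of `|V a(z, ζ)| |V g(x, -(ω + ξ))| |V f(x + y, ω)|`. By Hausdorff–Young applied to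
Gaussian localizations, `‖f‖_r` controls the norm of `V f` in `L^{1/m₁}` in position of `L^{1/m₂}`
in frequency, where `m₁ = min {1/2, 1/r}` and `m₂ = min {1/2, 1/r'}`, and `‖g‖_{r'}` controls the
same norm of `V g` with `m₁` and `m₂` exchanged. The symbol norm `M^{p,q}` controls `M^{P,q}` for
`1/P = |1/r - 1/2| + 1/q' = 1 - m₁ - m₂ + 1/q'`.

A function of finite mixed norm is dominated by its norm times powers of two normalized densities,
one for each variable. The trilinear integrand is then a geometric mean of four functions of
integral at most `1`, with weights `1/P`, `1/q'`, `m₂ - 1/q'` and `m₁ - 1/q'`. The last two are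
nonnegative because `q ≤ min {r, r'}`, so Hölder's inequality bounds the integral, and duality of
`L^r` and `L^{r'}` gives the theorem.
-/

open scoped FourierTransform

section Plancherel

variable {V : Type*} [NormedAddCommGroup V] [InnerProductSpace ℝ V] [FiniteDimensional ℝ V]
  [MeasurableSpace V] [BorelSpace V]

theorem integral_fourier_mul_eq_integral_mul_fourier {f g : V → ℂ}
    (hf : Integrable f) (hg : Integrable g) : ∫ x, 𝓕 f x * g x = ∫ x, f x * 𝓕 g x := by
  have h := VectorFourier.integral_fourierIntegral_smul_eq_flip (L := innerₗ V)
    (e := Real.fourierChar) (μ := volume) (ν := volume)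
    Real.continuous_fourierChar continuous_inner hf hg
  rw [flip_innerₗ] at h
  simpa only [smul_eq_mul] using! h

theorem continuous_fourier {f : V → ℂ} (hf : Integrable f) : Continuous (𝓕 f) :=
  VectorFourier.fourierIntegral_continuous Real.continuous_fourierChar continuous_inner hf

theorem enorm_fourier_le_lintegral_enorm (f : V → ℂ) (w : V) : ‖𝓕 f w‖ₑ ≤ ∫⁻ x, ‖f x‖ₑ := by
  rw [Real.fourier_eq]
  refine (enorm_integral_le_lintegral_enorm _).trans_eq (lintegral_congr fun x ↦ ?_)
  rw [← ofReal_norm, ← ofReal_norm, Circle.norm_smul]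

theorem fourier_toLp_ae_eq {h : V → ℂ} (h1 : Integrable h) (h2 : MemLp h 2) :
    (𝓕 (h2.toLp h) : Lp ℂ 2 (volume : Measure V)) =ᵐ[volume] 𝓕 h := by
  refine ae_eq_of_integral_contDiff_smul_eq ((Lp.memLp _).locallyIntegrable one_le_two)
    (continuous_fourier h1).locallyIntegrable fun g hg hgs ↦ ?_
  have hgs' : HasCompactSupport fun x ↦ (g x : ℂ) := hgs.comp_left (g := ((↑) : ℝ → ℂ)) rfl
  let φ : 𝓢(V, ℂ) := hgs'.toSchwartzMap (Complex.ofRealCLM.contDiff.comp hg)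
  have hdist := congrArg (fun T ↦ T φ) (Lp.fourier_toTemperedDistribution_eq (h2.toLp h))
  simp only [TemperedDistribution.fourier_apply, Lp.toTemperedDistribution_apply] at hdist
  have hcongr : ∫ x, (𝓕 φ) x • (h2.toLp h) x = ∫ x, 𝓕 (φ : V → ℂ) x * h x := by
    refine integral_congr_ae ?_
    filter_upwards [h2.coeFn_toLp] with x hx
    rw [hx, smul_eq_mul, SchwartzMap.fourier_coe]
  rw [hcongr, integral_fourier_mul_eq_integral_mul_fourier φ.integrable h1] at hdist
  simpa only [Complex.real_smul, smul_eq_mul] using! hdist.symm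

theorem eLpNorm_two_fourier {h : V → ℂ} (h1 : Integrable h) (h2 : MemLp h 2) :
    eLpNorm (𝓕 h) 2 volume = eLpNorm h 2 volume := by
  rw [← eLpNorm_congr_ae (fourier_toLp_ae_eq h1 h2), ← eLpNorm_congr_ae h2.coeFn_toLp,
    ← Lp.enorm_def, ← Lp.enorm_def, ← ofReal_norm, ← ofReal_norm, Lp.norm_fourier_eq]

theorem lintegral_enorm_fourier_sq {h : V → ℂ} (h1 : Integrable h) (h2 : MemLp h 2) :
    ∫⁻ w, ‖𝓕 h w‖ₑ ^ 2 = ∫⁻ x, ‖h x‖ₑ ^ 2 := by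
  have hsq (k : V → ℂ) : eLpNorm k 2 volume ^ 2 = ∫⁻ x, ‖k x‖ₑ ^ 2 := by
    simpa using eLpNorm_nnreal_pow_eq_lintegral (f := k) (p := 2) (μ := volume) two_ne_zero
  rw [← hsq, ← hsq, eLpNorm_two_fourier h1 h2]

theorem fourier_conj (h : V → ℂ) (w : V) :
    𝓕 (fun x ↦ starRingEnd ℂ (h x)) w = starRingEnd ℂ (𝓕 h (-w)) := by
  rw [Real.fourier_eq, Real.fourier_eq, ← integral_conj]
  refine integral_congr_ae (.of_forall fun x ↦ ?_)
  simp only [Circle.smul_def, smul_eq_mul, map_mul, ← Circle.coe_inv_eq_conj,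
    ← AddChar.map_neg_eq_inv, inner_neg_right, neg_neg]

theorem integral_fourier_mul_conj_fourier {h k : V → ℂ} (h1 : Integrable h) (h2 : MemLp h 2)
    (k1 : Integrable k) (k2 : MemLp k 2) :
    ∫ w, 𝓕 k w * starRingEnd ℂ (𝓕 h w) = ∫ x, k x * starRingEnd ℂ (h x) := by
  have hL2 := Lp.inner_fourier_eq (h2.toLp h) (k2.toLp k)
  simp only [L2.inner_def, RCLike.inner_apply] at hL2
  exact (integral_congr_ae ((fourier_toLp_ae_eq k1 k2).mul (fourier_toLp_ae_eq h1 h2).star)).symm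
    |>.trans (hL2.trans (integral_congr_ae (k2.coeFn_toLp.mul h2.coeFn_toLp.star)))

theorem integral_mul_eq_integral_fourier_mul_fourier_neg {h k : V → ℂ}
    (h1 : Integrable h) (h2 : MemLp h 2) (k1 : Integrable k) (k2 : MemLp k 2) :
    ∫ x, k x * h x = ∫ w, 𝓕 k w * 𝓕 h (-w) := by
  have hconj : Integrable fun x ↦ starRingEnd ℂ (h x) :=
    Complex.conjLIE.toContinuousLinearEquiv.toContinuousLinearMap.integrable_comp h1
  simpa only [Complex.conj_conj, fourier_conj] using
    (integral_fourier_mul_conj_fourier hconj h2.star k1 k2).symm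

end Plancherel

section HausdorffYoung

variable {V : Type*} [NormedAddCommGroup V] [InnerProductSpace ℝ V] [FiniteDimensional ℝ V]
  [MeasurableSpace V] [BorelSpace V]

theorem lintegral_Ioc_rpow_sub_one {M k : ℝ} (hM : 0 ≤ M) (hk : 0 < k) :
    ∫⁻ t in Set.Ioc 0 M, ENNReal.ofReal (t ^ (k - 1)) = ENNReal.ofReal (M ^ k / k) := by
  have hint : IntegrableOn (fun t : ℝ ↦ t ^ (k - 1)) (Set.Ioc 0 M) :=
    (intervalIntegrable_iff_integrableOn_Ioc_of_le hM).1
      (intervalIntegral.intervalIntegrable_rpow' (by linarith))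
  rw [← ofReal_integral_eq_lintegral_ofReal hint, ← intervalIntegral.integral_of_le hM,
    integral_rpow (Or.inl (by linarith)), sub_add_cancel, Real.zero_rpow hk.ne', sub_zero]
  exact (ae_restrict_iff' measurableSet_Ioc).2 (.of_forall fun t ht ↦ Real.rpow_nonneg ht.1.le _)

/- The part of `h` outside `S` has Fourier transform at most `τ`, so it is the part inside `S`, to
which Plancherel applies, that must exceed `τ`. -/
theorem sq_mul_volume_two_mul_lt_fourier_le {h : V → ℂ} (h1 : Integrable h) (h2 : MemLp h 2)
    {S : Set V} (hS : MeasurableSet S) {τ : ℝ≥0∞} (hτ : ∫⁻ x in Sᶜ, ‖h x‖ₑ ≤ τ) :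
    τ ^ 2 * volume {w | 2 * τ < ‖𝓕 h w‖ₑ} ≤ ∫⁻ x in S, ‖h x‖ₑ ^ 2 := by
  have hadd (w : V) : 𝓕 h w = 𝓕 (S.indicator h) w + 𝓕 (Sᶜ.indicator h) w := by
    conv_lhs => rw [← Set.indicator_self_add_compl S h]
    simp only [Real.fourier_eq, Pi.add_apply, smul_add]
    exact integral_add ((Real.fourierIntegral_convergent_iff w).2 (h1.indicator hS))
      ((Real.fourierIntegral_convergent_iff w).2 (h1.indicator hS.compl))
  have hcompl (w : V) : ‖𝓕 (Sᶜ.indicator h) w‖ₑ ≤ τ := by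
    refine (enorm_fourier_le_lintegral_enorm _ w).trans ?_
    simpa only [enorm_indicator_eq_indicator_enorm, lintegral_indicator hS.compl] using hτ
  have hsub : {w | 2 * τ < ‖𝓕 h w‖ₑ} ⊆ {w | τ ^ 2 ≤ ‖𝓕 (S.indicator h) w‖ₑ ^ 2} := by
    intro w (hw : 2 * τ < ‖𝓕 h w‖ₑ)
    change τ ^ 2 ≤ ‖𝓕 (S.indicator h) w‖ₑ ^ 2
    by_contra! hlt
    have hsmall : ‖𝓕 (S.indicator h) w‖ₑ ≤ τ :=
      le_of_not_ge fun hle ↦ hlt.not_ge (by gcongr)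
    refine hw.not_ge ?_
    rw [hadd, two_mul]
    exact (enorm_add_le _ _).trans (add_le_add hsmall (hcompl w))
  calc τ ^ 2 * volume {w | 2 * τ < ‖𝓕 h w‖ₑ}
      ≤ τ ^ 2 * volume {w | τ ^ 2 ≤ ‖𝓕 (S.indicator h) w‖ₑ ^ 2} := by gcongr
    _ ≤ ∫⁻ w, ‖𝓕 (S.indicator h) w‖ₑ ^ 2 := mul_meas_ge_le_lintegral₀
        ((continuous_fourier (h1.indicator hS)).enorm.measurable.pow_const 2).aemeasurable _
    _ = ∫⁻ x, ‖S.indicator h x‖ₑ ^ 2 :=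
        lintegral_enorm_fourier_sq (h1.indicator hS) (h2.indicator hS)
    _ = ∫⁻ x in S, ‖h x‖ₑ ^ 2 := by
        rw [← lintegral_indicator hS]
        refine lintegral_congr fun x ↦ ?_
        by_cases hx : x ∈ S <;> simp [hx]

theorem setLIntegral_enorm_of_lt_rpow_le {α E : Type*} [MeasurableSpace α] {μ : Measure α}
    [NormedAddCommGroup E] [MeasurableSpace E] [OpensMeasurableSpace E] {ρ N t : ℝ} (hρ : 1 < ρ)
    (hN : 0 < N) (ht : 0 < t) {h : α → E} (hm : Measurable h)
    (hhN : ∫⁻ x, ‖h x‖ₑ ^ ρ ∂μ ≤ ENNReal.ofReal N) :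
    ∫⁻ x in {x | 2 * N < t * ‖h x‖ ^ (ρ - 1)}, ‖h x‖ₑ ∂μ ≤ ENNReal.ofReal (t / 2) := by
  set T : Set α := {x | 2 * N < t * ‖h x‖ ^ (ρ - 1)}
  have hT : MeasurableSet T := measurableSet_lt measurable_const ((hm.norm.pow_const _).const_mul t)
  have hpoint : ∀ x ∈ T, ‖h x‖ₑ ≤ ENNReal.ofReal (t / (2 * N)) * ‖h x‖ₑ ^ ρ := by
    intro x (hx : 2 * N < t * ‖h x‖ ^ (ρ - 1))
    rw [← ofReal_norm, ENNReal.ofReal_rpow_of_nonneg (norm_nonneg _) (by linarith),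
      ← ENNReal.ofReal_mul (by positivity)]
    refine ENNReal.ofReal_le_ofReal ?_
    rw [show ρ = ρ - 1 + 1 by ring, Real.rpow_add_one' (norm_nonneg _) (by linarith),
      div_mul_eq_mul_div, le_div_iff₀ (by positivity)]
    nlinarith [norm_nonneg (h x)]
  calc ∫⁻ x in T, ‖h x‖ₑ ∂μ
      ≤ ∫⁻ x in T, ENNReal.ofReal (t / (2 * N)) * ‖h x‖ₑ ^ ρ ∂μ := setLIntegral_mono' hT hpoint
    _ ≤ ENNReal.ofReal (t / (2 * N)) * ∫⁻ x, ‖h x‖ₑ ^ ρ ∂μ := by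
        rw [lintegral_const_mul' _ _ ENNReal.ofReal_ne_top]
        exact mul_le_mul_right (setLIntegral_le_lintegral _ _) _
    _ ≤ ENNReal.ofReal (t / (2 * N)) * ENNReal.ofReal N := by gcongr
    _ = ENNReal.ofReal (t / 2) := by
        rw [← ENNReal.ofReal_mul (by positivity)]
        congr 1
        field_simp

theorem volume_lt_norm_fourier_le {ρ N t : ℝ} (hρ : 1 < ρ) (hN : 0 < N) (ht : 0 < t) {h : V → ℂ}
    (hm : Measurable h) (h1 : Integrable h) (h2 : MemLp h 2)
    (hhN : ∫⁻ x, ‖h x‖ₑ ^ ρ ≤ ENNReal.ofReal N) :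
    volume {w | t < ‖𝓕 h w‖} ≤ ENNReal.ofReal (4 / t ^ 2) *
      ∫⁻ x, if t * ‖h x‖ ^ (ρ - 1) ≤ 2 * N then ENNReal.ofReal (‖h x‖ ^ 2) else 0 := by
  set S : Set V := {x | t * ‖h x‖ ^ (ρ - 1) ≤ 2 * N}
  have hS : MeasurableSet S := measurableSet_le ((hm.norm.pow_const _).const_mul t) measurable_const
  have htail : ∫⁻ x in Sᶜ, ‖h x‖ₑ ≤ ENNReal.ofReal (t / 2) := by
    rw [show Sᶜ = {x | 2 * N < t * ‖h x‖ ^ (ρ - 1)} from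
      Set.ext fun _ ↦ not_le (a := t * _) (b := 2 * N)]
    exact setLIntegral_enorm_of_lt_rpow_le hρ hN ht hm hhN
  have hset : {w | t < ‖𝓕 h w‖} = {w | 2 * ENNReal.ofReal (t / 2) < ‖𝓕 h w‖ₑ} := by
    ext w
    rw [Set.mem_ofPred_eq, Set.mem_ofPred_eq, ← ENNReal.ofReal_ofNat,
      ← ENNReal.ofReal_mul zero_le_two, mul_div_cancel₀ t two_ne_zero, ← ofReal_norm,
      ENNReal.ofReal_lt_ofReal_iff']
    exact ⟨fun hlt ↦ ⟨hlt, ht.trans hlt⟩, And.left⟩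
  have hcancel : ENNReal.ofReal (4 / t ^ 2) * ENNReal.ofReal (t / 2) ^ 2 = 1 := by
    rw [← ENNReal.ofReal_pow (by positivity), ← ENNReal.ofReal_mul (by positivity),
      ENNReal.ofReal_eq_one]
    field_simp
    norm_num
  rw [hset, ← one_mul (volume _), ← hcancel, mul_assoc]
  refine mul_le_mul_right ((sq_mul_volume_two_mul_lt_fourier_le h1 h2 hS htail).trans_eq ?_) _
  rw [← lintegral_indicator hS]
  refine lintegral_congr fun x ↦ ?_
  simp only [S, Set.indicator, Set.mem_ofPred_eq, ← ofReal_norm,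
    ENNReal.ofReal_pow (norm_nonneg _)]

theorem lintegral_Ioi_ite_mul_rpow {ρ s N y : ℝ} (hρs : ρ.HolderConjugate s) (hs : 2 < s)
    (hN : 0 < N) (hy : 0 ≤ y) :
    ∫⁻ t in Set.Ioi (0 : ℝ), (if t * y ^ (ρ - 1) ≤ 2 * N then ENNReal.ofReal (y ^ 2) else 0) *
        ENNReal.ofReal (t ^ (s - 3)) =
      ENNReal.ofReal ((2 * N) ^ (s - 2) / (s - 2)) * ENNReal.ofReal (y ^ ρ) := by
  rcases hy.eq_or_lt with rfl | hy
  · simp [Real.zero_rpow hρs.ne_zero]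
  have hs2 : 0 < s - 2 := by linarith
  set M : ℝ := 2 * N * y ^ (1 - ρ)
  have hM : 0 < M := by positivity
  have hM_iff (t : ℝ) : t * y ^ (ρ - 1) ≤ 2 * N ↔ t ≤ M := by
    rw [show M = 2 * N / y ^ (ρ - 1) by simp only [M, ← neg_sub ρ 1, Real.rpow_neg hy.le,
      div_eq_mul_inv], le_div_iff₀ (by positivity)]
  have hexp : y ^ 2 * y ^ ((1 - ρ) * (s - 2)) = y ^ ρ := by
    rw [← Real.rpow_natCast, ← Real.rpow_add hy]
    congr 1
    push_cast
    linarith [hρs.mul_eq_add]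
  calc _ = ∫⁻ t in Set.Ioi (0 : ℝ), (Set.Iic M).indicator
          (fun t ↦ ENNReal.ofReal (y ^ 2) * ENNReal.ofReal (t ^ (s - 2 - 1))) t := by
        refine lintegral_congr fun t ↦ ?_
        rw [show s - 2 - 1 = s - 3 by ring]
        by_cases ht : t ≤ M <;> simp [hM_iff, ht]
    _ = ENNReal.ofReal (y ^ 2) * ENNReal.ofReal (M ^ (s - 2) / (s - 2)) := by
        rw [setLIntegral_indicator measurableSet_Iic, Set.inter_comm, Set.Ioi_inter_Iic,
          lintegral_const_mul' _ _ ENNReal.ofReal_ne_top, lintegral_Ioc_rpow_sub_one hM.le hs2]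
    _ = _ := by
        rw [← ENNReal.ofReal_mul (by positivity), ← ENNReal.ofReal_mul (by positivity), ← hexp,
          Real.mul_rpow (by positivity) (by positivity), ← Real.rpow_mul hy.le]
        ring_nf

theorem volume_lt_norm_fourier_mul_rpow_le {ρ N t : ℝ} (hρ : 1 < ρ) (hN : 0 < N) (ht : 0 < t)
    (s : ℝ) {h : V → ℂ} (hm : Measurable h) (h1 : Integrable h) (h2 : MemLp h 2)
    (hhN : ∫⁻ x, ‖h x‖ₑ ^ ρ ≤ ENNReal.ofReal N) :
    volume {w | t < ‖𝓕 h w‖} * ENNReal.ofReal (t ^ (s - 1)) ≤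
      4 * ∫⁻ x, (if t * ‖h x‖ ^ (ρ - 1) ≤ 2 * N then ENNReal.ofReal (‖h x‖ ^ 2) else 0) *
        ENNReal.ofReal (t ^ (s - 3)) := by
  have hpow : ENNReal.ofReal (4 / t ^ 2) * ENNReal.ofReal (t ^ (s - 1)) =
      4 * ENNReal.ofReal (t ^ (s - 3)) := by
    rw [← ENNReal.ofReal_mul (by positivity), show s - 1 = s - 3 + (2 : ℕ) by push_cast; ring,
      Real.rpow_add_natCast ht.ne', ← ENNReal.ofReal_ofNat, ← ENNReal.ofReal_mul (by norm_num)]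
    congr 1
    field_simp
  rw [lintegral_mul_const' _ _ ENNReal.ofReal_ne_top, mul_left_comm, ← hpow, mul_left_comm,
    ← mul_assoc]
  exact mul_le_mul_left (volume_lt_norm_fourier_le hρ hN ht hm h1 h2 hhN) _

theorem lintegral_enorm_fourier_rpow_le {ρ s N : ℝ} (hρs : ρ.HolderConjugate s) (hs : 2 < s)
    (hN : 0 < N) {h : V → ℂ} (hm : Measurable h) (h1 : Integrable h) (h2 : MemLp h 2)
    (hhN : ∫⁻ x, ‖h x‖ₑ ^ ρ ≤ ENNReal.ofReal N) :
    ∫⁻ w, ‖𝓕 h w‖ₑ ^ s ≤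
      ENNReal.ofReal (s * (4 * (2 ^ (s - 2) / (s - 2)))) * ENNReal.ofReal (N ^ (s - 1)) := by
  let low (t : ℝ) (x : V) : ℝ≥0∞ :=
    if t * ‖h x‖ ^ (ρ - 1) ≤ 2 * N then ENNReal.ofReal (‖h x‖ ^ 2) else 0
  have hlow : Measurable (Function.uncurry low) :=
    Measurable.ite
      (measurableSet_le (measurable_fst.mul ((hm.comp measurable_snd).norm.pow_const _))
        measurable_const)
      ((hm.comp measurable_snd).norm.pow_const 2).ennreal_ofReal measurable_const
  calc ∫⁻ w, ‖𝓕 h w‖ₑ ^ s = ∫⁻ w, ENNReal.ofReal (‖𝓕 h w‖ ^ s) := by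
        simp only [← ofReal_norm, ENNReal.ofReal_rpow_of_nonneg (norm_nonneg _) hρs.symm.nonneg]
    _ = ENNReal.ofReal s * ∫⁻ t in Set.Ioi 0, volume {w : V | t < ‖𝓕 h w‖} *
          ENNReal.ofReal (t ^ (s - 1)) :=
        lintegral_rpow_eq_lintegral_meas_lt_mul _ (.of_forall fun _ ↦ norm_nonneg _)
          (continuous_fourier h1).norm.aemeasurable hρs.symm.pos
    _ ≤ ENNReal.ofReal s *
          (4 * ∫⁻ t in Set.Ioi (0 : ℝ), ∫⁻ x, low t x * ENNReal.ofReal (t ^ (s - 3))) := by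
        rw [← lintegral_const_mul' 4 _ (by finiteness)]
        exact mul_le_mul_right (setLIntegral_mono' measurableSet_Ioi fun t ht ↦
          volume_lt_norm_fourier_mul_rpow_le hρs.lt hN ht s hm h1 h2 hhN) _
    _ = ENNReal.ofReal s *
          (4 * ∫⁻ x, ∫⁻ t in Set.Ioi (0 : ℝ), low t x * ENNReal.ofReal (t ^ (s - 3))) := by
        rw [lintegral_lintegral_swap (hlow.mul
          (measurable_fst.pow_const _).ennreal_ofReal).aemeasurable]
    _ ≤ ENNReal.ofReal s * (4 * (ENNReal.ofReal ((2 * N) ^ (s - 2) / (s - 2)) *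
          ENNReal.ofReal N)) := by
        simp only [low, lintegral_Ioi_ite_mul_rpow hρs hs hN (norm_nonneg _),
          ← ENNReal.ofReal_rpow_of_nonneg (norm_nonneg _) hρs.nonneg, ofReal_norm]
        rw [lintegral_const_mul' _ _ ENNReal.ofReal_ne_top]
        gcongr
    _ = _ := by
        have : 0 < s - 2 := by linarith
        rw [← ENNReal.ofReal_ofNat, ← ENNReal.ofReal_mul (by positivity),
          ← ENNReal.ofReal_mul (by positivity), ← ENNReal.ofReal_mul hρs.symm.nonneg,
          ← ENNReal.ofReal_mul (mul_nonneg hρs.symm.nonneg (by positivity)),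
          Real.mul_rpow zero_le_two hN.le, show s - 1 = s - 2 + 1 by ring,
          Real.rpow_add_one hN.ne']
        ring_nf

theorem fourier_eq_zero_of_ae_eq_zero {h : V → ℂ} (h0 : h =ᵐ[volume] 0) (w : V) : 𝓕 h w = 0 := by
  rw [Real.fourier_congr_ae h0]
  simp [Real.fourier_eq]

theorem hausdorff_young_of_lt_two {ρ s : ℝ≥0∞} [ρ.HolderConjugate s] (hρ1 : 1 < ρ)
    (hρ2 : ρ < 2) :
    ∃ K ≠ ∞, ∀ h : V → ℂ, Measurable h → Integrable h → MemLp h 2 →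
      eLpNorm (𝓕 h) s volume ≤ K * eLpNorm h ρ volume := by
  have hρ_top : ρ ≠ ∞ := hρ2.ne_top
  have hs_top : s ≠ ∞ := (ENNReal.HolderConjugate.lt_top_iff_one_lt s ρ).2 hρ1 |>.ne
  have hρ0 : ρ ≠ 0 := (zero_lt_one.trans hρ1).ne'
  have hρs : ρ.toReal.HolderConjugate s.toReal :=
    ENNReal.HolderConjugate.toReal_of_ne_top hρ_top hs_top
  have hs : 2 < s.toReal := by
    have hρ2' : ρ.toReal < 2 := by simpa using (ENNReal.toReal_lt_toReal hρ_top (by simp)).2 hρ2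
    nlinarith [hρs.mul_eq_add, hρs.lt, hρs.symm.lt]
  set K : ℝ := s.toReal * (4 * (2 ^ (s.toReal - 2) / (s.toReal - 2)))
  refine ⟨ENNReal.ofReal K ^ (1 / s.toReal), by finiteness, fun h hm h1 h2 ↦ ?_⟩
  have hK : 0 < K := mul_pos hρs.symm.pos (by have := sub_pos.2 hs; positivity)
  rcases eq_or_ne (eLpNorm h ρ volume) ∞ with htop | htop
  · rw [htop, ENNReal.mul_top (by simp [hK])]
    exact le_top
  rcases eq_or_ne (eLpNorm h ρ volume) 0 with hzero | hzero
  · rw [eLpNorm_eq_zero_iff hm.aestronglyMeasurable hρ0] at hzero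
    simp [funext (fourier_eq_zero_of_ae_eq_zero hzero)]
  have hN := lintegral_enorm_fourier_rpow_le hρs hs
    (N := (eLpNorm h ρ volume).toReal ^ ρ.toReal) (Real.rpow_pos_of_pos (toReal_pos hzero htop) _)
    hm h1 h2 (by
      rw [← ENNReal.ofReal_rpow_of_nonneg toReal_nonneg hρs.nonneg, ENNReal.ofReal_toReal htop,
        eLpNorm_eq_lintegral_rpow_enorm_toReal hρ0 hρ_top, ← ENNReal.rpow_mul,
        one_div_mul_cancel hρs.ne_zero, ENNReal.rpow_one])
  rw [← Real.rpow_mul toReal_nonneg, mul_comm ρ.toReal, hρs.symm.sub_one_mul_conj,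
    ← ENNReal.ofReal_rpow_of_nonneg toReal_nonneg hρs.symm.nonneg,
    ENNReal.ofReal_toReal htop] at hN
  rw [eLpNorm_eq_lintegral_rpow_enorm_toReal (ENNReal.HolderConjugate.ne_zero s ρ) hs_top]
  calc (∫⁻ w, ‖𝓕 h w‖ₑ ^ s.toReal) ^ (1 / s.toReal)
      ≤ (ENNReal.ofReal K * eLpNorm h ρ volume ^ s.toReal) ^ (1 / s.toReal) := by
        exact ENNReal.rpow_le_rpow hN (by positivity)
    _ = ENNReal.ofReal K ^ (1 / s.toReal) * eLpNorm h ρ volume := by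
        rw [ENNReal.mul_rpow_of_nonneg _ _ (by positivity), ← ENNReal.rpow_mul,
          mul_one_div_cancel hρs.symm.ne_zero, ENNReal.rpow_one]

theorem hausdorff_young {ρ s : ℝ≥0∞} [ρ.HolderConjugate s] (hρ : ρ ≤ 2) :
    ∃ K ≠ ∞, ∀ h : V → ℂ, Measurable h → Integrable h → MemLp h 2 →
      eLpNorm (𝓕 h) s volume ≤ K * eLpNorm h ρ volume := by
  rcases (ENNReal.HolderConjugate.one_le ρ s).eq_or_lt with rfl | hρ1
  · obtain rfl : s = ∞ := (ENNReal.HolderConjugate.unique 1 s ∞)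
    refine ⟨1, ENNReal.one_ne_top, fun h _ _ _ ↦ ?_⟩
    rw [one_mul, eLpNorm_exponent_top, eLpNorm_one_eq_lintegral_enorm]
    exact eLpNormEssSup_le_of_ae_enorm_bound (.of_forall (enorm_fourier_le_lintegral_enorm h))
  rcases hρ.eq_or_lt with rfl | hρ2
  · obtain rfl : s = 2 := ENNReal.HolderConjugate.unique 2 s 2
    exact ⟨1, ENNReal.one_ne_top, fun h _ h1 h2 ↦ by rw [one_mul, eLpNorm_two_fourier h1 h2]⟩
  exact hausdorff_young_of_lt_two hρ1 hρ2

end HausdorffYoung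

section BoundedIntegrable

theorem eLpNorm_le_max_one_mul {α : Type*} [MeasurableSpace α] {μ : Measure α} {r u : ℝ≥0∞}
    (hr : r ≠ 0) (hru : r ≤ u) {m : α → ℝ≥0∞} {M K : ℝ≥0∞} (hM : ∀ x, m x ≤ M)
    (hmr : eLpNorm m r μ ≤ K * M) : eLpNorm m u μ ≤ max 1 K * M := by
  have hMu : M ≤ max 1 K * M := le_mul_of_one_le_left' (le_max_left _ _)
  rcases eq_or_ne u ∞ with rfl | hu
  · exact (eLpNormEssSup_le_of_ae_enorm_bound (.of_forall hM)).trans hMu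
  have hr_top : r ≠ ∞ := ne_top_of_le_ne_top hu hru
  have hr_pos := ENNReal.toReal_pos hr hr_top
  have hru' := ENNReal.toReal_mono hu hru
  have hu_pos := hr_pos.trans_le hru'
  rw [eLpNorm_eq_lintegral_rpow_enorm_toReal (hr.bot_lt.trans_le hru).ne' hu, one_div,
    ENNReal.rpow_inv_le_iff hu_pos]
  rw [eLpNorm_eq_lintegral_rpow_enorm_toReal hr hr_top, one_div,
    ENNReal.rpow_inv_le_iff hr_pos] at hmr
  simp only [enorm_eq_self] at hmr ⊢
  rcases eq_or_ne M ∞ with rfl | hM_top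
  · simp [ENNReal.mul_top, hu_pos]
  calc ∫⁻ x, m x ^ u.toReal ∂μ ≤ ∫⁻ x, M ^ (u.toReal - r.toReal) * m x ^ r.toReal ∂μ := by
        refine lintegral_mono fun x ↦ ?_
        rw [← sub_add_cancel u.toReal r.toReal,
          ENNReal.rpow_add_of_nonneg _ _ (sub_nonneg.2 hru') hr_pos.le, add_sub_cancel_right]
        gcongr
        exact hM x
    _ = M ^ (u.toReal - r.toReal) * ∫⁻ x, m x ^ r.toReal ∂μ :=
        lintegral_const_mul' _ _ (ENNReal.rpow_ne_top_of_nonneg (sub_nonneg.2 hru') hM_top)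
    _ ≤ (max 1 K * M) ^ (u.toReal - r.toReal) * (max 1 K * M) ^ r.toReal := by
        gcongr
        exact hmr.trans (by gcongr; exact le_max_right _ _)
    _ = (max 1 K * M) ^ u.toReal := by
        rw [← ENNReal.rpow_add_of_nonneg _ _ (sub_nonneg.2 hru') hr_pos.le, sub_add_cancel]

variable {α : Type*} [MeasureSpace α]

/-- Bounded integrable functions: a class containing both the Schwartz functions and the truncations
used in duality arguments. Such a function lies in every `L^p`, `1 ≤ p`. -/
structure IsBoundedIntegrable (f : α → ℂ) : Prop where
  measurable : Measurable f
  integrable : Integrable f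
  exists_norm_le : ∃ M : ℝ, ∀ x, ‖f x‖ ≤ M

namespace IsBoundedIntegrable

variable {f : α → ℂ}

theorem memLp (hf : IsBoundedIntegrable f) {p : ℝ≥0∞} (hp : 1 ≤ p) : MemLp f p := by
  obtain ⟨M, hM⟩ := hf.exists_norm_le
  refine ⟨hf.measurable.aestronglyMeasurable, ?_⟩
  have hf_le (x : α) : ‖f x‖ₑ ≤ max (ENNReal.ofReal M) (eLpNorm f 1 volume) :=
    le_max_of_le_left (by rw [← ofReal_norm]; exact ENNReal.ofReal_le_ofReal (hM x))
  rw [← eLpNorm_enorm]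
  refine (eLpNorm_le_max_one_mul (K := 1) one_ne_zero hp hf_le ?_).trans_lt ?_
  · rw [eLpNorm_enorm, one_mul]
    exact le_max_right _ _
  · finiteness [(memLp_one_iff_integrable.2 hf.integrable).eLpNorm_ne_top]

theorem bdd_mul (hf : IsBoundedIntegrable f) {g : α → ℂ} {M : ℝ} (hg : Measurable g)
    (hM : ∀ x, ‖g x‖ ≤ M) : IsBoundedIntegrable fun x ↦ g x * f x where
  measurable := hg.mul hf.measurable
  integrable := hf.integrable.bdd_mul hg.aestronglyMeasurable (.of_forall hM)
  exists_norm_le := hf.exists_norm_le.imp' (M * ·) fun N hN x ↦ by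
    rw [norm_mul]
    exact mul_le_mul (hM x) (hN x) (norm_nonneg _) ((norm_nonneg _).trans (hM x))

protected theorem mul {g : α → ℂ} (hf : IsBoundedIntegrable f) (hg : IsBoundedIntegrable g) :
    IsBoundedIntegrable fun x ↦ f x * g x :=
  hf.exists_norm_le.elim fun _ ↦ hg.bdd_mul hf.measurable

protected theorem comp_sub_right {V : Type*} [AddGroup V] [MeasureSpace V] [MeasurableAdd₂ V]
    [MeasurableNeg V] [(volume : Measure V).IsAddRightInvariant] {φ : V → ℂ}
    (hφ : IsBoundedIntegrable φ) (x : V) : IsBoundedIntegrable fun t ↦ φ (t - x) where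
  measurable := hφ.measurable.comp (measurable_sub_const x)
  integrable := hφ.integrable.comp_sub_right x
  exists_norm_le := hφ.exists_norm_le.imp fun _ hM _ ↦ hM _

end IsBoundedIntegrable

end BoundedIntegrable

section Gaussian

variable {V : Type*} [NormedAddCommGroup V]

/-- The Gaussian `t ↦ exp (-π c |t|²)`; `c = 1` is the window of the modulation norms. -/
noncomputable def gaussian (c : ℝ) (t : V) : ℂ := cexp (-(Real.pi * c * ‖t‖ ^ 2))

theorem norm_gaussian (c : ℝ) (t : V) :
    ‖gaussian c t‖ = Real.exp (-(Real.pi * c * ‖t‖ ^ 2)) := by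
  rw [gaussian, Complex.norm_exp]
  norm_cast

theorem gaussian_mul_gaussian (c c' : ℝ) (t : V) :
    gaussian c t * gaussian c' t = gaussian (c + c') t := by
  rw [gaussian, gaussian, gaussian, ← Complex.exp_add]
  push_cast
  ring_nf

theorem gaussian_sub_mul_gaussian_sub [InnerProductSpace ℝ V] (c : ℝ) (t y z : V) :
    gaussian c (t - y) * gaussian c (y - z) =
      gaussian (c / 2) (t - z) * gaussian (2 * c) (y - (2⁻¹ : ℝ) • (t + z)) := by
  have hparallelogram : ‖t - y‖ ^ 2 + ‖y - z‖ ^ 2 =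
      2⁻¹ * ‖t - z‖ ^ 2 + 2 * ‖y - (2⁻¹ : ℝ) • (t + z)‖ ^ 2 := by
    simp only [← real_inner_self_eq_norm_sq, inner_sub_left, inner_sub_right, inner_smul_left,
      inner_smul_right, inner_add_left, inner_add_right, real_inner_comm, RCLike.conj_to_real]
    ring
  have hcast := congrArg (Complex.ofReal) hparallelogram
  push_cast at hcast
  simp only [gaussian, ← Complex.exp_add]
  congr 1
  push_cast
  linear_combination (-Real.pi * c) * hcast

@[fun_prop]
theorem continuous_gaussian (c : ℝ) : Continuous (gaussian c : V → ℂ) := by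
  unfold gaussian
  fun_prop

@[fun_prop]
theorem measurable_gaussian [MeasurableSpace V] [OpensMeasurableSpace V] (c : ℝ) :
    Measurable (gaussian c : V → ℂ) :=
  (continuous_gaussian c).measurable

theorem norm_gaussian_le_one {c : ℝ} (hc : 0 ≤ c) (t : V) : ‖gaussian c t‖ ≤ 1 := by
  rw [norm_gaussian, Real.exp_le_one_iff, neg_nonpos]
  positivity

theorem enorm_gaussian_le_one {c : ℝ} (hc : 0 ≤ c) (t : V) : ‖gaussian c t‖ₑ ≤ 1 := by
  rw [← ofReal_norm, ENNReal.ofReal_le_one]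
  exact norm_gaussian_le_one hc t

theorem enorm_gaussian_rpow (c k : ℝ) (t : V) : ‖gaussian c t‖ₑ ^ k = ‖gaussian (c * k) t‖ₑ := by
  rw [← ofReal_norm, ← ofReal_norm, norm_gaussian, norm_gaussian,
    ENNReal.ofReal_rpow_of_pos (Real.exp_pos _), ← Real.exp_mul]
  ring_nf

variable [InnerProductSpace ℝ V] [FiniteDimensional ℝ V] [MeasurableSpace V] [BorelSpace V]

theorem integrable_gaussian {c : ℝ} (hc : 0 < c) : Integrable (gaussian c : V → ℂ) := by
  refine (GaussianFourier.integrable_cexp_neg_mul_sq_norm_add (V := V) (b := Real.pi * c)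
    ?_ 0 0).congr (.of_forall fun t ↦ by simp [gaussian])
  norm_cast
  positivity

theorem isBoundedIntegrable_gaussian {c : ℝ} (hc : 0 < c) :
    IsBoundedIntegrable (gaussian c : V → ℂ) where
  measurable := measurable_gaussian c
  integrable := integrable_gaussian hc
  exists_norm_le := ⟨1, norm_gaussian_le_one hc.le⟩

theorem memLp_gaussian {c : ℝ} (hc : 0 < c) (p : ℝ≥0∞) : MemLp (gaussian c : V → ℂ) p := by
  refine ⟨(continuous_gaussian c).aestronglyMeasurable, ?_⟩
  rcases eq_or_ne p 0 with rfl | hp0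
  · simp
  rcases eq_or_ne p ∞ with rfl | hp
  · exact (eLpNormEssSup_le_of_ae_enorm_bound (.of_forall (enorm_gaussian_le_one hc.le))).trans_lt
      one_lt_top
  have hp_pos := ENNReal.toReal_pos hp0 hp
  rw [eLpNorm_lt_top_iff_lintegral_rpow_enorm_lt_top hp0 hp]
  simp only [enorm_gaussian_rpow]
  exact (integrable_gaussian (mul_pos hc hp_pos)).2

theorem fourier_gaussian {c : ℝ} (hc : 0 < c) (w : V) :
    𝓕 (gaussian c : V → ℂ) w = (c : ℂ)⁻¹ ^ (Module.finrank ℝ V / 2 : ℂ) * gaussian c⁻¹ w := by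
  have h := fourier_gaussian_innerProductSpace (V := V) (b := Real.pi * c)
    (by norm_cast; positivity) w
  have hπ : (Real.pi : ℂ) ≠ 0 := Complex.ofReal_ne_zero.2 Real.pi_ne_zero
  have : (c : ℂ) ≠ 0 := Complex.ofReal_ne_zero.2 hc.ne'
  convert h using 2
  · ext t
    simp only [gaussian, neg_mul]
  · field_simp
  · rw [gaussian]
    push_cast
    field_simp

theorem inv_ofReal_cpow_ne_zero {c : ℝ} (hc : 0 < c) (z : ℂ) : (c : ℂ)⁻¹ ^ z ≠ 0 :=
  cpow_ne_zero_iff.2 (.inl (inv_ne_zero (ofReal_ne_zero.2 hc.ne')))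

theorem integral_gaussian_ne_zero {c : ℝ} (hc : 0 < c) : ∫ t : V, gaussian c t ≠ 0 := by
  have h := fourier_gaussian hc (0 : V)
  rw [Real.fourier_eq] at h
  simp only [inner_zero_right, neg_zero, AddChar.map_zero_eq_one, one_smul] at h
  rw [h]
  exact mul_ne_zero (inv_ofReal_cpow_ne_zero hc _) (Complex.exp_ne_zero _)

end Gaussian

section Localization

variable {V : Type*} [NormedAddCommGroup V] [InnerProductSpace ℝ V] [FiniteDimensional ℝ V]
  [MeasurableSpace V] [BorelSpace V] {E : Type*} [NormedAddCommGroup E] [NormedSpace ℂ E]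

theorem eLpNorm_eLpNorm_gaussian_smul_self_le (c : ℝ) {r : ℝ≥0∞} (hr : r ≠ 0)
    {h : V → E} (hh : AEStronglyMeasurable h) :
    eLpNorm (fun x : V ↦ eLpNorm (fun t ↦ gaussian c (t - x) • h t) r volume) r volume ≤
      eLpNorm (gaussian c : V → ℂ) r volume * eLpNorm h r volume := by
  rcases eq_or_ne r ∞ with rfl | hr_top
  · refine eLpNormEssSup_le_of_ae_enorm_bound (.of_forall fun x ↦ ?_)
    rw [← eLpNorm_comp_measurePreserving (continuous_gaussian c).aestronglyMeasurable
        (measurePreserving_sub_right volume x)]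
    exact eLpNorm_smul_le_eLpNorm_top_mul_eLpNorm ∞ hh _
  have hr_pos := ENNReal.toReal_pos hr hr_top
  simp only [eLpNorm_eq_lintegral_rpow_enorm_toReal hr hr_top, one_div]
  rw [← ENNReal.mul_rpow_of_nonneg _ _ (inv_nonneg.2 hr_pos.le)]
  gcongr
  simp only [enorm_eq_self, ENNReal.rpow_inv_rpow hr_pos.ne', enorm_smul,
    ENNReal.mul_rpow_of_nonneg _ _ hr_pos.le]
  have hG : AEMeasurable (fun z : V × V ↦ ‖gaussian c (z.2 - z.1)‖ₑ ^ r.toReal)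
      (volume.prod volume) := by
    fun_prop
  have hh_pow : AEMeasurable (fun t ↦ ‖h t‖ₑ ^ r.toReal) := hh.enorm.pow_const _
  rw [lintegral_lintegral_swap (hG.mul hh_pow.comp_snd), ← lintegral_const_mul'' _ hh_pow]
  refine (lintegral_congr fun t ↦ ?_).le
  rw [lintegral_mul_const _ (by fun_prop),
    lintegral_sub_left_eq_self (fun x : V ↦ ‖gaussian c x‖ₑ ^ r.toReal) t]

/- Splitting `gaussian c = gaussian (c / 2) * gaussian (c / 2)`, one factor pays for the passage
from `L^ρ` to `L^r` by Hölder; the other localizes the `L^r` norm, and the localized norms are both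
bounded by and `L^r`-summable to `‖h‖_r`. -/
theorem exists_eLpNorm_eLpNorm_gaussian_smul_le {c : ℝ} (hc : 0 < c) {ρ r u : ℝ≥0∞} (hρ : ρ ≠ 0)
    (hρr : ρ ≤ r) (hru : r ≤ u) :
    ∃ K ≠ ∞, ∀ h : V → E, AEStronglyMeasurable h →
      eLpNorm (fun x : V ↦ eLpNorm (fun t ↦ gaussian c (t - x) • h t) ρ volume) u volume ≤
        K * eLpNorm h r volume := by
  have hr : r ≠ 0 := (hρ.bot_lt.trans_le hρr).ne'
  set κ : ℝ≥0∞ := (ρ⁻¹ - r⁻¹)⁻¹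
  have hκ : ENNReal.HolderTriple κ r ρ :=
    ⟨by rw [inv_inv, tsub_add_cancel_of_le (ENNReal.inv_le_inv.2 hρr)]⟩
  set G : ℝ≥0∞ → ℝ≥0∞ := fun p ↦ eLpNorm (gaussian (c / 2) : V → ℂ) p volume
  have hG (p : ℝ≥0∞) : G p ≠ ∞ := (memLp_gaussian (half_pos hc) p).eLpNorm_ne_top
  refine ⟨G κ * max 1 (G r), by finiteness [hG κ, hG r], fun h hh ↦ ?_⟩
  set m : V → ℝ≥0∞ := fun x ↦ eLpNorm (fun t ↦ gaussian (c / 2) (t - x) • h t) r volume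
  have hcont (x : V) : AEStronglyMeasurable (fun t : V ↦ gaussian (c / 2) (t - x)) :=
    ((continuous_gaussian _).comp (continuous_sub_right x)).aestronglyMeasurable
  have hholder (x : V) : eLpNorm (fun t ↦ gaussian c (t - x) • h t) ρ volume ≤ G κ * m x := by
    have htranslate : eLpNorm (fun t : V ↦ gaussian (c / 2) (t - x)) κ volume = G κ :=
      eLpNorm_comp_measurePreserving (continuous_gaussian _).aestronglyMeasurable
        (measurePreserving_sub_right volume x)
    rw [← htranslate]
    refine le_of_eq_of_le ?_ (eLpNorm_smul_le_mul_eLpNorm (p := κ) (q := r) (r := ρ)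
      ((hcont x).smul hh) (hcont x))
    simp only [Pi.smul_def', smul_smul, gaussian_mul_gaussian, add_halves]
  have hm (x : V) : m x ≤ eLpNorm h r volume := by
    refine eLpNorm_mono_enorm fun t ↦ ?_
    rw [enorm_smul]
    exact mul_le_of_le_one_left' (enorm_gaussian_le_one (half_pos hc).le _)
  calc eLpNorm (fun x : V ↦ eLpNorm (fun t ↦ gaussian c (t - x) • h t) ρ volume) u volume
      ≤ G κ * eLpNorm m u volume := by
        lift G κ to ℝ≥0 using hG κ with Gκ
        exact eLpNorm_le_mul_eLpNorm_of_ae_le_mul' (.of_forall hholder) u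
    _ ≤ G κ * (max 1 (G r) * eLpNorm h r volume) := by
        gcongr
        exact eLpNorm_le_max_one_mul hr hru hm
          (eLpNorm_eLpNorm_gaussian_smul_self_le (c / 2) hr hh)
    _ = _ := (mul_assoc _ _ _).symm

end Localization

section ShortTimeFourier

variable {V : Type*} [NormedAddCommGroup V] [InnerProductSpace ℝ V] [FiniteDimensional ℝ V]
  [MeasurableSpace V] [BorelSpace V]

/-- The short-time Fourier transform of `f` with window `φ`. The window is not conjugated. -/
noncomputable def stft (φ f : V → ℂ) (x ω : V) : ℂ := 𝓕 (fun t ↦ φ (t - x) * f t) ω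

theorem stft_eq_integral (φ f : V → ℂ) (x ω : V) :
    stft φ f x ω = ∫ t, (Real.fourierChar (-inner ℝ t ω) : ℂ) * (φ (t - x) * f t) :=
  Real.fourier_eq _ _

theorem coe_fourierChar_add (s t : ℝ) :
    (Real.fourierChar (s + t) : ℂ) = Real.fourierChar s * Real.fourierChar t := by
  rw [AddChar.map_add_eq_mul, Circle.coe_mul]

theorem continuous_stft {φ f : V → ℂ} {M : ℝ} (hφ : Continuous φ) (hM : ∀ t, ‖φ t‖ ≤ M)
    (hf : Integrable f) : Continuous fun z : V × V ↦ stft φ f z.1 z.2 := by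
  simp only [stft_eq_integral]
  refine continuous_of_dominated (bound := fun t ↦ M * ‖f t‖) (fun z ↦ ?_) (fun z ↦ ?_)
    (hf.norm.const_mul M) (.of_forall fun t ↦ by fun_prop)
  · have hcont : Continuous fun t ↦ (Real.fourierChar (-inner ℝ t z.2) : ℂ) * φ (t - z.1) := by
      fun_prop
    simpa only [Pi.mul_def, mul_assoc] using hcont.aestronglyMeasurable.mul hf.aestronglyMeasurable
  · refine .of_forall fun t ↦ ?_
    rw [norm_mul, Circle.norm_coe, one_mul, norm_mul]
    gcongr
    exact hM _

theorem continuous_stft_gaussian {c : ℝ} (hc : 0 ≤ c) {f : V → ℂ} (hf : Integrable f) :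
    Continuous fun z : V × V ↦ stft (gaussian c) f z.1 z.2 :=
  continuous_stft (continuous_gaussian c) (norm_gaussian_le_one hc) hf

theorem exists_eLpNorm_stft_le {ρ s : ℝ≥0∞} [ρ.HolderConjugate s] (hρ : ρ ≤ 2) :
    ∃ K ≠ ∞, ∀ φ f : V → ℂ, IsBoundedIntegrable φ → IsBoundedIntegrable f → ∀ x,
      eLpNorm (stft φ f x) s volume ≤ K * eLpNorm (fun t ↦ φ (t - x) • f t) ρ volume := by
  obtain ⟨K, hK, hHY⟩ := hausdorff_young (V := V) (s := s) hρ
  refine ⟨K, hK, fun φ f hφ hf x ↦ ?_⟩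
  have hφf := (hφ.comp_sub_right x).mul hf
  exact hHY _ hφf.measurable hφf.integrable (hφf.memLp one_le_two)

theorem exists_eLpNorm_eLpNorm_stft_gaussian_le {c : ℝ} (hc : 0 < c) {ρ s r u : ℝ≥0∞}
    [ρ.HolderConjugate s] (hρ : ρ ≤ 2) (hρr : ρ ≤ r) (hru : r ≤ u) :
    ∃ K ≠ ∞, ∀ f : V → ℂ, IsBoundedIntegrable f →
      eLpNorm (fun x ↦ eLpNorm (stft (gaussian c) f x) s volume) u volume ≤
        K * eLpNorm f r volume := by
  obtain ⟨K₁, hK₁, hHY⟩ := exists_eLpNorm_stft_le (V := V) (s := s) hρ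
  obtain ⟨K₂, hK₂, hloc⟩ := exists_eLpNorm_eLpNorm_gaussian_smul_le (V := V) (E := ℂ) hc
    (ENNReal.HolderConjugate.ne_zero ρ s) hρr hru
  refine ⟨K₁ * K₂, by finiteness, fun f hf ↦ ?_⟩
  lift K₁ to ℝ≥0 using hK₁
  calc eLpNorm (fun x ↦ eLpNorm (stft (gaussian c) f x) s volume) u volume
      ≤ K₁ * eLpNorm (fun x ↦ eLpNorm (fun t ↦ gaussian c (t - x) • f t) ρ volume) u volume :=
        eLpNorm_le_mul_eLpNorm_of_ae_le_mul'
          (.of_forall fun x ↦ hHY _ f (isBoundedIntegrable_gaussian hc) hf x) u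
    _ ≤ K₁ * (K₂ * eLpNorm f r volume) := by
        gcongr
        exact hloc f hf.measurable.aestronglyMeasurable
    _ = _ := (mul_assoc _ _ _).symm

theorem fourier_fourierChar_mul_gaussian_sub {c : ℝ} (hc : 0 < c) (ω y t : V) :
    𝓕 (fun w : V ↦ (Real.fourierChar (inner ℝ w y) : ℂ) * gaussian c (w - ω)) t =
      (Real.fourierChar (inner ℝ ω (y - t)) : ℂ) *
        ((c : ℂ)⁻¹ ^ (Module.finrank ℝ V / 2 : ℂ) * gaussian c⁻¹ (t - y)) := by
  rw [← fourier_gaussian hc, Real.fourier_eq, Real.fourier_eq, ← integral_add_right_eq_self _ ω,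
    ← integral_const_mul]
  congr 1 with w
  simp only [Circle.smul_def, smul_eq_mul, add_sub_cancel_right, ← mul_assoc,
    ← coe_fourierChar_add, inner_add_left, inner_sub_right]
  ring_nf

theorem enorm_stft_gaussian_fourier {c : ℝ} (hc : 0 < c) {f : V → ℂ} (hf : Integrable f)
    (ω y : V) : ‖stft (gaussian c) (𝓕 f) ω (-y)‖ₑ =
      ‖(c : ℂ)⁻¹ ^ (Module.finrank ℝ V / 2 : ℂ)‖ₑ * ‖stft (gaussian c⁻¹) f y ω‖ₑ := by
  have hwin : Integrable fun w : V ↦ (Real.fourierChar (inner ℝ w y) : ℂ) * gaussian c (w - ω) :=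
    ((isBoundedIntegrable_gaussian hc).comp_sub_right ω).bdd_mul
      (by fun_prop) (fun w ↦ (Circle.norm_coe _).le) |>.integrable
  have hstft : stft (gaussian c) (𝓕 f) ω (-y) =
      Real.fourierChar (inner ℝ ω y) * ((c : ℂ)⁻¹ ^ (Module.finrank ℝ V / 2 : ℂ) *
        stft (gaussian c⁻¹) f y ω) := by
    calc stft (gaussian c) (𝓕 f) ω (-y)
        = ∫ w, 𝓕 f w * ((Real.fourierChar (inner ℝ w y) : ℂ) * gaussian c (w - ω)) := by
          rw [stft_eq_integral]
          congr 1 with w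
          rw [inner_neg_right, neg_neg]
          ring
      _ = ∫ t, f t * 𝓕 (fun w : V ↦ (Real.fourierChar (inner ℝ w y) : ℂ) * gaussian c (w - ω)) t :=
          integral_fourier_mul_eq_integral_mul_fourier hf hwin
      _ = _ := by
          rw [stft_eq_integral, ← integral_const_mul, ← integral_const_mul]
          congr 1 with t
          rw [fourier_fourierChar_mul_gaussian_sub hc, inner_sub_right, sub_eq_add_neg,
            coe_fourierChar_add, real_inner_comm t ω]
          ring
  rw [hstft, enorm_mul, enorm_mul, ← ofReal_norm (Real.fourierChar _ : ℂ), Circle.norm_coe,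
    ENNReal.ofReal_one, one_mul]

end ShortTimeFourier

section WindowedPairing

variable {V : Type*} [NormedAddCommGroup V] [InnerProductSpace ℝ V] [FiniteDimensional ℝ V]
  [MeasurableSpace V] [BorelSpace V]

theorem integrable_sub_mul_prod {F G : V → ℂ} (hF : Integrable F) (hG : Integrable G) :
    Integrable (fun z : V × V ↦ G (z.2 - z.1) * F z.2) (volume.prod volume) := by
  simpa only [ContinuousLinearMap.mul_apply', neg_sub, mul_comm] using
    hF.convolution_integrand (ContinuousLinearMap.mul ℝ ℂ) hG.comp_neg

theorem integral_integral_sub_mul {F G : V → ℂ} (hF : Integrable F) (hG : Integrable G) :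
    ∫ z, ∫ t, G (t - z) * F t = (∫ t, G t) * ∫ t, F t := by
  rw [integral_integral_swap (integrable_sub_mul_prod hF hG), ← integral_const_mul]
  congr 1 with t
  rw [integral_mul_const, integral_sub_left_eq_self G]

theorem integral_stft_mul_stft {φ ψ a b : V → ℂ} (hφ : IsBoundedIntegrable φ)
    (hψ : IsBoundedIntegrable ψ) (ha : IsBoundedIntegrable a) (hb : IsBoundedIntegrable b) :
    ∫ z, ∫ ζ, stft φ a z ζ * stft ψ b z (-ζ) = (∫ t, φ t * ψ t) * ∫ t, a t * b t := by
  rw [← integral_integral_sub_mul (ha.mul hb).integrable (hφ.mul hψ).integrable]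
  congr 1 with z
  have hφa := (hφ.comp_sub_right z).mul ha
  have hψb := (hψ.comp_sub_right z).mul hb
  simp only [stft]
  rw [← integral_mul_eq_integral_fourier_mul_fourier_neg hψb.integrable (hψb.memLp one_le_two)
    hφa.integrable (hφa.memLp one_le_two)]
  congr 1 with t
  ring

theorem enorm_integral_mul_mul_le {φ ψ a b : V → ℂ} (hφ : IsBoundedIntegrable φ)
    (hψ : IsBoundedIntegrable ψ) (ha : IsBoundedIntegrable a) (hb : IsBoundedIntegrable b) :
    ‖∫ t, φ t * ψ t‖ₑ * ‖∫ t, a t * b t‖ₑ ≤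
      ∫⁻ z, ∫⁻ ζ, ‖stft φ a z ζ‖ₑ * ‖stft ψ b z (-ζ)‖ₑ := by
  rw [← enorm_mul, ← integral_stft_mul_stft hφ hψ ha hb]
  refine (enorm_integral_le_lintegral_enorm _).trans (lintegral_mono fun z ↦ ?_)
  refine (enorm_integral_le_lintegral_enorm _).trans_eq ?_
  simp only [enorm_mul]

theorem integral_stft_gaussian_mul_gaussian {c : ℝ} (hc : 0 < c) {a : V → ℂ} (ha : Integrable a)
    (z ζ : V) :
    ∫ y, stft (gaussian c) a y ζ * gaussian c (y - z) =
      (∫ y : V, gaussian (2 * c) y) * stft (gaussian (c / 2)) a z ζ := by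
  have hint : Integrable (fun w : V × V ↦ gaussian c (w.1 - z) *
      (Real.fourierChar (-inner ℝ w.2 ζ) * (gaussian c (w.2 - w.1) * a w.2)))
      (volume.prod volume) := by
    refine ((integrable_sub_mul_prod ha (integrable_gaussian hc)).bdd_mul (c := 1)
      (f := fun w : V × V ↦ gaussian c (w.1 - z) * Real.fourierChar (-inner ℝ w.2 ζ))
      (by fun_prop) (.of_forall fun w ↦ ?_)).congr (.of_forall fun w ↦ mul_assoc _ _ _)
    rw [norm_mul, Circle.norm_coe, mul_one]
    exact norm_gaussian_le_one hc.le _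
  simp only [stft_eq_integral, mul_comm _ (gaussian c (_ - z)), ← integral_const_mul]
  rw [integral_integral_swap hint]
  congr 1 with t
  rw [← integral_sub_right_eq_self (gaussian (2 * c)) ((2⁻¹ : ℝ) • (t + z)), ← integral_mul_const]
  congr 1 with y
  linear_combination (Real.fourierChar (-inner ℝ t ζ) * a t) * gaussian_sub_mul_gaussian_sub c t y z

theorem exists_eLpNorm_stft_gaussian_half_le {c : ℝ} (hc : 0 < c) {p P : ℝ≥0∞} (hp : 1 ≤ p)
    (hpP : p ≤ P) :
    ∃ K ≠ ∞, ∀ a : V → ℂ, IsBoundedIntegrable a → ∀ ζ,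
      eLpNorm (fun z ↦ stft (gaussian (c / 2)) a z ζ) P volume ≤
        K * eLpNorm (fun z ↦ stft (gaussian c) a z ζ) p volume := by
  obtain ⟨K, hK, hloc⟩ :=
    exists_eLpNorm_eLpNorm_gaussian_smul_le (V := V) (E := ℂ) hc one_ne_zero hp hpP
  set I : ℂ := ∫ y : V, gaussian (2 * c) y
  have hI : I ≠ 0 := integral_gaussian_ne_zero (by positivity)
  refine ⟨‖I⁻¹‖₊ * K, by finiteness, fun a ha ζ ↦ ?_⟩
  have hpoint (z : V) : ‖stft (gaussian (c / 2)) a z ζ‖ₑ ≤ ‖I⁻¹‖₊ *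
      eLpNorm (fun y ↦ gaussian c (y - z) • stft (gaussian c) a y ζ) 1 volume := by
    rw [← inv_mul_cancel_left₀ hI (stft (gaussian (c / 2)) a z ζ),
      ← integral_stft_gaussian_mul_gaussian hc ha.integrable, enorm_mul,
      eLpNorm_one_eq_lintegral_enorm]
    gcongr
    · rfl
    simpa only [smul_eq_mul, mul_comm] using enorm_integral_le_lintegral_enorm _
  refine (eLpNorm_le_mul_eLpNorm_of_ae_le_mul' (g := fun z ↦ eLpNorm
    (fun y ↦ gaussian c (y - z) • stft (gaussian c) a y ζ) 1 volume) (.of_forall hpoint) P).trans ?_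
  rw [mul_assoc]
  gcongr
  exact hloc _ ((continuous_stft_gaussian hc.le ha.integrable).comp
    (continuous_id.prodMk continuous_const)).aestronglyMeasurable

theorem eLpNorm_stft_gaussian_left_ne_top {c : ℝ} (hc : 0 < c) {p : ℝ≥0∞} (hp : 1 ≤ p)
    {a : V → ℂ} (ha : IsBoundedIntegrable a) (ζ : V) :
    eLpNorm (fun z ↦ stft (gaussian c) a z ζ) p volume ≠ ∞ := by
  obtain ⟨K, hK, hloc⟩ :=
    exists_eLpNorm_eLpNorm_gaussian_smul_le (V := V) (E := ℂ) hc one_ne_zero le_rfl hp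
  have ha₁ : eLpNorm a 1 volume ≠ ∞ := (memLp_one_iff_integrable.2 ha.integrable).eLpNorm_ne_top
  refine ne_top_of_le_ne_top (by finiteness)
    ((eLpNorm_mono_enorm fun z ↦ ?_).trans (hloc a ha.measurable.aestronglyMeasurable))
  rw [enorm_eq_self, eLpNorm_one_eq_lintegral_enorm]
  exact enorm_fourier_le_lintegral_enorm _ _

end WindowedPairing

section MixedDensity

theorem le_eLpNormEssSup_of_lowerSemicontinuous {X : Type*} [TopologicalSpace X]
    [MeasurableSpace X] {μ : Measure X} [μ.IsOpenPosMeasure] {h : X → ℝ≥0∞}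
    (hh : LowerSemicontinuous h) (x : X) : h x ≤ eLpNormEssSup h μ := by
  by_contra! hlt
  refine (hh.isOpen_preimage (eLpNormEssSup h μ)).measure_ne_zero μ ⟨x, hlt⟩ ?_
  exact meas_eLpNormEssSup_lt (f := h)

theorem lowerSemicontinuous_eLpNorm {X Y E : Type*} [TopologicalSpace X] [FirstCountableTopology X]
    [TopologicalSpace Y] [MeasurableSpace Y] [OpensMeasurableSpace Y] [SecondCountableTopology Y]
    [NormedAddCommGroup E] {μ : Measure Y} {f : X → Y → E}
    (hf : Continuous (Function.uncurry f)) (p : ℝ≥0∞) :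
    LowerSemicontinuous fun x ↦ eLpNorm (f x) p μ := by
  refine lowerSemicontinuous_iff_isClosed_preimage.2 fun c ↦
    IsSeqClosed.isClosed fun x x₀ hx hlim ↦ ?_
  have hcont (x : X) : Continuous (f x) := hf.comp (continuous_const.prodMk continuous_id)
  refine (Lp.eLpNorm_lim_le_liminf_eLpNorm (fun n ↦ (hcont (x n)).aestronglyMeasurable) (f x₀)
    (.of_forall fun y ↦ ?_)).trans ?_
  · exact (hf.comp (continuous_id.prodMk continuous_const)).continuousAt.tendsto.comp hlim
  · exact Filter.liminf_le_of_frequently_le' (.of_forall hx)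

/-- The density `(h / ‖h‖_p)^p`, so that `h = ‖h‖_p (normalizedDensity p μ h)^(1/p)`. It is set to
`0` for `p = ∞`, when the exponent `1/p` is `0`. -/
noncomputable def normalizedDensity {X : Type*} [MeasurableSpace X] (p : ℝ≥0∞) (μ : Measure X)
    (h : X → ℝ≥0∞) (x : X) : ℝ≥0∞ :=
  if p = ∞ then 0 else (h x / eLpNorm h p μ) ^ p.toReal

theorem lintegral_normalizedDensity_le_one {X : Type*} [MeasurableSpace X] {p : ℝ≥0∞}
    {μ : Measure X} {h : X → ℝ≥0∞} (hp : p ≠ 0) (hh : Measurable h) :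
    ∫⁻ x, normalizedDensity p μ h x ∂μ ≤ 1 := by
  rcases eq_or_ne p ∞ with rfl | hp_top
  · simp [normalizedDensity]
  have hp_pos := ENNReal.toReal_pos hp hp_top
  simp only [normalizedDensity, if_neg hp_top, ENNReal.div_rpow_of_nonneg _ _ hp_pos.le]
  simp only [div_eq_mul_inv]
  rw [lintegral_mul_const _ (hh.pow_const _), eLpNorm_eq_lintegral_rpow_enorm_toReal hp hp_top,
    one_div, ENNReal.rpow_inv_rpow hp_pos.ne']
  simp [ENNReal.mul_inv_le_one]

theorem le_eLpNorm_mul_normalizedDensity_rpow {X : Type*} [TopologicalSpace X]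
    [MeasurableSpace X] [OpensMeasurableSpace X] {μ : Measure X} [μ.IsOpenPosMeasure]
    {p : ℝ≥0∞} (hp : p ≠ 0) {h : X → ℝ≥0∞} (hh : LowerSemicontinuous h)
    (hh_top : eLpNorm h p μ ≠ ∞) (x : X) :
    h x ≤ eLpNorm h p μ * normalizedDensity p μ h x ^ p.toReal⁻¹ := by
  rcases eq_or_ne p ∞ with rfl | hp_top
  · simpa [normalizedDensity] using le_eLpNormEssSup_of_lowerSemicontinuous hh x
  rw [normalizedDensity, if_neg hp_top, ENNReal.rpow_rpow_inv (ENNReal.toReal_pos hp hp_top).ne']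
  refine (ENNReal.mul_div_cancel' (fun hzero ↦ ?_) (fun htop ↦ absurd htop hh_top)).ge
  have hae := (eLpNorm_eq_zero_iff hh.measurable.aestronglyMeasurable hp).1 hzero
  simpa [eLpNormEssSup_eq_zero_iff.2 hae] using
    le_eLpNormEssSup_of_lowerSemicontinuous (μ := μ) hh x

/-- A sub-probability density `outer` on `X` together with a measurable family of sub-probability
densities `inner x` on `Y`. Functions of finite mixed Lebesgue norm are dominated by products of
powers of the two, which makes mixed norms amenable to a single application of Hölder. -/
structure MixedDensity (X Y : Type*) [MeasureSpace X] [MeasureSpace Y] where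
  outer : X → ℝ≥0∞
  inner : X → Y → ℝ≥0∞
  measurable_outer : Measurable outer
  measurable_inner : Measurable (Function.uncurry inner)
  lintegral_outer_le_one : ∫⁻ x, outer x ≤ 1
  lintegral_inner_le_one : ∀ x, ∫⁻ y, inner x y ≤ 1

variable {X Y : Type*} [TopologicalSpace X] [FirstCountableTopology X] [MeasureSpace X]
  [OpensMeasurableSpace X] [(volume : Measure X).IsOpenPosMeasure]
  [TopologicalSpace Y] [SecondCountableTopology Y] [MeasureSpace Y] [OpensMeasurableSpace Y]
  [(volume : Measure Y).IsOpenPosMeasure]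

theorem exists_mixedDensity_enorm_le {f : X → Y → ℂ} (hf : Continuous (Function.uncurry f))
    {s u : ℝ≥0∞} (hs : s ≠ 0) (hu : u ≠ 0) (hfs : ∀ x, eLpNorm (f x) s volume ≠ ∞)
    (hfu : eLpNorm (fun x ↦ eLpNorm (f x) s volume) u volume ≠ ∞) :
    ∃ D : MixedDensity X Y, ∀ x y, ‖f x y‖ₑ ≤
      eLpNorm (fun x ↦ eLpNorm (f x) s volume) u volume *
        (D.outer x ^ u.toReal⁻¹ * D.inner x y ^ s.toReal⁻¹) := by
  set n : X → ℝ≥0∞ := fun x ↦ eLpNorm (f x) s volume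
  have hn : LowerSemicontinuous n := lowerSemicontinuous_eLpNorm hf s
  have hcont (x : X) : Continuous (f x) := hf.comp (continuous_const.prodMk continuous_id)
  refine ⟨{
    outer := normalizedDensity u volume n
    inner := fun x ↦ normalizedDensity s volume fun y ↦ ‖f x y‖ₑ
    measurable_outer := ?_
    measurable_inner := ?_
    lintegral_outer_le_one := lintegral_normalizedDensity_le_one hu hn.measurable
    lintegral_inner_le_one := fun x ↦
      lintegral_normalizedDensity_le_one hs (hcont x).enorm.measurable }, fun x y ↦ ?_⟩
  · unfold normalizedDensity
    split_ifs
    · fun_prop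
    · exact (hn.measurable.div_const _).pow_const _
  · unfold normalizedDensity Function.uncurry
    simp only [eLpNorm_enorm]
    split_ifs
    · fun_prop
    · exact (hf.enorm.measurable.div (hn.measurable.comp measurable_fst)).pow_const _
  · have hinner := le_eLpNorm_mul_normalizedDensity_rpow (μ := volume) hs
      (hcont x).enorm.lowerSemicontinuous (by simpa using hfs x) y
    calc ‖f x y‖ₑ ≤ n x * normalizedDensity s volume (fun y ↦ ‖f x y‖ₑ) y ^ s.toReal⁻¹ := by
          simpa using hinner
      _ ≤ eLpNorm n u volume * normalizedDensity u volume n x ^ u.toReal⁻¹ *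
          normalizedDensity s volume (fun y ↦ ‖f x y‖ₑ) y ^ s.toReal⁻¹ := by
          gcongr
          exact le_eLpNorm_mul_normalizedDensity_rpow hu hn hfu x
      _ = _ := mul_assoc _ _ _

end MixedDensity

section TrilinearEstimate

theorem lintegral_prod_mul_le_one {X Y : Type*} [MeasurableSpace X] [MeasurableSpace Y]
    {μ : Measure X} {ν : Measure Y} [SFinite ν] {u : X → ℝ≥0∞} {k : X × Y → ℝ≥0∞}
    (hu : Measurable u) (hk : Measurable k) (hu_one : ∫⁻ x, u x ∂μ ≤ 1)
    (hk_one : ∀ x, ∫⁻ y, k (x, y) ∂ν ≤ 1) : ∫⁻ z, u z.1 * k z ∂μ.prod ν ≤ 1 := by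
  have hpull (x : X) : ∫⁻ y, u x * k (x, y) ∂ν = u x * ∫⁻ y, k (x, y) ∂ν :=
    lintegral_const_mul _ (by fun_prop)
  rw [lintegral_prod _ (by fun_prop), lintegral_congr hpull]
  exact (lintegral_mono fun x ↦ mul_le_of_le_one_right' (hk_one x)).trans hu_one

theorem lintegral_prod_rpow_le_one {X ι : Type*} [MeasurableSpace X] {μ : Measure X} [Fintype ι]
    {h : ι → X → ℝ≥0∞} (hh : ∀ i, Measurable (h i)) (hh_one : ∀ i, ∫⁻ x, h i x ∂μ ≤ 1)
    {w : ι → ℝ} (hw : ∀ i, 0 ≤ w i) (hw_sum : ∑ i, w i = 1) :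
    ∫⁻ x, ∏ i, h i x ^ w i ∂μ ≤ 1 :=
  (ENNReal.lintegral_prod_norm_pow_le _ (fun i _ ↦ (hh i).aemeasurable) hw_sum
    fun i _ ↦ hw i).trans <| Finset.prod_le_one' fun i _ ↦
      ENNReal.rpow_le_one (hh_one i) (hw i)

theorem trilinear_weights_eq_geometric_mean (ZA RA ZG RG ZF RF : ℝ≥0∞) {θ β m₁ m₂ : ℝ}
    (hθ : 0 ≤ θ) (hβ : 0 ≤ β) (h₁ : β ≤ m₁) (h₂ : β ≤ m₂) (hsum : m₁ + m₂ = 1 - θ) :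
    ZA ^ (1 - β) * RA ^ (θ + β) * (ZG ^ m₂ * RG ^ m₁) * (ZF ^ m₁ * RF ^ m₂) =
      (ZA * RA) ^ (θ + β) * (ZG * RG * (ZF * RF)) ^ β * (ZA * (ZG * RF)) ^ (m₂ - β) *
        (ZA * (ZF * RG)) ^ (m₁ - β) := by
  have split₁ (x : ℝ≥0∞) : x ^ m₁ = x ^ β * x ^ (m₁ - β) := by
    rw [← ENNReal.rpow_add_of_nonneg _ _ hβ (sub_nonneg.2 h₁), add_sub_cancel]
  have split₂ (x : ℝ≥0∞) : x ^ m₂ = x ^ β * x ^ (m₂ - β) := by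
    rw [← ENNReal.rpow_add_of_nonneg _ _ hβ (sub_nonneg.2 h₂), add_sub_cancel]
  have split_sum : ZA ^ (1 - β) = ZA ^ (θ + β) * (ZA ^ (m₂ - β) * ZA ^ (m₁ - β)) := by
    rw [← ENNReal.rpow_add_of_nonneg _ _ (sub_nonneg.2 h₂) (sub_nonneg.2 h₁),
      ← ENNReal.rpow_add_of_nonneg _ _ (by positivity) (by linarith)]
    congr 1
    linarith
  simp only [split₁, split₂, split_sum, ENNReal.mul_rpow_of_nonneg, hβ, sub_nonneg.2 h₁,
    sub_nonneg.2 h₂, add_nonneg hθ hβ]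
  ring

namespace MixedDensity

section

variable {X Y : Type*} [MeasureSpace X] [MeasureSpace Y] (D : MixedDensity X Y)

theorem measurable_inner_comp {Z : Type*} [MeasurableSpace Z] {f : Z → X} {g : Z → Y}
    (hf : Measurable f) (hg : Measurable g) : Measurable fun z ↦ D.inner (f z) (g z) :=
  D.measurable_inner.comp (hf.prodMk hg)

attribute [fun_prop] measurable_outer measurable_inner_comp

theorem lintegral_outer_mul_inner_le_one [SFinite (volume : Measure Y)] :
    ∫⁻ z : X × Y, D.outer z.1 * D.inner z.1 z.2 ≤ 1 :=
  lintegral_prod_mul_le_one D.measurable_outer (by fun_prop) D.lintegral_outer_le_one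
    D.lintegral_inner_le_one

theorem lintegral_lintegral_outer_mul_inner_le_one [SFinite (volume : Measure X)]
    [SFinite (volume : Measure Y)] : ∫⁻ y, ∫⁻ x, D.outer x * D.inner x y ≤ 1 := by
  rw [← lintegral_prod_symm (fun z : X × Y ↦ D.outer z.1 * D.inner z.1 z.2) (by fun_prop)]
  exact D.lintegral_outer_mul_inner_le_one

end

variable {V : Type*} [AddCommGroup V] [MeasureSpace V] [MeasurableAdd₂ V]
  (A : MixedDensity (V × V) (V × V)) (G F : MixedDensity V V)

theorem lintegral_weight_outer_inner_le_one [SFinite (volume : Measure V)] :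
    ∫⁻ w : (V × V) × V × V,
      A.outer w.1 * (G.outer w.2.1 * F.inner (w.2.1 + w.1.2) w.2.2) ≤ 1 := by
  refine lintegral_prod_mul_le_one A.measurable_outer (by fun_prop) A.lintegral_outer_le_one
    fun ζ ↦ ?_
  exact lintegral_prod_mul_le_one (k := fun z ↦ F.inner (z.1 + ζ.2) z.2) G.measurable_outer
    (by fun_prop) G.lintegral_outer_le_one fun x ↦ F.lintegral_inner_le_one (x + ζ.2)

variable [(volume : Measure V).IsAddLeftInvariant]

theorem lintegral_outer_add_le_one (y : V) : ∫⁻ x, F.outer (x + y) ≤ 1 := by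
  simp only [add_comm _ y]
  exact (lintegral_add_left_eq_self F.outer y).trans_le F.lintegral_outer_le_one

variable [MeasurableNeg V] [(volume : Measure V).IsNegInvariant]

theorem lintegral_inner_neg_add_le_one (x y : V) : ∫⁻ ω, G.inner x (-(ω + y)) ≤ 1 := by
  simp only [add_comm _ y]
  rw [lintegral_add_left_eq_self (fun ω ↦ G.inner x (-ω)) y, lintegral_neg_eq_self (G.inner x)]
  exact G.lintegral_inner_le_one x

variable [SFinite (volume : Measure V)]

theorem lintegral_weight_inner_outer_le_one :
    ∫⁻ w : (V × V) × V × V,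
      A.outer w.1 * (F.outer (w.2.1 + w.1.2) * G.inner w.2.1 (-(w.2.2 + w.1.1))) ≤ 1 := by
  refine lintegral_prod_mul_le_one A.measurable_outer (by fun_prop) A.lintegral_outer_le_one
    fun ζ ↦ ?_
  exact lintegral_prod_mul_le_one (u := fun x ↦ F.outer (x + ζ.2))
    (k := fun z ↦ G.inner z.1 (-(z.2 + ζ.1))) (by fun_prop) (by fun_prop)
    (F.lintegral_outer_add_le_one _) fun x ↦ G.lintegral_inner_neg_add_le_one x _

theorem lintegral_weight_inner_inner_le_one :
    ∫⁻ w : (V × V) × V × V, G.outer w.2.1 * G.inner w.2.1 (-(w.2.2 + w.1.1)) *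
      (F.outer (w.2.1 + w.1.2) * F.inner (w.2.1 + w.1.2) w.2.2) ≤ 1 := by
  set marginal : V → ℝ≥0∞ := fun ω ↦ ∫⁻ y, F.outer y * F.inner y ω
  have hinner (x ω : V) : ∫⁻ ζ : V × V, G.inner x (-(ω + ζ.1)) *
      (F.outer (x + ζ.2) * F.inner (x + ζ.2) ω) ≤ marginal ω := by
    rw [Measure.volume_eq_prod, lintegral_prod_mul (f := fun y ↦ G.inner x (-(ω + y)))
      (g := fun y ↦ F.outer (x + y) * F.inner (x + y) ω) (by fun_prop) (by fun_prop),
      lintegral_add_left_eq_self (fun y ↦ F.outer y * F.inner y ω) x]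
    refine mul_le_of_le_one_left' ?_
    simpa only [add_comm] using G.lintegral_inner_neg_add_le_one x ω
  rw [Measure.volume_eq_prod, lintegral_prod_symm _ (by fun_prop)]
  refine (lintegral_mono fun z ↦ ?_).trans (lintegral_prod_mul_le_one (k := fun z ↦ marginal z.2)
    G.measurable_outer ?_ G.lintegral_outer_le_one
    fun _ ↦ F.lintegral_lintegral_outer_mul_inner_le_one)
  · simp only [mul_assoc]
    rw [lintegral_const_mul _ (by fun_prop)]
    gcongr
    exact hinner z.1 z.2
  · exact (Measurable.lintegral_prod_left' (f := fun w : V × V ↦ F.outer w.1 * F.inner w.1 w.2)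
      (by fun_prop)).comp measurable_snd

theorem lintegral_trilinear_le_one {θ β m₁ m₂ : ℝ} (hθ : 0 ≤ θ) (hβ : 0 ≤ β)
    (h₁ : β ≤ m₁) (h₂ : β ≤ m₂) (hsum : m₁ + m₂ = 1 - θ) :
    ∫⁻ z : V × V, ∫⁻ ζ : V × V, A.outer ζ ^ (1 - β) * A.inner ζ z ^ (θ + β) *
      (G.outer z.1 ^ m₂ * G.inner z.1 (-(z.2 + ζ.1)) ^ m₁) *
      (F.outer (z.1 + ζ.2) ^ m₁ * F.inner (z.1 + ζ.2) z.2 ^ m₂) ≤ 1 := by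
  let h : Fin 4 → (V × V) × V × V → ℝ≥0∞ := ![fun w ↦ A.outer w.1 * A.inner w.1 w.2,
    fun w ↦ G.outer w.2.1 * G.inner w.2.1 (-(w.2.2 + w.1.1)) *
      (F.outer (w.2.1 + w.1.2) * F.inner (w.2.1 + w.1.2) w.2.2),
    fun w ↦ A.outer w.1 * (G.outer w.2.1 * F.inner (w.2.1 + w.1.2) w.2.2),
    fun w ↦ A.outer w.1 * (F.outer (w.2.1 + w.1.2) * G.inner w.2.1 (-(w.2.2 + w.1.1)))]
  let exponent : Fin 4 → ℝ := ![θ + β, β, m₂ - β, m₁ - β]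
  have hh : ∀ i, Measurable (h i) := by
    intro i
    fin_cases i <;> dsimp [h] <;> fun_prop
  have hh_one : ∀ i, ∫⁻ w, h i w ≤ 1 := by
    simpa only [Fin.forall_fin_succ, h] using ⟨A.lintegral_outer_mul_inner_le_one,
      lintegral_weight_inner_inner_le_one G F, lintegral_weight_outer_inner_le_one A G F,
      lintegral_weight_inner_outer_le_one A G F, fun i ↦ i.elim0⟩
  have hexponent : ∀ i, 0 ≤ exponent i := by
    simp [Fin.forall_fin_succ, exponent, hβ, h₁, h₂, add_nonneg hθ hβ]
  have hexponent_sum : ∑ i, exponent i = 1 := by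
    simp only [exponent, Fin.sum_univ_four, Matrix.cons_val]
    linarith
  have hholder := lintegral_prod_rpow_le_one hh hh_one hexponent hexponent_sum
  have hh_eq (w : (V × V) × V × V) :=
    (trilinear_weights_eq_geometric_mean (A.outer w.1) (A.inner w.1 w.2) (G.outer w.2.1)
      (G.inner w.2.1 (-(w.2.2 + w.1.1))) (F.outer (w.2.1 + w.1.2))
      (F.inner (w.2.1 + w.1.2) w.2.2) hθ hβ h₁ h₂ hsum).symm
  simp only [Fin.prod_univ_four, h, exponent, Matrix.cons_val, hh_eq] at hholder
  rwa [Measure.volume_eq_prod, lintegral_prod_symm _ (by fun_prop)] at hholder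

theorem lintegral_mul_mul_le {θ β m₁ m₂ : ℝ} (hθ : 0 ≤ θ) (hβ : 0 ≤ β)
    (h₁ : β ≤ m₁) (h₂ : β ≤ m₂) (hsum : m₁ + m₂ = 1 - θ) {a : V × V → V × V → ℝ≥0∞}
    {g f : V → V → ℝ≥0∞} {Ca Cg Cf : ℝ≥0∞} (hCa : Ca ≠ ∞) (hCg : Cg ≠ ∞) (hCf : Cf ≠ ∞)
    (ha : ∀ ζ z, a ζ z ≤ Ca * (A.outer ζ ^ (1 - β) * A.inner ζ z ^ (θ + β)))
    (hg : ∀ x ω, g x ω ≤ Cg * (G.outer x ^ m₂ * G.inner x ω ^ m₁))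
    (hf : ∀ x ω, f x ω ≤ Cf * (F.outer x ^ m₁ * F.inner x ω ^ m₂)) :
    ∫⁻ z : V × V, ∫⁻ ζ : V × V, a ζ z * g z.1 (-(z.2 + ζ.1)) * f (z.1 + ζ.2) z.2 ≤
      Ca * Cg * Cf := by
  have hC : Ca * Cg * Cf ≠ ∞ := by finiteness
  calc
    _ ≤ ∫⁻ z : V × V, ∫⁻ ζ : V × V, Ca * Cg * Cf * (A.outer ζ ^ (1 - β) * A.inner ζ z ^ (θ + β) *
          (G.outer z.1 ^ m₂ * G.inner z.1 (-(z.2 + ζ.1)) ^ m₁) *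
          (F.outer (z.1 + ζ.2) ^ m₁ * F.inner (z.1 + ζ.2) z.2 ^ m₂)) := by
      refine lintegral_mono fun z ↦ lintegral_mono fun ζ ↦
        (mul_le_mul' (mul_le_mul' (ha ζ z) (hg _ _)) (hf _ _)).trans_eq (by ring)
    _ ≤ Ca * Cg * Cf * 1 := by
      simp only [lintegral_const_mul' _ _ hC]
      gcongr
      exact lintegral_trilinear_le_one A G F hθ hβ h₁ h₂ hsum
    _ = Ca * Cg * Cf := mul_one _

end MixedDensity

end TrilinearEstimate

section PhaseSpace

variable {d : ℕ}

theorem inner_pairE (x ω y η : EuclideanSpace ℝ (Fin d)) :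
    inner ℝ (pairE x ω) (pairE y η) = inner ℝ x y + inner ℝ ω η := by
  simp [pairE, PiLp.inner_apply, Fintype.sum_sum_type]

theorem pairE_sub_pairE (x ω y η : EuclideanSpace ℝ (Fin d)) :
    pairE x ω - pairE y η = pairE (x - y) (ω - η) := by
  ext (i | i) <;> rfl

theorem norm_pairE_sq (x ω : EuclideanSpace ℝ (Fin d)) :
    ‖pairE x ω‖ ^ 2 = ‖x‖ ^ 2 + ‖ω‖ ^ 2 := by
  simp only [← real_inner_self_eq_norm_sq, inner_pairE]

theorem gaussian_pairE (c : ℝ) (x ω : EuclideanSpace ℝ (Fin d)) :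
    gaussian c (pairE x ω) = gaussian c x * gaussian c ω := by
  simp only [gaussian, ← Complex.exp_add, ← Complex.ofReal_pow, norm_pairE_sq]
  push_cast
  ring_nf

/-- Phase space `ℝ^d × ℝ^d` identified with `ℝ^{2d}` through `pairE`. -/
noncomputable def pairEquiv (d : ℕ) : EuclideanSpace ℝ (Fin d) × EuclideanSpace ℝ (Fin d) ≃ₜ
    EuclideanSpace ℝ (Fin d ⊕ Fin d) where
  toFun z := pairE z.1 z.2
  invFun w := (xpart w, wpart w)
  left_inv z := rfl
  right_inv w := by ext (i | i) <;> rfl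
  continuous_toFun := by
    refine (PiLp.continuous_toLp 2 _).comp (continuous_pi ?_)
    rintro (i | i) <;> simp only [Sum.elim_inl, Sum.elim_inr] <;> fun_prop
  continuous_invFun := by unfold xpart wpart; fun_prop

theorem pairEquiv_mk (x ω : EuclideanSpace ℝ (Fin d)) : pairEquiv d (x, ω) = pairE x ω := rfl

theorem measurePreserving_pairEquiv : MeasurePreserving (pairEquiv d) := by
  have htoLp (ι : Type) [Fintype ι] :=
    EuclideanSpace.volume_preserving_symm_measurableEquiv_toLp ι
  exact ((htoLp (Fin d ⊕ Fin d)).symm.comp (volume_measurePreserving_sumPiEquivProdPi_symm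
    (fun _ : Fin d ⊕ Fin d ↦ ℝ))).comp ((htoLp (Fin d)).prod (htoLp (Fin d)))

theorem integral_comp_pairEquiv (F : EuclideanSpace ℝ (Fin d ⊕ Fin d) → ℂ) :
    ∫ z, F (pairEquiv d z) = ∫ w, F w :=
  measurePreserving_pairEquiv.integral_comp (pairEquiv d).measurableEmbedding F

theorem lintegral_comp_pairEquiv (F : EuclideanSpace ℝ (Fin d ⊕ Fin d) → ℝ≥0∞) :
    ∫⁻ z, F (pairEquiv d z) = ∫⁻ w, F w :=
  measurePreserving_pairEquiv.lintegral_comp_emb (pairEquiv d).measurableEmbedding F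

theorem eLpNorm_comp_pairEquiv {E : Type*} [TopologicalSpace E] [ContinuousENorm E]
    (F : EuclideanSpace ℝ (Fin d ⊕ Fin d) → E) (p : ℝ≥0∞) :
    eLpNorm (fun z ↦ F (pairEquiv d z)) p volume = eLpNorm F p volume := by
  rw [← measurePreserving_pairEquiv.map_eq,
    (pairEquiv d).measurableEmbedding.eLpNorm_map_measure]
  rfl

theorem integral_eq_integral_integral_pairE {F : EuclideanSpace ℝ (Fin d ⊕ Fin d) → ℂ}
    (hF : Integrable F) : ∫ w, F w = ∫ x, ∫ ω, F (pairE x ω) := by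
  rw [← integral_comp_pairEquiv]
  exact integral_prod _ ((measurePreserving_pairEquiv.integrable_comp_emb
    (pairEquiv d).measurableEmbedding).2 hF)

end PhaseSpace

section ChirpTensor

variable {d : ℕ}

/-- The tensor product `g ⊗ h` on phase space times the chirp `e^{2πi s x⬝ω}`. For `s = 1` and
`h = 𝓕 f` it is the function against which a Kohn–Nirenberg symbol is integrated to give the pairing
of `a(x,D) f` with `g`; for `s = -1` it serves as a window which cancels that chirp. -/
noncomputable def chirpTensor (s : ℝ) (g h : EuclideanSpace ℝ (Fin d) → ℂ)
    (w : EuclideanSpace ℝ (Fin d ⊕ Fin d)) : ℂ :=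
  Real.fourierChar (s * inner ℝ (xpart w) (wpart w)) * (g (xpart w) * h (wpart w))

theorem chirpTensor_pairE (s : ℝ) (g h : EuclideanSpace ℝ (Fin d) → ℂ)
    (x ω : EuclideanSpace ℝ (Fin d)) :
    chirpTensor s g h (pairE x ω) = Real.fourierChar (s * inner ℝ x ω) * (g x * h ω) :=
  rfl

theorem IsBoundedIntegrable.chirpTensor {g h : EuclideanSpace ℝ (Fin d) → ℂ}
    (hg : IsBoundedIntegrable g) (hh : IsBoundedIntegrable h) (s : ℝ) :
    IsBoundedIntegrable (chirpTensor s g h) := by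
  have hparts : Continuous fun w : EuclideanSpace ℝ (Fin d ⊕ Fin d) ↦ (xpart w, wpart w) :=
    (pairEquiv d).symm.continuous
  have hphase : Continuous fun w : EuclideanSpace ℝ (Fin d ⊕ Fin d) ↦
      (Real.fourierChar (s * inner ℝ (xpart w) (wpart w)) : ℂ) := by
    have hx := hparts.fst
    have hω := hparts.snd
    fun_prop
  refine IsBoundedIntegrable.bdd_mul (M := 1) ?_ hphase.measurable fun w ↦ (Circle.norm_coe _).le
  obtain ⟨M, hM⟩ := hg.exists_norm_le
  obtain ⟨N, hN⟩ := hh.exists_norm_le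
  refine ⟨(hg.measurable.comp hparts.fst.measurable).mul
    (hh.measurable.comp hparts.snd.measurable), ?_, M * N, fun w ↦ ?_⟩
  · exact (measurePreserving_pairEquiv.integrable_comp_emb (pairEquiv d).measurableEmbedding).1
      (hg.integrable.mul_prod hh.integrable)
  · rw [norm_mul]
    exact mul_le_mul (hM _) (hN _) (norm_nonneg _) ((norm_nonneg _).trans (hM 0))

-- The bilinear phase `x⬝ω - (x - x₀)⬝(ω - ω₀) = x⬝ω₀ + x₀⬝ω - x₀⬝ω₀` splits.
theorem enorm_stft_chirpTensor (φ ψ g h : EuclideanSpace ℝ (Fin d) → ℂ)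
    (x₀ ω₀ ζ₁ ζ₂ : EuclideanSpace ℝ (Fin d)) :
    ‖stft (chirpTensor (-1) φ ψ) (chirpTensor 1 g h) (pairE x₀ ω₀) (-pairE ζ₁ ζ₂)‖ₑ =
      ‖stft φ g x₀ (-(ω₀ + ζ₁))‖ₑ * ‖stft ψ h ω₀ (-(x₀ + ζ₂))‖ₑ := by
  have hfactor : stft (chirpTensor (-1) φ ψ) (chirpTensor 1 g h) (pairE x₀ ω₀) (-pairE ζ₁ ζ₂) =
      Real.fourierChar (-inner ℝ x₀ ω₀) *
        (stft φ g x₀ (-(ω₀ + ζ₁)) * stft ψ h ω₀ (-(x₀ + ζ₂))) := by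
    simp only [stft_eq_integral]
    rw [← integral_prod_mul, ← integral_const_mul, ← integral_comp_pairEquiv]
    congr 1 with ⟨x, ω⟩
    have hphase : (Real.fourierChar (-inner ℝ (pairE x ω) (-pairE ζ₁ ζ₂)) : ℂ) *
        (Real.fourierChar (-1 * inner ℝ (x - x₀) (ω - ω₀)) * Real.fourierChar (1 * inner ℝ x ω)) =
        Real.fourierChar (-inner ℝ x₀ ω₀) * (Real.fourierChar (-inner ℝ x (-(ω₀ + ζ₁))) *
          Real.fourierChar (-inner ℝ ω (-(x₀ + ζ₂)))) := by
      simp only [← coe_fourierChar_add, inner_neg_right, inner_pairE, inner_sub_left,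
        inner_sub_right, inner_add_right, real_inner_comm ω x₀]
      ring_nf
    rw [pairEquiv_mk, pairE_sub_pairE, chirpTensor_pairE, chirpTensor_pairE]
    linear_combination φ (x - x₀) * ψ (ω - ω₀) * g x * h ω * hphase
  rw [hfactor, enorm_mul, enorm_mul, ← ofReal_norm, Circle.norm_coe,
    ENNReal.ofReal_one, one_mul]

theorem integral_gaussian_mul_chirpTensor_gaussian_ne_zero {b c : ℝ} (hb : 0 < b) (hc : 0 < c) :
    ∫ w, gaussian b w * chirpTensor (d := d) (-1) (gaussian c) (gaussian c) w ≠ 0 := by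
  have hint := ((isBoundedIntegrable_gaussian hb).mul <|
    (isBoundedIntegrable_gaussian (V := EuclideanSpace ℝ (Fin d)) hc).chirpTensor
      (isBoundedIntegrable_gaussian hc) (-1)).integrable
  have hfourier (x : EuclideanSpace ℝ (Fin d)) : ∫ ω, gaussian b (pairE x ω) *
      chirpTensor (-1) (gaussian c) (gaussian c) (pairE x ω) =
      gaussian (b + c) x * 𝓕 (gaussian (b + c) : EuclideanSpace ℝ (Fin d) → ℂ) x := by
    rw [Real.fourier_eq, ← integral_const_mul]
    congr 1 with ω
    rw [gaussian_pairE, chirpTensor_pairE, Circle.smul_def, smul_eq_mul, neg_one_mul,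
      real_inner_comm, ← gaussian_mul_gaussian b c x, ← gaussian_mul_gaussian b c ω]
    ring
  rw [integral_eq_integral_integral_pairE hint]
  simp only [hfourier, fourier_gaussian (add_pos hb hc), mul_left_comm (gaussian _ _),
    gaussian_mul_gaussian]
  rw [integral_const_mul]
  exact mul_ne_zero (inv_ofReal_cpow_ne_zero (add_pos hb hc) _)
    (integral_gaussian_ne_zero (by positivity))

end ChirpTensor

section KohnNirenberg

variable {d : ℕ}

theorem fTrans_eq_fourier {ι : Type*} [Fintype ι] (f : EuclideanSpace ℝ ι → ℂ) :
    fTrans f = 𝓕 f := by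
  ext ω
  rw [fTrans, Real.fourier_eq]
  congr 1 with t
  rw [Circle.smul_def, Real.fourierChar_apply, smul_eq_mul, mul_comm]
  push_cast
  ring_nf

theorem KNop_eq_integral (a : EuclideanSpace ℝ (Fin d ⊕ Fin d) → ℂ)
    (f : EuclideanSpace ℝ (Fin d) → ℂ) (x : EuclideanSpace ℝ (Fin d)) :
    KNop a f x = ∫ ω, a (pairE x ω) * 𝓕 f ω * Real.fourierChar (inner ℝ x ω) := by
  rw [KNop, fTrans_eq_fourier]
  congr 1 with ω
  rw [Real.fourierChar_apply]
  push_cast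
  ring_nf

theorem integral_KNop_mul {a : EuclideanSpace ℝ (Fin d ⊕ Fin d) → ℂ}
    {f g : EuclideanSpace ℝ (Fin d) → ℂ} (ha : IsBoundedIntegrable a)
    (hf : IsBoundedIntegrable (𝓕 f)) (hg : IsBoundedIntegrable g) :
    ∫ x, KNop a f x * g x = ∫ w, a w * chirpTensor 1 g (𝓕 f) w := by
  rw [integral_eq_integral_integral_pairE (ha.mul (hg.chirpTensor hf 1)).integrable]
  congr 1 with x
  rw [KNop_eq_integral, ← integral_mul_const]
  congr 1 with ω
  rw [chirpTensor_pairE, one_mul]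
  ring

theorem enorm_integral_KNop_mul_le {b : ℝ} (hb : 0 < b) {a : EuclideanSpace ℝ (Fin d ⊕ Fin d) → ℂ}
    {f g : EuclideanSpace ℝ (Fin d) → ℂ} (ha : IsBoundedIntegrable a)
    (hf : Integrable f) (hf' : IsBoundedIntegrable (𝓕 f)) (hg : IsBoundedIntegrable g) :
    ‖∫ w, gaussian b w * chirpTensor (d := d) (-1) (gaussian 1) (gaussian 1) w‖ₑ *
        ‖∫ x, KNop a f x * g x‖ₑ ≤
      ∫⁻ z : EuclideanSpace ℝ (Fin d) × EuclideanSpace ℝ (Fin d),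
        ∫⁻ ζ : EuclideanSpace ℝ (Fin d) × EuclideanSpace ℝ (Fin d),
        ‖stft (gaussian b) a (pairEquiv d z) (pairEquiv d ζ)‖ₑ *
          ‖stft (gaussian 1) g z.1 (-(z.2 + ζ.1))‖ₑ * ‖stft (gaussian 1) f (z.1 + ζ.2) z.2‖ₑ := by
  have hwindow : IsBoundedIntegrable (gaussian 1 : EuclideanSpace ℝ (Fin d) → ℂ) :=
    isBoundedIntegrable_gaussian one_pos
  have hfourier (y ω : EuclideanSpace ℝ (Fin d)) :
      ‖stft (gaussian 1) (𝓕 f) ω (-y)‖ₑ = ‖stft (gaussian 1) f y ω‖ₑ := by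
    simpa using enorm_stft_gaussian_fourier one_pos hf ω y
  rw [integral_KNop_mul ha hf' hg]
  refine (enorm_integral_mul_mul_le (isBoundedIntegrable_gaussian hb)
    (hwindow.chirpTensor hwindow (-1)) ha (hg.chirpTensor hf' 1)).trans_eq ?_
  rw [← lintegral_comp_pairEquiv]
  congr 1 with z
  rw [← lintegral_comp_pairEquiv]
  congr 1 with ζ
  rw [mul_assoc, ← hfourier, ← enorm_stft_chirpTensor]
  rfl

end KohnNirenberg

section Exponents

theorem holderConjugate_dualExp {r : ℝ≥0∞} (hr : 1 ≤ r) : r.HolderConjugate (dualExp r) := by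
  rcases eq_or_ne r 1 with rfl | hr1
  · simpa [dualExp] using ENNReal.HolderConjugate.one_top
  rcases eq_or_ne r ∞ with rfl | hr_top
  · simpa [dualExp] using ENNReal.HolderConjugate.top_one
  have hr_real : 1 < r.toReal := by
    simpa using (ENNReal.toReal_lt_toReal one_ne_top hr_top).2 (hr.lt_of_ne' hr1)
  rw [dualExp, if_neg hr1, if_neg hr_top]
  nth_rw 1 [← ENNReal.ofReal_toReal hr_top]
  exact (Real.HolderConjugate.conjExponent hr_real).ennrealOfReal

theorem toReal_inv_add_toReal_inv_eq_one (r r' : ℝ≥0∞) [r.HolderConjugate r'] :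
    r.toReal⁻¹ + r'.toReal⁻¹ = 1 := by
  have hr := ENNReal.inv_ne_top.2 (ENNReal.HolderConjugate.ne_zero r r')
  have hr' := ENNReal.inv_ne_top.2 (ENNReal.HolderConjugate.ne_zero r' r)
  rw [← ENNReal.toReal_inv, ← ENNReal.toReal_inv, ← ENNReal.toReal_add hr hr',
    ENNReal.HolderConjugate.inv_add_inv_eq_one r r', ENNReal.toReal_one]

theorem toReal_inv_max {r u : ℝ≥0∞} (hr : r ≠ 0) (hu : u ≠ 0) :
    (max r u).toReal⁻¹ = min r.toReal⁻¹ u.toReal⁻¹ := by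
  simp only [← ENNReal.toReal_inv]
  rw [← ENNReal.toReal_min (ENNReal.inv_ne_top.2 hr) (ENNReal.inv_ne_top.2 hu)]
  exact congrArg _ ENNReal.inv_strictAnti.antitone.map_max

theorem toReal_inv_le_toReal_inv {q r : ℝ≥0∞} (hq : q ≠ 0) (hqr : q ≤ r) :
    r.toReal⁻¹ ≤ q.toReal⁻¹ := by
  simpa only [← ENNReal.toReal_inv] using
    ENNReal.toReal_mono (ENNReal.inv_ne_top.2 hq) (ENNReal.inv_le_inv.2 hqr)

theorem holderConjugate_antitone {r r' u u' : ℝ≥0∞} [r.HolderConjugate r'] [u.HolderConjugate u']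
    (hru : r ≤ u) : u' ≤ r' := by
  rw [ENNReal.HolderConjugate.conj_eq (p := r) (q := r'),
    ENNReal.HolderConjugate.conj_eq (p := u) (q := u')]
  gcongr

theorem holderConjugate_min_two_max_two (r r' : ℝ≥0∞) [hconj : r.HolderConjugate r'] :
    (min 2 r).HolderConjugate (max 2 r') := by
  rcases le_total r 2 with hr | hr
  · rwa [min_eq_right hr, max_eq_right (holderConjugate_antitone (r := r) (u := 2) hr)]
  · rw [min_eq_left hr, max_eq_left (holderConjugate_antitone (r := 2) (u := r) hr)]
    infer_instance

theorem min_half_add_min_half {x y : ℝ} (hxy : x + y = 1) :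
    min 2⁻¹ x + min 2⁻¹ y = 1 - |x - 2⁻¹| := by
  rcases le_total x 2⁻¹ with h | h
  · rw [min_eq_right h, min_eq_left (by linarith), abs_of_nonpos (by linarith)]
    ring
  · rw [min_eq_left h, min_eq_right (by linarith), abs_of_nonneg (by linarith)]
    linarith

end Exponents

section ModulationNorm

theorem stft_gaussian_one_eq_STFT {ι : Type*} [Fintype ι] (F : EuclideanSpace ℝ ι → ℂ)
    (x ω : EuclideanSpace ℝ ι) : stft (gaussian 1) F x ω = STFT F x ω := by
  have hwindow (t : EuclideanSpace ℝ ι) : (starRingEnd ℂ) (gaussWin t) = gaussian 1 t := by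
    rw [gaussWin, gaussian, ← Complex.exp_conj]
    simp
  rw [stft_eq_integral, STFT]
  congr 1 with t
  rw [hwindow, Real.fourierChar_apply, real_inner_comm]
  push_cast
  ring_nf

theorem lqNorm_enorm_eq_eLpNorm {α ε : Type*} [MeasurableSpace α] [ENorm ε] {μ : Measure α}
    {p : ℝ≥0∞} (hp : p ≠ 0) (f : α → ε) : lqNorm μ p (fun x ↦ ‖f x‖ₑ) = eLpNorm f p μ := by
  rw [lqNorm, eLpNorm, if_neg hp]
  rfl

theorem modNorm_eq_eLpNorm_eLpNorm_stft {ι : Type*} [Fintype ι] {p q : ℝ≥0∞} (hp : p ≠ 0)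
    (hq : q ≠ 0) (F : EuclideanSpace ℝ ι → ℂ) :
    modNorm p q F =
      eLpNorm (fun ω ↦ eLpNorm (fun x ↦ stft (gaussian 1) F x ω) p volume) q volume := by
  simp only [stft_gaussian_one_eq_STFT]
  rw [← lqNorm_enorm_eq_eLpNorm hq]
  simp only [← lqNorm_enorm_eq_eLpNorm hp]
  rfl

end ModulationNorm

section Domination

theorem exists_mixedDensity_enorm_stft_le {V : Type*} [NormedAddCommGroup V]
    [InnerProductSpace ℝ V] [FiniteDimensional ℝ V] [MeasurableSpace V] [BorelSpace V]
    {c : ℝ} (hc : 0 < c) (r r' : ℝ≥0∞) [r.HolderConjugate r'] :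
    ∃ K ≠ ∞, ∀ f : V → ℂ, IsBoundedIntegrable f → ∃ D : MixedDensity V V, ∀ x ω,
      ‖stft (gaussian c) f x ω‖ₑ ≤ K * eLpNorm f r volume *
        (D.outer x ^ (max 2 r).toReal⁻¹ * D.inner x ω ^ (max 2 r').toReal⁻¹) := by
  have := holderConjugate_min_two_max_two r r'
  have hρ : min 2 r ≤ 2 := min_le_left _ _
  obtain ⟨K₁, hK₁, hHY⟩ := exists_eLpNorm_stft_le (V := V) (s := max 2 r') hρ
  obtain ⟨K, hK, hmixed⟩ := exists_eLpNorm_eLpNorm_stft_gaussian_le (V := V) (s := max 2 r') hc hρ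
    (min_le_right 2 r) (le_max_right 2 r)
  refine ⟨K, hK, fun f hf ↦ ?_⟩
  have hf_r := (hf.memLp (ENNReal.HolderConjugate.one_le r r')).eLpNorm_ne_top
  have hfiber (x : V) : eLpNorm (stft (gaussian c) f x) (max 2 r') volume ≠ ∞ := by
    have hgf := ((isBoundedIntegrable_gaussian hc).comp_sub_right x).mul hf
    have hgf_ρ := (hgf.memLp (ENNReal.HolderConjugate.one_le (min 2 r) (max 2 r'))).eLpNorm_ne_top
    exact ne_top_of_le_ne_top (ENNReal.mul_ne_top hK₁ hgf_ρ)
      (hHY _ f (isBoundedIntegrable_gaussian hc) hf x)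
  obtain ⟨D, hD⟩ := exists_mixedDensity_enorm_le
    (continuous_stft_gaussian hc.le hf.integrable) (by simp) (u := max 2 r) (by simp)
    hfiber (ne_top_of_le_ne_top (by finiteness) (hmixed f hf))
  exact ⟨D, fun x ω ↦ (hD x ω).trans (by gcongr; exact hmixed f hf)⟩

theorem exists_mixedDensity_enorm_stft_symbol_le (d : ℕ) {p P q : ℝ≥0∞} (hp : 1 ≤ p) (hpP : p ≤ P)
    (hq : q ≠ 0) :
    ∃ K ≠ ∞, ∀ a : EuclideanSpace ℝ (Fin d ⊕ Fin d) → ℂ, IsBoundedIntegrable a →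
      modNorm p q a ≠ ∞ → ∃ D : MixedDensity (EuclideanSpace ℝ (Fin d) × EuclideanSpace ℝ (Fin d))
        (EuclideanSpace ℝ (Fin d) × EuclideanSpace ℝ (Fin d)), ∀ ζ z,
      ‖stft (gaussian (1 / 2)) a (pairEquiv d z) (pairEquiv d ζ)‖ₑ ≤ K * modNorm p q a *
        (D.outer ζ ^ q.toReal⁻¹ * D.inner ζ z ^ P.toReal⁻¹) := by
  have hp0 : p ≠ 0 := (one_pos.trans_le hp).ne'
  have hP0 : P ≠ 0 := (one_pos.trans_le (hp.trans hpP)).ne'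
  obtain ⟨K, hK, hhalf⟩ := exists_eLpNorm_stft_gaussian_half_le
    (V := EuclideanSpace ℝ (Fin d ⊕ Fin d)) one_pos hp hpP
  refine ⟨K, hK, fun a ha hnorm ↦ ?_⟩
  set A : EuclideanSpace ℝ (Fin d) × EuclideanSpace ℝ (Fin d) →
      EuclideanSpace ℝ (Fin d) × EuclideanSpace ℝ (Fin d) → ℂ :=
    fun ζ z ↦ stft (gaussian (1 / 2)) a (pairEquiv d z) (pairEquiv d ζ)
  have hhalf_pos : (0 : ℝ) < 1 / 2 := one_half_pos
  have hcont : Continuous (Function.uncurry A) :=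
    (continuous_stft_gaussian hhalf_pos.le ha.integrable).comp₂
      ((pairEquiv d).continuous.comp continuous_snd) ((pairEquiv d).continuous.comp continuous_fst)
  have hfiber (ζ : EuclideanSpace ℝ (Fin d) × EuclideanSpace ℝ (Fin d)) : eLpNorm (A ζ) P volume =
      eLpNorm (fun z ↦ stft (gaussian (1 / 2)) a z (pairEquiv d ζ)) P volume :=
    eLpNorm_comp_pairEquiv (fun z ↦ stft (gaussian (1 / 2)) a z (pairEquiv d ζ)) P
  have hmixed : eLpNorm (fun ζ ↦ eLpNorm (A ζ) P volume) q volume ≤ K * modNorm p q a := by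
    simp only [hfiber]
    rw [eLpNorm_comp_pairEquiv (fun ζ ↦ eLpNorm (fun z ↦
      stft (gaussian (1 / 2)) a z ζ) P volume), modNorm_eq_eLpNorm_eLpNorm_stft hp0 hq]
    lift K to ℝ≥0 using hK
    exact eLpNorm_le_mul_eLpNorm_of_ae_le_mul' (.of_forall (hhalf a ha)) q
  have hfiber_top (ζ) : eLpNorm (A ζ) P volume ≠ ∞ :=
    hfiber ζ ▸ eLpNorm_stft_gaussian_left_ne_top hhalf_pos (hp.trans hpP) ha _
  obtain ⟨D, hD⟩ := exists_mixedDensity_enorm_le hcont hP0 hq hfiber_top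
    (ne_top_of_le_ne_top (ENNReal.mul_ne_top hK hnorm) hmixed)
  exact ⟨D, fun ζ z ↦ (hD ζ z).trans (by gcongr)⟩

end Domination

section Pairing

theorem toReal_inv_le_toReal_inv_max_two {q q' r r' : ℝ≥0∞} [q.HolderConjugate q']
    [r.HolderConjugate r'] (hqr : q ≤ r) (hqr' : q ≤ r') :
    q'.toReal⁻¹ ≤ (max 2 r).toReal⁻¹ := by
  have hq0 := ENNReal.HolderConjugate.ne_zero q q'
  have hq := toReal_inv_add_toReal_inv_eq_one q q'
  have hr := toReal_inv_add_toReal_inv_eq_one r r'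
  have hle := toReal_inv_le_toReal_inv hq0 hqr
  have hle' := toReal_inv_le_toReal_inv hq0 hqr'
  rw [toReal_inv_max two_ne_zero (ENNReal.HolderConjugate.ne_zero r r'), toReal_ofNat]
  exact le_min (by linarith) (by linarith)

theorem toReal_inv_max_two_add_toReal_inv_max_two (r r' : ℝ≥0∞) [r.HolderConjugate r'] :
    (max 2 r).toReal⁻¹ + (max 2 r').toReal⁻¹ = 1 - |r.toReal⁻¹ - 2⁻¹| := by
  rw [toReal_inv_max two_ne_zero (ENNReal.HolderConjugate.ne_zero r r'),
    toReal_inv_max two_ne_zero (ENNReal.HolderConjugate.ne_zero r' r), toReal_ofNat,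
    min_half_add_min_half (toReal_inv_add_toReal_inv_eq_one r r')]

theorem exists_le_toReal_inv_eq {p : ℝ≥0∞} {τ : ℝ} (hτ : 0 ≤ τ) (hp : p ≠ 0)
    (hτp : τ ≤ p.toReal⁻¹) : ∃ P, p ≤ P ∧ P.toReal⁻¹ = τ := by
  refine ⟨(ENNReal.ofReal τ)⁻¹, ?_, by rw [toReal_inv, inv_inv, toReal_ofReal hτ]⟩
  rw [ENNReal.le_inv_iff_le_inv, ENNReal.ofReal_le_iff_le_toReal (ENNReal.inv_ne_top.2 hp)]
  rwa [toReal_inv]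

theorem exists_enorm_integral_KNop_mul_le (d : ℕ) {p q q' r r' : ℝ≥0∞} [q.HolderConjugate q']
    [r.HolderConjugate r'] (hp : 1 ≤ p) (hpqr : |r.toReal⁻¹ - 2⁻¹| + q'.toReal⁻¹ ≤ p.toReal⁻¹)
    (hqr : q ≤ r) (hqr' : q ≤ r') :
    ∃ K ≠ ∞, ∀ (a : EuclideanSpace ℝ (Fin d ⊕ Fin d) → ℂ) (f g : EuclideanSpace ℝ (Fin d) → ℂ),
      IsBoundedIntegrable a → IsBoundedIntegrable f → IsBoundedIntegrable (𝓕 f) →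
      IsBoundedIntegrable g → modNorm p q a ≠ ∞ →
      ‖∫ x, KNop a f x * g x‖ₑ ≤
        K * modNorm p q a * eLpNorm f r volume * eLpNorm g r' volume := by
  have : r'.HolderConjugate r := .symm
  obtain ⟨P, hpP, hP⟩ := exists_le_toReal_inv_eq (by positivity) (one_pos.trans_le hp).ne' hpqr
  obtain ⟨Ka, hKa, hA⟩ := exists_mixedDensity_enorm_stft_symbol_le d hp hpP
    (ENNReal.HolderConjugate.ne_zero q q')
  obtain ⟨Kf, hKf, hF⟩ := exists_mixedDensity_enorm_stft_le (V := EuclideanSpace ℝ (Fin d))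
    one_pos r r'
  obtain ⟨Kg, hKg, hG⟩ := exists_mixedDensity_enorm_stft_le (V := EuclideanSpace ℝ (Fin d))
    one_pos r' r
  have hw := enorm_ne_zero.2
    (integral_gaussian_mul_chirpTensor_gaussian_ne_zero (d := d) one_half_pos one_pos)
  set κ := ‖∫ w, gaussian (1 / 2) w * chirpTensor (d := d) (-1) (gaussian 1) (gaussian 1) w‖ₑ
  refine ⟨κ⁻¹ * (Ka * Kf * Kg), by finiteness, fun a f g ha hf hf' hg hnorm ↦ ?_⟩
  obtain ⟨A, hA⟩ := hA a ha hnorm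
  obtain ⟨F, hF⟩ := hF f hf
  obtain ⟨G, hG⟩ := hG g hg
  have hq : q.toReal⁻¹ = 1 - q'.toReal⁻¹ := eq_sub_of_add_eq (toReal_inv_add_toReal_inv_eq_one q q')
  rw [hq, hP] at hA
  have hf_r := (hf.memLp (ENNReal.HolderConjugate.one_le r r')).eLpNorm_ne_top
  have hg_r' := (hg.memLp (ENNReal.HolderConjugate.one_le r' r)).eLpNorm_ne_top
  have htrilinear := A.lintegral_mul_mul_le G F (abs_nonneg _) (by positivity)
    (toReal_inv_le_toReal_inv_max_two hqr hqr')
    (toReal_inv_le_toReal_inv_max_two (r := r') (r' := r) hqr' hqr)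
    (toReal_inv_max_two_add_toReal_inv_max_two r r') (by finiteness) (by finiteness)
    (by finiteness) hA hG hF
  calc
    ‖∫ x, KNop a f x * g x‖ₑ ≤ κ⁻¹ * (Ka * modNorm p q a * (Kg * eLpNorm g r' volume) *
        (Kf * eLpNorm f r volume)) :=
      (ENNReal.mul_le_iff_le_inv hw enorm_ne_top).1 <|
        (enorm_integral_KNop_mul_le one_half_pos ha hf.integrable hf' hg).trans htrilinear
    _ = _ := by ring

end Pairing

section Duality

variable {α : Type*} {h : α → ℂ} {s : ℝ}

/-- The extremal function for the pairing of `h ∈ L^s` with the dual Lebesgue space, cut off to the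
set `A`; up to normalization it attains equality in Hölder's inequality on `A`. -/
noncomputable def dualTest (h : α → ℂ) (s : ℝ) (A : Set α) : α → ℂ :=
  A.indicator fun x ↦ (starRingEnd ℂ) (h x) * (‖h x‖ ^ (s - 2) : ℝ)

theorem mul_dualTest (hs : s ≠ 0) (A : Set α) (x : α) :
    h x * dualTest h s A x = A.indicator (fun x ↦ ((‖h x‖ ^ s : ℝ) : ℂ)) x := by
  by_cases hx : x ∈ A
  · rw [dualTest, Set.indicator_of_mem hx, Set.indicator_of_mem hx, ← mul_assoc, Complex.mul_conj,
      Complex.normSq_eq_norm_sq, ← Complex.ofReal_mul]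
    congr 1
    rcases (norm_nonneg (h x)).eq_or_lt' with h0 | hpos
    · simp [h0, Real.zero_rpow hs]
    · rw [← Real.rpow_natCast, ← Real.rpow_add hpos]
      congr 1
      push_cast
      ring
  · simp [dualTest, hx]

theorem norm_dualTest_le (A : Set α) (x : α) :
    ‖dualTest h s A x‖ ≤ A.indicator (fun x ↦ ‖h x‖ ^ (s - 1)) x := by
  by_cases hx : x ∈ A
  · rw [dualTest, Set.indicator_of_mem hx, Set.indicator_of_mem hx, norm_mul, RCLike.norm_conj,
      Complex.norm_of_nonneg (by positivity)]
    rcases eq_or_ne ‖h x‖ 0 with h0 | h0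
    · rw [h0, zero_mul]
      positivity
    · rw [mul_comm, ← Real.rpow_add_one h0]
      exact le_of_eq (by ring_nf)
  · simp [dualTest, hx]

theorem enorm_dualTest_le (hs : 1 ≤ s) (A : Set α) (x : α) :
    ‖dualTest h s A x‖ₑ ≤ A.indicator (fun x ↦ ‖h x‖ₑ ^ (s - 1)) x := by
  rw [← ofReal_norm]
  refine (ENNReal.ofReal_le_ofReal (norm_dualTest_le A x)).trans_eq ?_
  by_cases hx : x ∈ A
  · rw [Set.indicator_of_mem hx, Set.indicator_of_mem hx,
      ← ENNReal.ofReal_rpow_of_nonneg (norm_nonneg _) (sub_nonneg.2 hs), ofReal_norm]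
  · simp [hx]

variable [MeasureSpace α] {A : Set α}

theorem isBoundedIntegrable_dualTest (hh : Measurable h) {M : ℝ} (hM : ∀ x, ‖h x‖ ≤ M)
    (hs : 1 ≤ s) (hA : MeasurableSet A) (hA_fin : volume A ≠ ∞) :
    IsBoundedIntegrable (dualTest h s A) := by
  have hmeas : Measurable (dualTest h s A) := by
    refine Measurable.indicator ?_ hA
    fun_prop
  have hbound (x : α) : ‖dualTest h s A x‖ ≤ A.indicator (fun _ ↦ M ^ (s - 1)) x :=
    (norm_dualTest_le A x).trans <| Set.indicator_le_indicator <|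
      Real.rpow_le_rpow (norm_nonneg _) (hM x) (sub_nonneg.2 hs)
  refine ⟨hmeas, ?_, M ^ (s - 1), fun x ↦ (hbound x).trans ?_⟩
  · exact ((integrable_indicator_iff hA).2 (integrableOn_const hA_fin)).mono'
      hmeas.aestronglyMeasurable (.of_forall hbound)
  · exact Set.indicator_le_self' (fun x _ ↦ Real.rpow_nonneg ((norm_nonneg _).trans (hM x)) _) x

theorem setLIntegral_enorm_rpow_ne_top {M : ℝ} (hM : ∀ x, ‖h x‖ ≤ M) (hs : 0 ≤ s)
    (hA_fin : volume A ≠ ∞) : ∫⁻ x in A, ‖h x‖ₑ ^ s ≠ ∞ := by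
  have hbound (x : α) : ‖h x‖ₑ ^ s ≤ ENNReal.ofReal M ^ s := by
    rw [← ofReal_norm]
    exact ENNReal.rpow_le_rpow (ENNReal.ofReal_le_ofReal (hM x)) hs
  refine ne_top_of_le_ne_top ?_ (lintegral_mono hbound)
  rw [setLIntegral_const]
  finiteness

theorem enorm_integral_mul_dualTest (hh : Measurable h) (hs : 0 < s) (hA : MeasurableSet A)
    (hfin : ∫⁻ x in A, ‖h x‖ₑ ^ s ≠ ∞) :
    ‖∫ x, h x * dualTest h s A x‖ₑ = ∫⁻ x in A, ‖h x‖ₑ ^ s := by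
  have henorm (x : α) : ENNReal.ofReal (‖h x‖ ^ s) = ‖h x‖ₑ ^ s := by
    rw [← ENNReal.ofReal_rpow_of_nonneg (norm_nonneg _) hs.le, ofReal_norm]
  simp only [mul_dualTest hs.ne']
  rw [integral_indicator hA, integral_complex_ofReal,
    integral_eq_lintegral_of_nonneg_ae (.of_forall fun x ↦ by positivity)
      (hh.norm.pow_const s).aestronglyMeasurable, ← ofReal_norm,
    Complex.norm_of_nonneg toReal_nonneg]
  simp only [henorm]
  exact ENNReal.ofReal_toReal hfin

theorem eLpNorm_dualTest_le {r r' : ℝ≥0∞} [r.HolderConjugate r'] (hr : r ≠ ∞)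
    (hA : MeasurableSet A) :
    eLpNorm (dualTest h r.toReal A) r' volume ≤
      (∫⁻ x in A, ‖h x‖ₑ ^ r.toReal) ^ r'.toReal⁻¹ := by
  have hr_one : 1 ≤ r.toReal := by
    simpa using ENNReal.toReal_mono hr (ENNReal.HolderConjugate.one_le r r')
  have hpointwise := enorm_dualTest_le (h := h) hr_one A
  rcases eq_or_ne r' ∞ with rfl | hr'
  · obtain rfl : r = 1 := (ENNReal.HolderConjugate.eq_top_iff_eq_one ∞ r).1 rfl
    rw [eLpNorm_exponent_top, toReal_top, _root_.inv_zero, ENNReal.rpow_zero]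
    refine eLpNormEssSup_le_of_ae_enorm_bound (.of_forall fun x ↦ (hpointwise x).trans ?_)
    exact Set.indicator_apply_le' (fun _ ↦ by simp) fun _ ↦ zero_le_one
  · have hconj := ENNReal.HolderConjugate.toReal_of_ne_top (p := r) (q := r') hr hr'
    rw [eLpNorm_eq_lintegral_rpow_enorm_toReal (ENNReal.HolderConjugate.ne_zero r' r) hr', one_div,
      ← lintegral_indicator hA]
    gcongr with x
    refine (ENNReal.rpow_le_rpow (hpointwise x) hconj.symm.nonneg).trans_eq ?_
    by_cases hx : x ∈ A
    · simp only [Set.indicator_of_mem hx, ← ENNReal.rpow_mul, hconj.sub_one_mul_conj]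
    · simp [hx, hconj.symm.pos]

theorem rpow_le_of_le_mul_rpow {J L : ℝ≥0∞} (hJ : J ≠ ∞) {x y : ℝ} (hx : 0 < x) (hxy : x + y = 1)
    (hJL : J ≤ L * J ^ y) : J ^ x ≤ L := by
  rcases eq_or_ne J 0 with rfl | hJ0
  · simp [hx]
  rw [← ENNReal.mul_le_mul_iff_left (ENNReal.rpow_pos (pos_iff_ne_zero.2 hJ0) hJ).ne'
    (ENNReal.rpow_ne_top_of_ne_zero hJ0 hJ), ← ENNReal.rpow_add _ _ hJ0 hJ, hxy, ENNReal.rpow_one]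
  exact hJL

theorem eLpNorm_top_le_of_forall_enorm_integral_mul_le [SigmaFinite (volume : Measure α)]
    (hh : Measurable h) {M : ℝ} (hM : ∀ x, ‖h x‖ ≤ M) {L : ℝ≥0∞}
    (hL : ∀ g, IsBoundedIntegrable g → ‖∫ x, h x * g x‖ₑ ≤ L * eLpNorm g 1 volume) :
    eLpNorm h ∞ volume ≤ L := by
  rw [eLpNorm_exponent_top]
  refine eLpNormEssSup_le_of_ae_enorm_bound <|
    ae_le_of_forall_setLIntegral_le_of_sigmaFinite hh.enorm fun A hA hA_fin ↦ ?_
  have hpairing := hL _ (isBoundedIntegrable_dualTest hh hM le_rfl hA hA_fin.ne)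
  rw [enorm_integral_mul_dualTest hh one_pos hA
    (setLIntegral_enorm_rpow_ne_top hM zero_le_one hA_fin.ne)] at hpairing
  simp only [ENNReal.rpow_one] at hpairing
  have htest : eLpNorm (dualTest h 1 A) 1 volume ≤ volume A := by
    rw [eLpNorm_one_eq_lintegral_enorm]
    refine (lintegral_mono (enorm_dualTest_le le_rfl A)).trans_eq ?_
    simp [lintegral_indicator hA]
  rw [setLIntegral_const]
  exact hpairing.trans (by gcongr)

theorem eLpNorm_le_of_forall_enorm_integral_mul_le [SigmaFinite (volume : Measure α)]
    (hh : Measurable h) {M : ℝ} (hM : ∀ x, ‖h x‖ ≤ M) {r r' : ℝ≥0∞} [r.HolderConjugate r']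
    {L : ℝ≥0∞}
    (hL : ∀ g, IsBoundedIntegrable g → ‖∫ x, h x * g x‖ₑ ≤ L * eLpNorm g r' volume) :
    eLpNorm h r volume ≤ L := by
  rcases eq_or_ne r ∞ with rfl | hr
  · obtain rfl : r' = 1 := (ENNReal.HolderConjugate.eq_top_iff_eq_one ∞ r').1 rfl
    exact eLpNorm_top_le_of_forall_enorm_integral_mul_le hh hM hL
  have hr_one : 1 ≤ r.toReal := by
    simpa using ENNReal.toReal_mono hr (ENNReal.HolderConjugate.one_le r r')
  have hr_pos := one_pos.trans_le hr_one
  have hset (n : ℕ) : ∫⁻ x in spanningSets volume n, ‖h x‖ₑ ^ r.toReal ≤ L ^ r.toReal := by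
    have hA := measurableSet_spanningSets (volume : Measure α) n
    have hA_fin := (measure_spanningSets_lt_top (volume : Measure α) n).ne
    have hfin := setLIntegral_enorm_rpow_ne_top hM hr_pos.le hA_fin
    have hpairing := hL _ (isBoundedIntegrable_dualTest hh hM hr_one hA hA_fin)
    rw [enorm_integral_mul_dualTest hh hr_pos hA hfin] at hpairing
    refine (ENNReal.rpow_inv_le_iff hr_pos).1 <| rpow_le_of_le_mul_rpow hfin (inv_pos.2 hr_pos)
      (toReal_inv_add_toReal_inv_eq_one r r') (hpairing.trans ?_)
    gcongr
    exact eLpNorm_dualTest_le hr hA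
  rw [eLpNorm_eq_lintegral_rpow_enorm_toReal (ENNReal.HolderConjugate.ne_zero r r') hr, one_div,
    ENNReal.rpow_inv_le_iff hr_pos, ← setLIntegral_univ, ← iUnion_spanningSets (volume : Measure α),
    setLIntegral_iUnion_of_directed _ (monotone_spanningSets volume).directed_le]
  exact iSup_le hset

end Duality

section KohnNirenberg

variable {d : ℕ} {a : EuclideanSpace ℝ (Fin d ⊕ Fin d) → ℂ} {f : EuclideanSpace ℝ (Fin d) → ℂ}

theorem measurable_KNop (ha : Measurable a) (hf : Measurable (𝓕 f)) : Measurable (KNop a f) := by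
  have hintegrand : Measurable fun z : EuclideanSpace ℝ (Fin d) × EuclideanSpace ℝ (Fin d) ↦
      a (pairEquiv d z) * 𝓕 f z.2 * Real.fourierChar (inner ℝ z.1 z.2) :=
    ((ha.comp (pairEquiv d).continuous.measurable).mul (hf.comp measurable_snd)).mul
      (by fun_prop : Continuous _).measurable
  rw [funext (KNop_eq_integral a f)]
  exact hintegrand.stronglyMeasurable.integral_prod_right'.measurable

theorem norm_KNop_le {M : ℝ} (hM : ∀ z, ‖a z‖ ≤ M) (hf : Integrable (𝓕 f))
    (x : EuclideanSpace ℝ (Fin d)) : ‖KNop a f x‖ ≤ M * ∫ ω, ‖𝓕 f ω‖ := by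
  rw [KNop_eq_integral, ← integral_const_mul]
  refine norm_integral_le_of_norm_le (hf.norm.const_mul M) (.of_forall fun ω ↦ ?_)
  rw [norm_mul, norm_mul, Circle.norm_coe, mul_one]
  gcongr
  exact hM _

theorem KNop_eq_zero_of_ae_eq_zero (hf : f =ᵐ[volume] 0) : KNop a f = 0 := by
  ext x
  simp [KNop_eq_integral, fourier_eq_zero_of_ae_eq_zero hf]

theorem isBoundedIntegrable_schwartzMap {V : Type*} [NormedAddCommGroup V] [NormedSpace ℝ V]
    [SecondCountableTopology V] [MeasureSpace V] [BorelSpace V]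
    [(volume : Measure V).HasTemperateGrowth] (f : 𝓢(V, ℂ)) : IsBoundedIntegrable f :=
  ⟨f.continuous.measurable, f.integrable, _, f.norm_le_seminorm ℝ⟩

theorem isBoundedIntegrable_fourier_schwartzMap {V : Type*} [NormedAddCommGroup V]
    [InnerProductSpace ℝ V] [FiniteDimensional ℝ V] [MeasurableSpace V] [BorelSpace V]
    (f : 𝓢(V, ℂ)) : IsBoundedIntegrable (𝓕 (f : V → ℂ)) := by
  rw [← SchwartzMap.fourier_coe]
  exact isBoundedIntegrable_schwartzMap _

end KohnNirenberg

theorem kn_Mpq_bounded_on_Lr_general (d : ℕ) {p q q' r r' : ℝ≥0∞} [q.HolderConjugate q']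
    [r.HolderConjugate r'] (hp : 1 ≤ p) (hpqr : |r.toReal⁻¹ - 2⁻¹| + q'.toReal⁻¹ ≤ p.toReal⁻¹)
    (hqr : q ≤ r) (hqr' : q ≤ r') :
    ∃ C : ℝ, 0 < C ∧ ∀ (a : EuclideanSpace ℝ (Fin d ⊕ Fin d) → ℂ)
      (f : EuclideanSpace ℝ (Fin d) → ℂ), IsBoundedIntegrable a → IsBoundedIntegrable f →
        IsBoundedIntegrable (𝓕 f) → eLpNorm (KNop a f) r volume ≤
          ENNReal.ofReal C * modNorm p q a * eLpNorm f r volume := by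
  obtain ⟨K, hK, hpairing⟩ := exists_enorm_integral_KNop_mul_le d hp hpqr hqr hqr'
  refine ⟨K.toReal + 1, by positivity, fun a f ha hf hf' ↦ ?_⟩
  have hKC : K ≤ ENNReal.ofReal (K.toReal + 1) :=
    (ENNReal.le_ofReal_iff_toReal_le hK (by positivity)).2 (lt_add_one _).le
  rcases eq_or_ne (modNorm p q a) ∞ with hnorm | hnorm
  · rcases eq_or_ne (eLpNorm f r volume) 0 with hf_r | hf_r
    · rw [eLpNorm_eq_zero_iff hf.measurable.aestronglyMeasurable
        (ENNReal.HolderConjugate.ne_zero r r')] at hf_r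
      simp [KNop_eq_zero_of_ae_eq_zero hf_r]
    · have hC : ENNReal.ofReal (K.toReal + 1) ≠ 0 := by positivity
      simp [hnorm, ENNReal.mul_top hC, ENNReal.top_mul hf_r]
  · obtain ⟨M, hM⟩ := ha.exists_norm_le
    have hbound := eLpNorm_le_of_forall_enorm_integral_mul_le (r := r)
      (measurable_KNop ha.measurable hf'.measurable) (norm_KNop_le hM hf'.integrable)
      fun g hg ↦ hpairing a f g ha hf hf' hg hnorm
    exact hbound.trans (by gcongr)

/-- if `1/p ≥ |1/r − 1/2| + 1/q'` and `q ≤ min{r,r'}`, then symbols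
in `M^{p,q}` give operators bounded on `L^r`. -/
theorem kn_Mpq_bounded_on_Lr (d : ℕ) (p q r : ℝ≥0∞)
    (hp : 1 ≤ p) (hq : 1 ≤ q) (hr : 1 ≤ r)
    (h1 : |invR r - 1 / 2| + invR (dualExp q) ≤ invR p)
    (h2 : q ≤ min r (dualExp r)) :
    ∃ C : ℝ, 0 < C ∧
      ∀ (a : SchwartzMap (EuclideanSpace ℝ (Fin d ⊕ Fin d)) ℂ)
        (f : SchwartzMap (EuclideanSpace ℝ (Fin d)) ℂ),
        eLpNorm (KNop ⇑a ⇑f) r volume ≤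
          ENNReal.ofReal C * modNorm p q ⇑a * eLpNorm ⇑f r volume := by
  have := holderConjugate_dualExp hq
  have := holderConjugate_dualExp hr
  obtain ⟨C, hC, hbound⟩ := kn_Mpq_bounded_on_Lr_general d hp (by simpa [invR] using h1)
    (h2.trans (min_le_left _ _)) (h2.trans (min_le_right _ _))
  exact ⟨C, hC, fun a f ↦ hbound a f (isBoundedIntegrable_schwartzMap a)
    (isBoundedIntegrable_schwartzMap f) (isBoundedIntegrable_fourier_schwartzMap f)⟩
end

section
/- Let 1 ≤ p, q, r, s ≤ ∞. Suppose there exists a constant C > 0 such that ‖L_σ f‖_{W(L^r,L^s)} ≤ C · ‖σ‖_{M^{p,q}} · ‖f‖_{W(L^r,L^s)} for all Schwartz σ on ℝ^{2d} and all Schwartz f on ℝ^d. Then there exists a constant C' > 0 such that ‖L_σ f‖_{W(L^{r'},L^{s'})} ≤ C' · ‖σ‖_{M^{p,q}} · ‖f‖_{W(L^{r'},L^{s'})} for all Schwartz σ on ℝ^{2d} and all Schwartz f on ℝ^d, where r', s' are the conjugate exponents of r, s (this holds also when r = ∞ or s = ∞). -/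
open MeasureTheory SchwartzMap Complex ENNReal NNReal

/-!
The adjoint of `L_σ` is the Weyl operator of `conj σ`:
`∫ L_σ f · g = ∫ f · conj (L_{conj σ} (conj g))`.
Conjugation changes neither `‖σ‖_{M^{p,q}}` (it reflects the short-time Fourier transform in
frequency) nor the amalgam norm of `g`. Hölder's inequality on the lattice cubes therefore turns
the assumed bound for `conj σ` into
`|∫ L_σ f · g| ≤ C ‖σ‖_{M^{p,q}} ‖f‖_{W(L^{r'},L^{s'})} ‖g‖_{W(L^r,L^s)}`,
and it remains to recover the norm of `L_σ f` by testing against Schwartz functions `g` only. As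
Schwartz functions are not dense when `r` or `s` is infinite, one works cube by cube: on an open
cube a bounded function is an almost everywhere limit of smooth functions that vanish off the cube
and obey the same bound, so smooth functions norm the local `L^{r'}` space. Finitely many of the
resulting near-extremizers are then glued with coefficients that test the `ℓ^{s'}` norm.
-/

section Exponents

variable {α β : Type*} [MeasurableSpace α] [MeasurableSpace β] {μ : Measure α} {ν : Measure β}

theorem lqNorm_eq_eLpNorm {p : ℝ≥0∞} (hp : p ≠ 0) (f : α → ℝ≥0∞) :
    lqNorm μ p f = eLpNorm f p μ := by
  unfold lqNorm
  split_ifs with hp_top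
  · simp only [hp_top, eLpNorm_exponent_top, eLpNormEssSup, enorm_eq_self]
  · simp only [eLpNorm_eq_lintegral_rpow_enorm_toReal hp hp_top, enorm_eq_self]

theorem lqNorm_comp_measurableEquiv (e : α ≃ᵐ β) (he : MeasurePreserving e μ ν) (p : ℝ≥0∞)
    (f : β → ℝ≥0∞) : lqNorm μ p (fun x => f (e x)) = lqNorm ν p f := by
  unfold lqNorm
  split_ifs
  · rw [← he.map_eq, e.measurableEmbedding.essSup_map_measure, Function.comp_def]
  · rw [← he.map_eq, lintegral_map_equiv]

theorem holderConjugate_dualExp_s6 {p : ℝ≥0∞} (hp : 1 ≤ p) : p.HolderConjugate (dualExp p) := by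
  unfold dualExp
  split_ifs with hp_one hp_top
  · exact hp_one ▸ inferInstance
  · exact hp_top ▸ inferInstance
  · have hp_real : 1 < p.toReal := by
      rw [← ENNReal.toReal_one]
      exact (ENNReal.toReal_lt_toReal ENNReal.one_ne_top hp_top).2 (hp.lt_of_ne' hp_one)
    simpa only [Real.conjExponent, ENNReal.ofReal_toReal hp_top] using
      (Real.HolderConjugate.conjExponent hp_real).ennrealOfReal

end Exponents

section Holder

variable {α : Type*} [MeasurableSpace α] {μ : Measure α}

theorem lintegral_mul_le_eLpNorm_mul_eLpNorm {p q : ℝ≥0∞} [hpq : p.HolderConjugate q]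
    {f g : α → ℝ≥0∞} (hf : AEMeasurable f μ) (hg : AEMeasurable g μ) :
    ∫⁻ x, f x * g x ∂μ ≤ eLpNorm f p μ * eLpNorm g q μ := by
  have top_le {u v : α → ℝ≥0∞} (hv : AEMeasurable v μ) :
      ∫⁻ x, u x * v x ∂μ ≤ eLpNorm u ∞ μ * eLpNorm v 1 μ := by
    simp only [eLpNorm_one_eq_lintegral_enorm, enorm_eq_self]
    rw [← lintegral_const_mul'' _ hv]
    refine lintegral_mono_ae ?_
    filter_upwards [enorm_ae_le_eLpNormEssSup u μ] with x hx
    gcongr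
    exact hx
  rcases eq_or_ne p ∞ with rfl | hp
  · obtain rfl := ENNReal.HolderConjugate.unique ∞ q 1
    exact top_le hg
  rcases eq_or_ne q ∞ with rfl | hq
  · obtain rfl := ENNReal.HolderConjugate.unique ∞ p 1
    simpa only [mul_comm] using top_le (u := g) hf
  · rw [eLpNorm_eq_lintegral_rpow_enorm_toReal hpq.ne_zero hp,
      eLpNorm_eq_lintegral_rpow_enorm_toReal hpq.symm.ne_zero hq]
    simp only [enorm_eq_self]
    exact ENNReal.lintegral_mul_le_Lp_mul_Lq μ (hpq.toReal_of_ne_top hp hq) hf hg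

end Holder

section ConverseHolder

variable {α : Type*} [MeasurableSpace α] {μ : Measure α}

theorem finMeasSupp_of_lintegral_lt_top {w : SimpleFunc α ℝ≥0} (hw : ∫⁻ x, w x ∂μ < ∞) :
    w.FinMeasSupp μ := by
  have hcoe : (w.map ((↑) : ℝ≥0 → ℝ≥0∞)).FinMeasSupp μ :=
    .of_lintegral_ne_top (by rw [← SimpleFunc.lintegral_eq_lintegral]; exact hw.ne)
  exact (SimpleFunc.FinMeasSupp.map_iff ENNReal.coe_eq_zero).1 hcoe

theorem setLIntegral_le_of_forall_lintegral_mul_le {p : ℝ≥0∞} {h : α → ℝ≥0∞} {M : ℝ≥0∞}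
    (H : ∀ u : SimpleFunc α ℝ≥0, u.FinMeasSupp μ →
      ∫⁻ x, h x * u x ∂μ ≤ M * eLpNorm (fun x => (u x : ℝ≥0∞)) p μ)
    {S : Set α} (hS : MeasurableSet S) (hμS : μ S < ∞) :
    ∫⁻ x in S, h x ∂μ ≤ M * eLpNorm (S.indicator fun _ => (1 : ℝ≥0∞)) p μ := by
  set u : SimpleFunc α ℝ≥0 := (SimpleFunc.const α 1).restrict S
  have coe_u (x : α) : (u x : ℝ≥0∞) = S.indicator (fun _ => 1) x := by
    by_cases hx : x ∈ S <;> simp [u, hS, hx]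
  have hu_supp : u.FinMeasSupp μ := by
    rw [SimpleFunc.finMeasSupp_iff_support, SimpleFunc.coe_restrict _ hS]
    exact (measure_mono Set.support_indicator_subset).trans_lt hμS
  simpa only [coe_u, ← Set.indicator_mul_right, mul_one, lintegral_indicator hS] using H u hu_supp

variable [SigmaFinite μ]

theorem lintegral_le_of_forall_simpleFunc_le {g : α → ℝ≥0∞} {M : ℝ≥0∞}
    (h : ∀ w : SimpleFunc α ℝ≥0, (∀ x, w x ≤ g x) → ∫⁻ x, w x ∂μ < ∞ → ∫⁻ x, w x ∂μ ≤ M) :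
    ∫⁻ x, g x ∂μ ≤ M := by
  rw [lintegral_eq_nnreal]
  refine iSup₂_le fun φ hφ => le_of_forall_lt fun L hL => ?_
  rw [← SimpleFunc.lintegral_eq_lintegral] at hL
  obtain ⟨w, hwφ, hw_top, hLw⟩ := SimpleFunc.exists_lt_lintegral_simpleFunc_of_lt_lintegral hL
  exact hLw.trans_le (h w (fun x => (ENNReal.coe_le_coe.2 (hwφ x)).trans (hφ x)) hw_top)

theorem le_rpow_of_le_mul_rpow {p q : ℝ} (hpq : p.HolderConjugate q) {a M : ℝ≥0∞} (ha : a ≠ ∞)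
    (h : a ≤ M * a ^ p⁻¹) : a ≤ M ^ q := by
  rcases eq_or_ne a 0 with rfl | ha0
  · exact zero_le
  have hsplit : a ^ q⁻¹ * a ^ p⁻¹ = a := by
    rw [← ENNReal.rpow_add _ _ ha0 ha, hpq.symm.inv_add_inv_eq_one, ENNReal.rpow_one]
  have ha_pow0 : a ^ p⁻¹ ≠ 0 := (ENNReal.rpow_pos (pos_iff_ne_zero.2 ha0) ha).ne'
  have ha_pow : a ^ p⁻¹ ≠ ∞ := ENNReal.rpow_ne_top_of_nonneg hpq.inv_nonneg ha
  rw [← ENNReal.rpow_inv_le_iff hpq.symm.pos]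
  exact (ENNReal.mul_le_mul_iff_left ha_pow0 ha_pow).1 (hsplit.le.trans h)

theorem lintegral_rpow_le_of_forall_lintegral_mul_le {p q : ℝ} (hpq : p.HolderConjugate q)
    {h : α → ℝ≥0∞} {M : ℝ≥0∞}
    (H : ∀ u : SimpleFunc α ℝ≥0, u.FinMeasSupp μ →
      ∫⁻ x, h x * u x ∂μ ≤ M * (∫⁻ x, (u x : ℝ≥0∞) ^ p ∂μ) ^ p⁻¹) :
    ∫⁻ x, h x ^ q ∂μ ≤ M ^ q := by
  refine lintegral_le_of_forall_simpleFunc_le fun w hwh hw_top => ?_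
  set u : SimpleFunc α ℝ≥0 := w.map (· ^ p⁻¹)
  have coe_u (x : α) : (u x : ℝ≥0∞) = (w x : ℝ≥0∞) ^ p⁻¹ :=
    ENNReal.coe_rpow_of_nonneg _ hpq.inv_nonneg
  have hu_supp : u.FinMeasSupp μ :=
    (finMeasSupp_of_lintegral_lt_top hw_top).map (NNReal.zero_rpow hpq.inv_ne_zero)
  have w_le (x : α) : (w x : ℝ≥0∞) ≤ h x * u x :=
    calc (w x : ℝ≥0∞) = (w x : ℝ≥0∞) ^ q⁻¹ * (w x : ℝ≥0∞) ^ p⁻¹ := by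
          rw [← ENNReal.rpow_add_of_nonneg _ _ hpq.symm.inv_nonneg hpq.inv_nonneg,
            hpq.symm.inv_add_inv_eq_one, ENNReal.rpow_one]
      _ ≤ h x * u x := by
          rw [coe_u]
          gcongr
          exact (ENNReal.rpow_inv_le_iff hpq.symm.pos).2 (hwh x)
  have lintegral_u : ∫⁻ x, (u x : ℝ≥0∞) ^ p ∂μ = ∫⁻ x, w x ∂μ := by
    simp only [coe_u, ENNReal.rpow_inv_rpow hpq.ne_zero]
  exact le_rpow_of_le_mul_rpow hpq hw_top.ne <|
    (lintegral_mono w_le).trans (lintegral_u ▸ H u hu_supp)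

theorem eLpNorm_le_of_forall_lintegral_mul_le {p q : ℝ≥0∞} [hpq : p.HolderConjugate q]
    {h : α → ℝ≥0∞} (hh : Measurable h) {M : ℝ≥0∞}
    (H : ∀ u : SimpleFunc α ℝ≥0, u.FinMeasSupp μ →
      ∫⁻ x, h x * u x ∂μ ≤ M * eLpNorm (fun x => (u x : ℝ≥0∞)) p μ) :
    eLpNorm h q μ ≤ M := by
  rcases eq_or_ne q ∞ with rfl | hq
  · obtain rfl := ENNReal.HolderConjugate.unique ∞ p 1
    refine essSup_le_of_ae_le M
      (ae_le_of_forall_setLIntegral_le_of_sigmaFinite hh fun S hS hμS => ?_)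
    simpa [eLpNorm_one_eq_lintegral_enorm, hS] using
      setLIntegral_le_of_forall_lintegral_mul_le H hS hμS
  rcases eq_or_ne p ∞ with rfl | hp
  · obtain rfl := ENNReal.HolderConjugate.unique ∞ q 1
    simp only [eLpNorm_one_eq_lintegral_enorm, enorm_eq_self]
    refine lintegral_le_of_forall_simpleFunc_le fun w hwh hw_top => ?_
    have hw_supp := finMeasSupp_of_lintegral_lt_top hw_top
    rw [SimpleFunc.finMeasSupp_iff_support] at hw_supp
    calc ∫⁻ x, w x ∂μ = ∫⁻ x in Function.support w, w x ∂μ :=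
          (setLIntegral_eq_of_support_subset fun x hx => by simpa using hx).symm
      _ ≤ ∫⁻ x in Function.support w, h x ∂μ := lintegral_mono hwh
      _ ≤ M * 1 := (setLIntegral_le_of_forall_lintegral_mul_le H
          w.measurableSet_support hw_supp).trans ?_
      _ = M := mul_one M
    gcongr
    refine essSup_le_of_ae_le 1 (.of_forall fun x => ?_)
    exact Set.indicator_le_self' (fun _ _ => zero_le) x
  · have hpq_real := hpq.toReal_of_ne_top hp hq
    simp only [eLpNorm_eq_lintegral_rpow_enorm_toReal hpq.ne_zero hp,
      eLpNorm_eq_lintegral_rpow_enorm_toReal hpq.symm.ne_zero hq, enorm_eq_self, one_div] at H ⊢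
    exact (ENNReal.rpow_inv_le_iff hpq_real.symm.pos).2
      (lintegral_rpow_le_of_forall_lintegral_mul_le hpq_real H)

end ConverseHolder

section SmoothApproximation

open scoped Convolution ContDiff Topology

variable {E G : Type*} [NormedAddCommGroup E] [NormedSpace ℝ E] [FiniteDimensional ℝ E]

theorem exists_contDiff_tendsto_one_of_isOpen {U : Set E} (hU : IsOpen U) :
    ∃ η : ℕ → E → ℝ, (∀ k, ContDiff ℝ ∞ (η k)) ∧ (∀ k, ∀ x ∉ U, η k x = 0) ∧
      (∀ k x, η k x ∈ Set.Icc 0 1) ∧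
      ∀ x ∈ U, Filter.Tendsto (fun k => η k x) Filter.atTop (𝓝 1) := by
  obtain ⟨χ, hχ_supp, hχ_smooth, hχ_range⟩ := hU.exists_contDiff_support_eq (n := ⊤)
  have hχ (x : E) : χ x ∈ Set.Icc 0 1 := hχ_range ⟨x, rfl⟩
  refine ⟨fun k x => 1 - (1 - χ x) ^ k, fun k => ?_, fun k x hx => ?_, fun k x => ?_,
    fun x hx => ?_⟩
  · exact contDiff_const.sub ((contDiff_const.sub hχ_smooth).pow k)
  · simp [Function.notMem_support.1 (hχ_supp ▸ hx)]
  · have := pow_nonneg (sub_nonneg.2 (hχ x).2) k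
    have := pow_le_one₀ (n := k) (sub_nonneg.2 (hχ x).2) (sub_le_self 1 (hχ x).1)
    constructor <;> linarith
  · have hχ_pos : 0 < χ x := (hχ x).1.lt_of_ne' (hχ_supp.symm ▸ hx : x ∈ Function.support χ)
    simpa using (tendsto_pow_atTop_nhds_zero_of_lt_one (sub_nonneg.2 (hχ x).2)
      (sub_lt_self 1 hχ_pos)).const_sub 1

variable [MeasurableSpace E] [BorelSpace E] {μ : Measure E} [μ.IsAddHaarMeasure]
  [NormedAddCommGroup G] [NormedSpace ℝ G]

theorem norm_convolution_normed_le (φ : ContDiffBump (0 : E)) {g : E → G} {B : ℝ}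
    (hB : ∀ᵐ y ∂μ, ‖g y‖ ≤ B) (x : E) :
    ‖(φ.normed μ ⋆[ContinuousLinearMap.lsmul ℝ ℝ, μ] g) x‖ ≤ B := by
  rw [convolution_eq_swap]
  have integral_eq : ∫ t, φ.normed μ (x - t) * B ∂μ = B := by
    rw [integral_mul_const, integral_sub_left_eq_self (φ.normed μ) μ x, φ.integral_normed, one_mul]
  refine (norm_integral_le_of_norm_le ((φ.integrable_normed.comp_sub_left x).mul_const B)
    ?_).trans_eq integral_eq
  filter_upwards [hB] with t ht
  rw [ContinuousLinearMap.lsmul_apply, norm_smul, Real.norm_of_nonneg (φ.nonneg_normed _)]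
  exact mul_le_mul_of_nonneg_left ht (φ.nonneg_normed _)

theorem exists_contDiff_tendsto_ae [CompleteSpace G] {u : E → G} (hu : AEStronglyMeasurable u μ)
    {B : ℝ} (hB : ∀ᵐ x ∂μ, ‖u x‖ ≤ B) :
    ∃ v : ℕ → E → G, (∀ k, ContDiff ℝ ∞ (v k)) ∧ (∀ k x, ‖v k x‖ ≤ B) ∧
      ∀ᵐ x ∂μ, Filter.Tendsto (fun k => v k x) Filter.atTop (𝓝 (u x)) := by
  have hu_loc : LocallyIntegrable u μ :=
    (memLp_top_of_bound hu B hB).locallyIntegrable le_top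
  set φ : ℕ → ContDiffBump (0 : E) := fun k =>
    { rIn := 1 / ((k : ℝ) + 1) / 2
      rOut := 1 / ((k : ℝ) + 1)
      rIn_pos := by positivity
      rIn_lt_rOut := half_lt_self (by positivity) }
  refine ⟨fun k => (φ k).normed μ ⋆[ContinuousLinearMap.lsmul ℝ ℝ, μ] u, fun k => ?_,
    fun k => norm_convolution_normed_le (φ k) hB, ?_⟩
  · exact (φ k).hasCompactSupport_normed.contDiff_convolution_left _ (φ k).contDiff_normed hu_loc
  · exact ContDiffBump.ae_convolution_tendsto_right_of_locallyIntegrable (K := 2)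
      tendsto_one_div_add_atTop_nhds_zero_nat (.of_forall fun k => by simp [φ, mul_div_cancel₀])
      hu_loc

theorem exists_contDiff_tendsto_ae_of_isOpen [CompleteSpace G] {U : Set E} (hU : IsOpen U)
    {u : E → G} (hu : AEStronglyMeasurable u μ) {B : ℝ} (hB : ∀ᵐ x ∂μ, ‖u x‖ ≤ B) :
    ∃ v : ℕ → E → G, (∀ k, ContDiff ℝ ∞ (v k)) ∧ (∀ k, ∀ x ∉ U, v k x = 0) ∧
      (∀ k x, ‖v k x‖ ≤ B) ∧
      ∀ᵐ x ∂μ.restrict U, Filter.Tendsto (fun k => v k x) Filter.atTop (𝓝 (u x)) := by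
  obtain ⟨η, η_smooth, η_zero, η_mem, η_tendsto⟩ := exists_contDiff_tendsto_one_of_isOpen hU
  obtain ⟨w, w_smooth, w_le, w_tendsto⟩ := exists_contDiff_tendsto_ae hu hB
  refine ⟨fun k x => η k x • w k x, fun k => (η_smooth k).smul (w_smooth k),
    fun k x hx => by simp [η_zero k x hx], fun k x => ?_, ?_⟩
  · rw [norm_smul, Real.norm_of_nonneg (η_mem k x).1]
    exact (mul_le_of_le_one_left (norm_nonneg _) (η_mem k x).2).trans (w_le k x)
  · filter_upwards [ae_restrict_of_ae w_tendsto, ae_restrict_mem hU.measurableSet] with x hwx hxU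
    simpa using (η_tendsto x hxU).smul hwx

end SmoothApproximation

section LocalDuality

open scoped ContDiff Topology

theorem tendsto_eLpNorm_of_tendsto_ae_of_bounded {α G : Type*} [MeasurableSpace α]
    [NormedAddCommGroup G] {μ : Measure α} [IsFiniteMeasure μ] {r : ℝ≥0∞} (hr : r ≠ 0)
    (hr_top : r ≠ ⊤) {v : ℕ → α → G} (hv : ∀ k, AEStronglyMeasurable (v k) μ) {B : ℝ≥0∞}
    (hB_top : B ≠ ⊤) (hB : ∀ k x, ‖v k x‖ₑ ≤ B) {u : α → G}
    (hu : ∀ᵐ x ∂μ, Filter.Tendsto (fun k => v k x) Filter.atTop (𝓝 (u x))) :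
    Filter.Tendsto (fun k => eLpNorm (v k) r μ) Filter.atTop (𝓝 (eLpNorm u r μ)) := by
  simp only [eLpNorm_eq_lintegral_rpow_enorm_toReal hr hr_top]
  refine ((ENNReal.continuous_rpow_const).tendsto _).comp
    (tendsto_lintegral_of_dominated_convergence' (fun _ => B ^ r.toReal)
      (fun k => (hv k).enorm.pow_const _) (fun k => .of_forall fun x => ?_) ?_ ?_)
  · exact ENNReal.rpow_le_rpow (hB k x) toReal_nonneg
  · rw [lintegral_const]
    exact ENNReal.mul_ne_top (ENNReal.rpow_ne_top_of_nonneg toReal_nonneg hB_top)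
      (measure_ne_top μ _)
  · filter_upwards [hu] with x hx
    exact ((ENNReal.continuous_rpow_const).tendsto _).comp hx.enorm

theorem exists_enorm_integral_mul_eq_lintegral {α : Type*} [MeasurableSpace α] {μ : Measure α}
    {F : α → ℂ} (hF : Integrable F μ) (w : SimpleFunc α ℝ≥0) :
    ∃ u : α → ℂ, MemLp u ⊤ μ ∧ (∀ x, ‖u x‖ₑ ≤ w x) ∧
      ‖∫ x, F x * u x ∂μ‖ₑ = ∫⁻ x, ‖F x‖ₑ * w x ∂μ := by
  set u : α → ℂ := fun x => (starRingEnd ℂ) (F x) / ‖F x‖ * (w x : ℝ)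
  have norm_u_le (x : α) : ‖u x‖ ≤ w x := by
    simpa [u] using mul_le_of_le_one_left (w x).2 (div_self_le_one ‖F x‖)
  obtain ⟨B, hB⟩ := (w.map NNReal.toReal).exists_forall_norm_le
  have hu_meas : AEStronglyMeasurable u μ := by
    have hF_conj : AEStronglyMeasurable (fun x => (starRingEnd ℂ) (F x)) μ :=
      continuous_conj.comp_aestronglyMeasurable hF.aestronglyMeasurable
    have hF_norm : AEStronglyMeasurable (fun x => (‖F x‖ : ℂ)) μ :=
      continuous_ofReal.comp_aestronglyMeasurable hF.aestronglyMeasurable.norm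
    exact (hF_conj.div₀ hF_norm).mul
      (continuous_ofReal.comp_aestronglyMeasurable (w.map NNReal.toReal).aestronglyMeasurable)
  have mul_u (x : α) : F x * u x = ((‖F x‖ * w x : ℝ) : ℂ) := by
    rcases eq_or_ne (F x) 0 with hx | hx
    · simp [hx]
    · have : (‖F x‖ : ℂ) ≠ 0 := by simpa
      simp only [u]
      rw [← mul_assoc, ← mul_div_assoc, mul_conj, normSq_eq_norm_sq]
      push_cast
      field_simp
  refine ⟨u, memLp_top_of_bound hu_meas B (.of_forall fun x => ?_), fun x => ?_, ?_⟩
  · exact (norm_u_le x).trans ((Real.le_norm_self _).trans (hB x))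
  · rw [← ofReal_norm, ← ENNReal.ofReal_coe_nnreal]
    exact ENNReal.ofReal_le_ofReal (norm_u_le x)
  · simp only [mul_u]
    rw [integral_complex_ofReal, ← ofReal_norm, norm_real, Real.norm_of_nonneg (by positivity),
      ofReal_integral_eq_lintegral_ofReal]
    · simp [ENNReal.ofReal_mul]
    · exact hF.norm.mul_bdd (w.map NNReal.toReal).aestronglyMeasurable (.of_forall hB)
    · exact .of_forall fun x => by positivity

variable {E : Type*} [NormedAddCommGroup E] [NormedSpace ℝ E] [FiniteDimensional ℝ E]
  [MeasurableSpace E] [BorelSpace E] {μ : Measure E} [μ.IsAddHaarMeasure] {U : Set E}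

theorem exists_contDiff_tendsto_ae_restrict {G : Type*} [NormedAddCommGroup G] [NormedSpace ℝ G]
    [CompleteSpace G] (hU : IsOpen U) {u : E → G} (hu : MemLp u ⊤ (μ.restrict U)) :
    ∃ v : ℕ → E → G, (∀ k, ContDiff ℝ ∞ (v k)) ∧ (∀ k, ∀ x ∉ U, v k x = 0) ∧
      (∀ k x, ‖v k x‖ₑ ≤ eLpNorm u ⊤ (μ.restrict U)) ∧
      ∀ᵐ x ∂μ.restrict U, Filter.Tendsto (fun k => v k x) Filter.atTop (𝓝 (u x)) := by
  set B : ℝ := (eLpNorm u ⊤ (μ.restrict U)).toReal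
  have norm_le_iff (y : G) : ‖y‖ ≤ B ↔ ‖y‖ₑ ≤ eLpNorm u ⊤ (μ.restrict U) := by
    rw [← toReal_enorm, ENNReal.toReal_le_toReal enorm_ne_top hu.eLpNorm_ne_top]
  have hu_meas : AEStronglyMeasurable (U.indicator u) μ :=
    (aestronglyMeasurable_indicator_iff hU.measurableSet).2 hu.aestronglyMeasurable
  have hu_bound : ∀ᵐ x ∂μ, ‖U.indicator u x‖ ≤ B := by
    filter_upwards [(ae_restrict_iff' hU.measurableSet).1 (enorm_ae_le_eLpNormEssSup u _)]
      with x hx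
    by_cases hxU : x ∈ U
    · simpa only [Set.indicator_of_mem hxU, norm_le_iff, eLpNorm_exponent_top] using hx hxU
    · simp [hxU, B]
  obtain ⟨v, hv_smooth, hv_zero, hv_bound, hv_lim⟩ :=
    exists_contDiff_tendsto_ae_of_isOpen hU hu_meas hu_bound
  refine ⟨v, hv_smooth, hv_zero, fun k x => (norm_le_iff _).1 (hv_bound k x), ?_⟩
  filter_upwards [hv_lim, ae_restrict_mem hU.measurableSet] with x hx hxU
  rwa [Set.indicator_of_mem hxU] at hx

variable {r r' : ℝ≥0∞} {F : E → ℂ}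

theorem enorm_setIntegral_mul_le_of_forall_contDiff (hU : IsOpen U) (hμU : μ U ≠ ⊤) (hr : r ≠ 0)
    (hF : IntegrableOn F U μ) {M : ℝ≥0∞} (hM : M ≠ ⊤)
    (H : ∀ v : E → ℂ, ContDiff ℝ ∞ v → (∀ x ∉ U, v x = 0) →
      ‖∫ x in U, F x * v x ∂μ‖ₑ ≤ M * eLpNorm v r (μ.restrict U))
    {u : E → ℂ} (hu : MemLp u ⊤ (μ.restrict U)) :
    ‖∫ x in U, F x * u x ∂μ‖ₑ ≤ M * eLpNorm u r (μ.restrict U) := by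
  have : IsFiniteMeasure (μ.restrict U) := ⟨by simpa using hμU.lt_top⟩
  obtain ⟨v, hv_smooth, hv_zero, hv_bound, hv_tendsto⟩ := exists_contDiff_tendsto_ae_restrict hU hu
  have hv_meas (k : ℕ) : AEStronglyMeasurable (v k) (μ.restrict U) :=
    (hv_smooth k).continuous.aestronglyMeasurable
  have integral_tendsto : Filter.Tendsto (fun k => ∫ x in U, F x * v k x ∂μ) Filter.atTop
      (𝓝 (∫ x in U, F x * u x ∂μ)) := by
    refine tendsto_integral_of_dominated_convergence
      (fun x => ‖F x‖ * (eLpNorm u ⊤ (μ.restrict U)).toReal)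
      (fun k => hF.aestronglyMeasurable.mul (hv_meas k)) (hF.norm.mul_const _)
      (fun k => .of_forall fun x => ?_) ?_
    · rw [norm_mul, ← toReal_enorm (v k x)]
      gcongr
      exacts [hu.eLpNorm_ne_top, hv_bound k x]
    · filter_upwards [hv_tendsto] with x hx using hx.const_mul _
  rcases eq_or_ne r ⊤ with rfl | hr_top
  · refine le_of_tendsto' integral_tendsto.enorm fun k => (H _ (hv_smooth k) (hv_zero k)).trans ?_
    gcongr
    rw [eLpNorm_exponent_top]
    exact essSup_le_of_ae_le _ (.of_forall (hv_bound k))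
  · exact le_of_tendsto_of_tendsto' integral_tendsto.enorm
      (ENNReal.Tendsto.const_mul (tendsto_eLpNorm_of_tendsto_ae_of_bounded hr hr_top hv_meas
        hu.eLpNorm_ne_top hv_bound hv_tendsto) (.inr hM)) fun k => H _ (hv_smooth k) (hv_zero k)

theorem eLpNorm_restrict_le_of_forall_contDiff [hrr' : r.HolderConjugate r'] (hU : IsOpen U)
    (hμU : μ U ≠ ⊤) (hF_meas : Measurable F) (hF : IntegrableOn F U μ) {M : ℝ≥0∞} (hM : M ≠ ⊤)
    (H : ∀ v : E → ℂ, ContDiff ℝ ∞ v → (∀ x ∉ U, v x = 0) →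
      ‖∫ x in U, F x * v x ∂μ‖ₑ ≤ M * eLpNorm v r (μ.restrict U)) :
    eLpNorm F r' (μ.restrict U) ≤ M := by
  rw [← eLpNorm_enorm]
  refine eLpNorm_le_of_forall_lintegral_mul_le (p := r) hF_meas.enorm fun w _ => ?_
  obtain ⟨u, hu_mem, hu_le, hu_eq⟩ := exists_enorm_integral_mul_eq_lintegral hF w
  rw [← hu_eq]
  refine (enorm_setIntegral_mul_le_of_forall_contDiff hU hμU hrr'.ne_zero hF hM H hu_mem).trans ?_
  gcongr
  exact eLpNorm_mono_enorm fun x => (hu_le x).trans_eq (enorm_eq_self _).symm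

theorem exists_contDiff_mul_eLpNorm_le_enorm_setIntegral [r.HolderConjugate r']
    (hU : IsOpen U) (hμU : μ U ≠ ⊤) (hF_meas : Measurable F) (hF : IntegrableOn F U μ)
    (hF_top : eLpNorm F r' (μ.restrict U) ≠ ⊤) {θ : ℝ≥0∞} (hθ : θ < 1) :
    ∃ v : E → ℂ, ContDiff ℝ ∞ v ∧ (∀ x ∉ U, v x = 0) ∧ eLpNorm v r (μ.restrict U) ≤ 1 ∧
      θ * eLpNorm F r' (μ.restrict U) ≤ ‖∫ x in U, F x * v x ∂μ‖ₑ := by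
  by_contra! H
  set N := eLpNorm F r' (μ.restrict U)
  have N_pos : 0 < θ * N := by simpa using H 0 contDiff_const (by simp) (by simp)
  have mul_N_lt : θ * N < N := by
    simpa using (ENNReal.mul_lt_mul_iff_left (right_ne_zero_of_mul N_pos.ne') hF_top).2 hθ
  refine mul_N_lt.not_ge (eLpNorm_restrict_le_of_forall_contDiff (r := r) hU hμU hF_meas hF
    mul_N_lt.ne_top fun v hv_smooth hv_zero => ?_)
  rcases eq_or_ne (eLpNorm v r (μ.restrict U)) ⊤ with hv_top | hv_top
  · simp [hv_top, ENNReal.mul_top N_pos.ne']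
  rcases eq_or_ne (eLpNorm v r (μ.restrict U)) 0 with hv_null | hv_null
  · have hv_ae := (eLpNorm_eq_zero_iff hv_smooth.continuous.aestronglyMeasurable
      (ENNReal.HolderConjugate.ne_zero r r')).1 hv_null
    rw [integral_eq_zero_of_ae (hv_ae.mono fun x hx => by simp [hx])]
    simp
  · set c : ℝ := (eLpNorm v r (μ.restrict U)).toReal⁻¹
    have enorm_c : ‖c‖ₑ = (eLpNorm v r (μ.restrict U))⁻¹ := by
      rw [enorm_inv (ENNReal.toReal_ne_zero.2 ⟨hv_null, hv_top⟩), Real.enorm_toReal hv_top]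
    have hcv := H (c • v) (contDiff_const.smul hv_smooth) (fun x hx => by simp [hv_zero x hx])
      (by rw [eLpNorm_const_smul, enorm_c, ENNReal.inv_mul_cancel hv_null hv_top])
    simp only [Pi.smul_apply, mul_smul_comm, integral_smul, enorm_smul, enorm_c] at hcv
    rw [mul_comm, ← ENNReal.inv_mul_le_iff hv_null hv_top]
    exact hcv.le

theorem exists_contDiff_mul_eLpNorm_le_setIntegral [r.HolderConjugate r'] (hU : IsOpen U)
    (hμU : μ U ≠ ⊤) (hF_meas : Measurable F) (hF : IntegrableOn F U μ)
    (hF_top : eLpNorm F r' (μ.restrict U) ≠ ⊤) {θ : ℝ≥0∞} (hθ : θ < 1) :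
    ∃ v : E → ℂ, ContDiff ℝ ∞ v ∧ (∀ x ∉ U, v x = 0) ∧ eLpNorm v r (μ.restrict U) ≤ 1 ∧
      ∃ t : ℝ≥0, ∫ x in U, F x * v x ∂μ = t ∧ θ * eLpNorm F r' (μ.restrict U) ≤ t := by
  obtain ⟨v, hv_smooth, hv_zero, hv_le, hv⟩ :=
    exists_contDiff_mul_eLpNorm_le_enorm_setIntegral (r := r) hU hμU hF_meas hF hF_top hθ
  obtain ⟨c, norm_c, hc⟩ := RCLike.exists_norm_eq_mul_self (∫ x in U, F x * v x ∂μ)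
  refine ⟨c • v, contDiff_const.smul hv_smooth, fun x hx => by simp [hv_zero x hx], ?_,
    ‖∫ x in U, F x * v x ∂μ‖₊, ?_, hv⟩
  · rw [eLpNorm_const_smul, ← ofReal_norm, norm_c]
    simpa using hv_le
  · simp only [Pi.smul_apply, mul_smul_comm]
    rw [integral_smul, smul_eq_mul, ← hc]
    simp

end LocalDuality

section Amalgam

variable {ι E : Type*} [MeasurableSpace ι] [MeasurableSpace E]

/-- The norm of the Wiener amalgam space `W(L^r, L^s)` with respect to a family `Q` of cells in
place of the lattice cubes: the `ℓ^s` norm of the `L^r` norms of `f` over the cells. -/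
noncomputable def amalgamNorm (μ : Measure E) (Q : ι → Set E) (r s : ℝ≥0∞) (f : E → ℂ) : ℝ≥0∞ :=
  eLpNorm (fun n => eLpNorm f r (μ.restrict (Q n))) s Measure.count

variable {μ : Measure E} {Q Q' : ι → Set E} {r s r' s' : ℝ≥0∞}

theorem amalgamNorm_congr_cells (h : ∀ n, Q n =ᵐ[μ] Q' n) (f : E → ℂ) :
    amalgamNorm μ Q r s f = amalgamNorm μ Q' r s f := by
  simp only [amalgamNorm, Measure.restrict_congr_set (h _)]

theorem amalgamNorm_congr_norm {f g : E → ℂ} (h : ∀ x, ‖f x‖ = ‖g x‖) :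
    amalgamNorm μ Q r s f = amalgamNorm μ Q r s g := by
  simp only [amalgamNorm, eLpNorm_congr_norm_ae (.of_forall h)]

variable [Countable ι] [DiscreteMeasurableSpace ι]

theorem lintegral_enorm_mul_le_amalgamNorm_mul_amalgamNorm [r.HolderConjugate r']
    [s.HolderConjugate s'] (hQ_meas : ∀ n, MeasurableSet (Q n))
    (hQ_disj : Pairwise (Function.onFun Disjoint Q)) (hQ_cover : ⋃ n, Q n = Set.univ)
    {f g : E → ℂ} (hf : Measurable f) (hg : Measurable g) :
    ∫⁻ x, ‖f x‖ₑ * ‖g x‖ₑ ∂μ ≤ amalgamNorm μ Q r s f * amalgamNorm μ Q r' s' g := by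
  calc ∫⁻ x, ‖f x‖ₑ * ‖g x‖ₑ ∂μ
      = ∑' n, ∫⁻ x in Q n, ‖f x‖ₑ * ‖g x‖ₑ ∂μ := by
        rw [← lintegral_iUnion hQ_meas hQ_disj, hQ_cover, setLIntegral_univ]
    _ ≤ ∑' n, eLpNorm f r (μ.restrict (Q n)) * eLpNorm g r' (μ.restrict (Q n)) := by
        refine ENNReal.tsum_le_tsum fun n => ?_
        simpa only [eLpNorm_enorm] using lintegral_mul_le_eLpNorm_mul_eLpNorm (p := r) (q := r')
          hf.enorm.aemeasurable hg.enorm.aemeasurable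
    _ ≤ amalgamNorm μ Q r s f * amalgamNorm μ Q r' s' g := by
        rw [← lintegral_count]
        exact lintegral_mul_le_eLpNorm_mul_eLpNorm Measurable.of_discrete.aemeasurable
          Measurable.of_discrete.aemeasurable

end Amalgam

section AmalgamDuality

open scoped ContDiff

variable {ι E : Type*} {Q : ι → Set E} {v : ι → E → ℂ} {a : ι → ℝ≥0} {A : Finset ι}

theorem sum_mul_eq_of_mem_cell (hQ_disj : Pairwise (Function.onFun Disjoint Q))
    (hv_zero : ∀ n, ∀ x ∉ Q n, v n x = 0) (ha : ∀ n ∉ A, a n = 0) {n : ι} {x : E} (hx : x ∈ Q n) :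
    ∑ m ∈ A, (a m : ℂ) * v m x = a n * v n x := by
  refine Finset.sum_eq_single n (fun m _ hmn => ?_) fun hn => by simp [ha n hn]
  rw [hv_zero m x ((hQ_disj hmn).notMem_of_mem_right hx), mul_zero]

theorem hasCompactSupport_of_isBounded {X G : Type*} [PseudoMetricSpace X] [ProperSpace X]
    [Zero G] {f : X → G} {S : Set X} (hS : Bornology.IsBounded S) (hf : ∀ x ∉ S, f x = 0) :
    HasCompactSupport f :=
  .intro hS.isCompact_closure fun x hx => hf x (mt (subset_closure ·) hx)

variable [NormedAddCommGroup E] [NormedSpace ℝ E] [FiniteDimensional ℝ E]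

theorem exists_schwartzMap_eq_sum (hQ_bdd : ∀ n, Bornology.IsBounded (Q n))
    (hv_smooth : ∀ n, ContDiff ℝ ∞ (v n)) (hv_zero : ∀ n, ∀ x ∉ Q n, v n x = 0) (a : ι → ℝ≥0)
    (A : Finset ι) : ∃ g : 𝓢(E, ℂ), ∀ x, g x = ∑ n ∈ A, (a n : ℂ) * v n x := by
  have hv_supp (n : ι) : HasCompactSupport (v n) :=
    hasCompactSupport_of_isBounded (hQ_bdd n) (hv_zero n)
  refine ⟨∑ n ∈ A, (a n : ℂ) • (hv_supp n).toSchwartzMap (hv_smooth n), fun x => ?_⟩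
  simp

variable [MeasurableSpace E] [BorelSpace E] {μ : Measure E} [μ.IsAddHaarMeasure]
  {F : E → ℂ} {B : ℝ} {r s r' s' : ℝ≥0∞}

theorem integral_mul_sum_eq_sum_setIntegral (hQ_bdd : ∀ n, Bornology.IsBounded (Q n))
    (hF : Measurable F) (hB : ∀ x, ‖F x‖ ≤ B) (hv_cont : ∀ n, Continuous (v n))
    (hv_zero : ∀ n, ∀ x ∉ Q n, v n x = 0) (a : ι → ℝ≥0) (A : Finset ι) :
    ∫ x, F x * ∑ n ∈ A, (a n : ℂ) * v n x ∂μ = ∑ n ∈ A, a n * ∫ x in Q n, F x * v n x ∂μ := by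
  have hFv (n : ι) : Integrable (fun x => F x * v n x) μ :=
    ((hv_cont n).integrable_of_hasCompactSupport (hasCompactSupport_of_isBounded (hQ_bdd n)
      (hv_zero n))).bdd_mul hF.aestronglyMeasurable (.of_forall hB)
  simp only [Finset.mul_sum, mul_left_comm (F _)]
  rw [integral_finsetSum _ fun n _ => (hFv n).const_mul _]
  refine Finset.sum_congr rfl fun n _ => ?_
  rw [integral_const_mul, setIntegral_eq_integral_of_forall_compl_eq_zero]
  exact fun x hx => by rw [hv_zero n x hx, mul_zero]

theorem exists_schwartzMap_mul_sum_le_enorm_integral [r.HolderConjugate r']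
    (hQ_open : ∀ n, IsOpen (Q n)) (hQ_bdd : ∀ n, Bornology.IsBounded (Q n))
    (hQ_disj : Pairwise (Function.onFun Disjoint Q)) (hF : Measurable F) (hB : ∀ x, ‖F x‖ ≤ B)
    (ha : ∀ n ∉ A, a n = 0) {θ : ℝ≥0∞} (hθ : θ < 1) :
    ∃ g : 𝓢(E, ℂ), (∀ n, eLpNorm g r (μ.restrict (Q n)) ≤ a n) ∧
      θ * ∑ n ∈ A, eLpNorm F r' (μ.restrict (Q n)) * a n ≤ ‖∫ x, F x * g x ∂μ‖ₑ := by
  have hQ_top (n : ι) : μ (Q n) ≠ ⊤ := (hQ_bdd n).measure_lt_top.ne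
  have hF_memLp (n : ι) (p : ℝ≥0∞) : MemLp F p (μ.restrict (Q n)) :=
    have : IsFiniteMeasure (μ.restrict (Q n)) := ⟨by simpa using (hQ_top n).lt_top⟩
    (memLp_top_of_bound hF.aestronglyMeasurable B (.of_forall hB)).mono_exponent le_top
  choose v hv_smooth hv_zero hv_le t ht hFt using fun n =>
    exists_contDiff_mul_eLpNorm_le_setIntegral (r := r) (hQ_open n) (hQ_top n) hF
      (memLp_one_iff_integrable.1 (hF_memLp n 1)) (hF_memLp n r').eLpNorm_ne_top hθ
  have enorm_coe (c : ℝ≥0) : ‖(c : ℂ)‖ₑ = c := by simp [← ofReal_norm]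
  obtain ⟨g, hg⟩ := exists_schwartzMap_eq_sum hQ_bdd hv_smooth hv_zero a A
  refine ⟨g, fun n => ?_, ?_⟩
  · have hg_ae : g =ᵐ[μ.restrict (Q n)] (a n : ℂ) • v n := by
      filter_upwards [ae_restrict_mem (hQ_open n).measurableSet] with x hx
      rw [hg, sum_mul_eq_of_mem_cell hQ_disj hv_zero ha hx, Pi.smul_apply, smul_eq_mul]
    rw [eLpNorm_congr_ae hg_ae, eLpNorm_const_smul, enorm_coe]
    exact mul_le_of_le_one_right' (hv_le n)
  · have integral_eq : ∫ x, F x * g x ∂μ = ((∑ n ∈ A, a n * t n : ℝ≥0) : ℂ) := by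
      simp only [hg]
      rw [integral_mul_sum_eq_sum_setIntegral hQ_bdd hF hB (fun n => (hv_smooth n).continuous)
        hv_zero]
      simp [ht]
    rw [integral_eq, enorm_coe]
    calc θ * ∑ n ∈ A, eLpNorm F r' (μ.restrict (Q n)) * a n
        = ∑ n ∈ A, a n * (θ * eLpNorm F r' (μ.restrict (Q n))) := by
          rw [Finset.mul_sum]
          exact Finset.sum_congr rfl fun n _ => by ring
      _ ≤ ∑ n ∈ A, (a n * t n : ℝ≥0∞) := by
          gcongr with n
          exact hFt n
      _ = (∑ n ∈ A, a n * t n : ℝ≥0) := by push_cast; rfl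

theorem amalgamNorm_le_of_forall_schwartzMap [Countable ι] [MeasurableSpace ι]
    [DiscreteMeasurableSpace ι] [r.HolderConjugate r'] [s.HolderConjugate s']
    (hQ_open : ∀ n, IsOpen (Q n)) (hQ_bdd : ∀ n, Bornology.IsBounded (Q n))
    (hQ_disj : Pairwise (Function.onFun Disjoint Q)) (hF : Measurable F) (hB : ∀ x, ‖F x‖ ≤ B)
    {M : ℝ≥0∞} (H : ∀ g : 𝓢(E, ℂ), ‖∫ x, F x * g x ∂μ‖ₑ ≤ M * amalgamNorm μ Q r s g) :
    amalgamNorm μ Q r' s' F ≤ M := by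
  refine eLpNorm_le_of_forall_lintegral_mul_le (p := s) .of_discrete fun a ha_supp => ?_
  have ha_fin : (Function.support a).Finite :=
    Measure.count_apply_lt_top.1 (SimpleFunc.finMeasSupp_iff_support.1 ha_supp)
  have ha (n : ι) (hn : n ∉ ha_fin.toFinset) : a n = 0 := by simpa using hn
  have tsum_eq : ∑' n, eLpNorm F r' (μ.restrict (Q n)) * a n =
      ∑ n ∈ ha_fin.toFinset, eLpNorm F r' (μ.restrict (Q n)) * a n :=
    tsum_eq_sum fun n hn => by simp [ha n hn]
  rw [lintegral_count, tsum_eq]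
  refine ENNReal.le_of_forall_lt_one_mul_le fun θ hθ => ?_
  obtain ⟨g, hg_le, hg⟩ := exists_schwartzMap_mul_sum_le_enorm_integral (μ := μ) (r := r)
    (r' := r') hQ_open hQ_bdd hQ_disj hF hB ha hθ
  refine hg.trans ((H g).trans ?_)
  gcongr
  exact eLpNorm_mono_enorm fun n => by simpa only [enorm_eq_self] using hg_le n

end AmalgamDuality

section LatticeCube

variable {ι : Type*}

/-- The half-open unit cube `n + [0,1)^ι` of the lattice `ℤ^ι`, i.e. the translate of `unitCube`
over which the `n`-th local norm in `wNorm` is taken. -/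
def latticeCube (n : ι → ℤ) : Set (EuclideanSpace ℝ ι) :=
  {x | ∀ i, x i ∈ Set.Ico (n i : ℝ) (n i + 1)}

theorem mem_latticeCube_iff_floor {n : ι → ℤ} {x : EuclideanSpace ℝ ι} :
    x ∈ latticeCube n ↔ (fun i => ⌊x i⌋) = n := by
  simp only [latticeCube, Set.mem_ofPred_eq, Set.mem_Ico, funext_iff, Int.floor_eq_iff]

theorem latticeCube_eq_preimage_pi (n : ι → ℤ) :
    latticeCube n = WithLp.ofLp ⁻¹' Set.univ.pi fun i => Set.Ico (n i : ℝ) (n i + 1) := by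
  ext x
  simp [latticeCube]

theorem convex_latticeCube (n : ι → ℤ) : Convex ℝ (latticeCube n) :=
  fun _ hx _ hy _ _ ha hb hab i => convex_Ico _ _ (hx i) (hy i) ha hb hab

theorem pairwise_disjoint_latticeCube :
    Pairwise (Function.onFun Disjoint (latticeCube : (ι → ℤ) → Set (EuclideanSpace ℝ ι))) :=
  fun _ _ hmn => Set.disjoint_left.2 fun _ hm hn =>
    hmn ((mem_latticeCube_iff_floor.1 hm).symm.trans (mem_latticeCube_iff_floor.1 hn))

theorem iUnion_latticeCube :
    ⋃ n : ι → ℤ, latticeCube n = (Set.univ : Set (EuclideanSpace ℝ ι)) :=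
  Set.eq_univ_of_forall fun _ => Set.mem_iUnion.2 ⟨_, mem_latticeCube_iff_floor.2 rfl⟩

variable [Fintype ι]

theorem measurableSet_latticeCube (n : ι → ℤ) : MeasurableSet (latticeCube n) := by
  rw [latticeCube_eq_preimage_pi]
  exact (MeasurableSet.univ_pi fun i => measurableSet_Ico).preimage (by fun_prop)

theorem isBounded_latticeCube (n : ι → ℤ) : Bornology.IsBounded (latticeCube n) := by
  rw [latticeCube_eq_preimage_pi]
  exact (PiLp.antilipschitzWith_ofLp 2 _).isBounded_preimage
    (.pi fun i => Metric.isBounded_Ico _ _)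

theorem interior_latticeCube_ae_eq (n : ι → ℤ) :
    interior (latticeCube n) =ᵐ[volume] latticeCube n :=
  interior_ae_eq_of_null_frontier ((convex_latticeCube n).addHaar_frontier volume)

theorem unitCube_eq_preimage_latticeCube {d : ℕ} (n : Fin d → ℤ) :
    unitCube d = (· + WithLp.toLp 2 fun i => (n i : ℝ)) ⁻¹' latticeCube n := by
  ext x
  simp [unitCube, latticeCube, add_comm]

theorem wNorm_eq_amalgamNorm {d : ℕ} {r s : ℝ≥0∞} (hr : r ≠ 0) (hs : s ≠ 0)
    (f : EuclideanSpace ℝ (Fin d) → ℂ) :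
    wNorm d r s f = amalgamNorm volume latticeCube r s f := by
  rw [wNorm, lqNorm_eq_eLpNorm hs, amalgamNorm]
  congr 1
  ext n
  set v : EuclideanSpace ℝ (Fin d) := WithLp.toLp 2 fun i => (n i : ℝ)
  have translate : MeasurePreserving (MeasurableEquiv.addRight v)
      (volume.restrict (unitCube d)) (volume.restrict (latticeCube n)) := by
    rw [unitCube_eq_preimage_latticeCube n]
    exact (measurePreserving_add_right volume v).restrict_preimage_emb
      (MeasurableEquiv.addRight v).measurableEmbedding _
  rw [← eLpNorm_enorm, ← lqNorm_eq_eLpNorm hr]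
  exact lqNorm_comp_measurableEquiv _ translate r fun x => ‖f x‖ₑ

end LatticeCube

section Conjugation

variable {E : Type*} [NormedAddCommGroup E] [NormedSpace ℝ E]

/-- The complex conjugate of a Schwartz function, again as a Schwartz function. -/
noncomputable def schwartzConj (f : 𝓢(E, ℂ)) : 𝓢(E, ℂ) :=
  SchwartzMap.postcompCLM (𝕜 := ℝ) (conjCLE : ℂ →L[ℝ] ℂ) f

@[simp]
theorem schwartzConj_apply (f : 𝓢(E, ℂ)) (x : E) :
    schwartzConj f x = (starRingEnd ℂ) (f x) := by
  simp [schwartzConj]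

variable {ι : Type*} [Fintype ι]

theorem conj_gaussWin (t : EuclideanSpace ℝ ι) :
    (starRingEnd ℂ) (gaussWin t) = gaussWin t := by
  simp [gaussWin, ← exp_conj]

theorem STFT_schwartzConj (F : 𝓢(EuclideanSpace ℝ ι, ℂ)) (x ω : EuclideanSpace ℝ ι) :
    STFT (schwartzConj F) x ω = (starRingEnd ℂ) (STFT F x (-ω)) := by
  unfold STFT
  rw [← integral_conj]
  refine integral_congr_ae (.of_forall fun t => ?_)
  simp [conj_gaussWin, ← exp_conj, map_ofNat]

theorem modNorm_schwartzConj (p q : ℝ≥0∞) (F : 𝓢(EuclideanSpace ℝ ι, ℂ)) :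
    modNorm p q (schwartzConj F) = modNorm p q F := by
  simp only [modNorm, STFT_schwartzConj, RCLike.nnnorm_conj]
  exact lqNorm_comp_measurableEquiv (MeasurableEquiv.neg _) (Measure.measurePreserving_neg volume)
    q fun ω => lqNorm volume p fun x => (‖STFT F x ω‖₊ : ℝ≥0∞)

end Conjugation

section WeylKernel

variable {d : ℕ}

/-- The integral kernel `k(x, y) = ∫ e^{2πi(x-y)·ω} σ((x+y)/2, ω) dω` of the Weyl operator
`L_σ`. -/
noncomputable def weylKernel (σ : EuclideanSpace ℝ (Fin d ⊕ Fin d) → ℂ)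
    (x y : EuclideanSpace ℝ (Fin d)) : ℂ :=
  ∫ ω, exp (I * (2 * Real.pi * (inner ℝ (x - y) ω : ℝ))) * σ (pairE ((2 : ℝ)⁻¹ • (x + y)) ω)

theorem weylOp_eq_integral_weylKernel (σ : EuclideanSpace ℝ (Fin d ⊕ Fin d) → ℂ)
    (f : EuclideanSpace ℝ (Fin d) → ℂ) (x : EuclideanSpace ℝ (Fin d)) :
    weylOp σ f x = ∫ y, weylKernel σ x y * f y := by
  simp only [weylOp, weylKernel, integral_mul_const]

theorem continuous_pairE :
    Continuous fun z : EuclideanSpace ℝ (Fin d) × EuclideanSpace ℝ (Fin d) => pairE z.1 z.2 := by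
  refine (PiLp.continuous_toLp 2 _).comp (continuous_pi ?_)
  rintro (i | i) <;> simp only [Sum.elim_inl, Sum.elim_inr] <;> fun_prop

theorem norm_le_norm_pairE (x ω : EuclideanSpace ℝ (Fin d)) : ‖ω‖ ≤ ‖pairE x ω‖ := by
  simp only [EuclideanSpace.norm_eq, pairE, Fintype.sum_sum_type, Sum.elim_inl, Sum.elim_inr]
  exact Real.sqrt_le_sqrt (le_add_of_nonneg_left (by positivity))

theorem exists_norm_schwartzMap_le_rpow {E : Type*} [NormedAddCommGroup E] [NormedSpace ℝ E]
    (f : 𝓢(E, ℂ)) (k : ℕ) : ∃ C : ℝ, 0 ≤ C ∧ ∀ x, ‖f x‖ ≤ C * (1 + ‖x‖) ^ (-(k : ℝ)) := by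
  refine ⟨2 ^ k * (Finset.Iic ((k, 0) : ℕ × ℕ)).sup
    (fun m => SchwartzMap.seminorm ℝ m.1 m.2) f, by positivity, fun x => ?_⟩
  have decay := SchwartzMap.one_add_le_sup_seminorm_apply (𝕜 := ℝ) (m := (k, 0)) (k := k)
    (n := 0) le_rfl le_rfl f x
  rw [norm_iteratedFDeriv_zero] at decay
  rw [Real.rpow_neg (by positivity), ← div_eq_mul_inv, le_div_iff₀ (by positivity),
    Real.rpow_natCast, mul_comm]
  exact decay

variable (σ : 𝓢(EuclideanSpace ℝ (Fin d ⊕ Fin d), ℂ))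

theorem stronglyMeasurable_weylKernel :
    StronglyMeasurable fun z : EuclideanSpace ℝ (Fin d) × EuclideanSpace ℝ (Fin d) =>
      weylKernel σ z.1 z.2 := by
  have hpair := continuous_pairE (d := d)
  refine StronglyMeasurable.integral_prod_right (f := fun
    (z : EuclideanSpace ℝ (Fin d) × EuclideanSpace ℝ (Fin d)) ω =>
      exp (I * (2 * Real.pi * (inner ℝ (z.1 - z.2) ω : ℝ))) *
        σ (pairE ((2 : ℝ)⁻¹ • (z.1 + z.2)) ω)) (Continuous.stronglyMeasurable ?_)
  simp only [Function.uncurry_def]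
  refine .mul (by fun_prop) (σ.continuous.comp (hpair.comp (f := fun
    z : (EuclideanSpace ℝ (Fin d) × EuclideanSpace ℝ (Fin d)) × EuclideanSpace ℝ (Fin d) =>
      ((2 : ℝ)⁻¹ • (z.1.1 + z.1.2), z.2)) (by fun_prop)))

theorem exists_norm_weylKernel_le : ∃ B : ℝ, ∀ x y, ‖weylKernel σ x y‖ ≤ B := by
  obtain ⟨C, hC, hσ⟩ := exists_norm_schwartzMap_le_rpow σ (d + 1)
  refine ⟨∫ ω : EuclideanSpace ℝ (Fin d), C * (1 + ‖ω‖) ^ (-((d + 1 : ℕ) : ℝ)), fun x y =>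
    norm_integral_le_of_norm_le ((integrable_one_add_norm (by simp)).const_mul C)
      (.of_forall fun ω => ?_)⟩
  have norm_phase : ‖exp (I * (2 * Real.pi * (inner ℝ (x - y) ω : ℝ)))‖ = 1 := by
    simp [norm_exp]
  rw [norm_mul, norm_phase, one_mul]
  refine (hσ _).trans ?_
  gcongr C * ?_
  exact Real.rpow_le_rpow_of_nonpos (by positivity) (by gcongr; exact norm_le_norm_pairE _ _)
    (neg_nonpos.2 (Nat.cast_nonneg _))

theorem conj_weylKernel_schwartzConj (x y : EuclideanSpace ℝ (Fin d)) :
    (starRingEnd ℂ) (weylKernel (schwartzConj σ) y x) = weylKernel σ x y := by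
  unfold weylKernel
  rw [← integral_conj]
  refine integral_congr_ae (.of_forall fun ω => ?_)
  simp only [map_mul, schwartzConj_apply, ← exp_conj, conj_I, conj_ofReal, map_ofNat, conj_conj]
  rw [add_comm y x, ← neg_sub x y, inner_neg_left, ofReal_neg, mul_neg, neg_mul_neg]

variable (f g : 𝓢(EuclideanSpace ℝ (Fin d), ℂ))

theorem stronglyMeasurable_weylOp : StronglyMeasurable (weylOp σ f) := by
  rw [funext (weylOp_eq_integral_weylKernel σ f)]
  exact ((stronglyMeasurable_weylKernel σ).mul
    (f.continuous.comp continuous_snd).stronglyMeasurable).integral_prod_right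

theorem exists_norm_weylOp_le : ∃ B : ℝ, ∀ x, ‖weylOp σ f x‖ ≤ B := by
  obtain ⟨B, hB⟩ := exists_norm_weylKernel_le σ
  refine ⟨∫ y, B * ‖f y‖, fun x => ?_⟩
  rw [weylOp_eq_integral_weylKernel]
  refine norm_integral_le_of_norm_le (f.integrable.norm.const_mul B) (.of_forall fun y => ?_)
  rw [norm_mul]
  exact mul_le_mul_of_nonneg_right (hB x y) (norm_nonneg _)

theorem integral_weylOp_mul :
    ∫ x, weylOp σ f x * g x =
      ∫ y, f y * (starRingEnd ℂ) (weylOp (schwartzConj σ) (schwartzConj g) y) := by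
  obtain ⟨B, hB⟩ := exists_norm_weylKernel_le σ
  have hint : Integrable (Function.uncurry fun x y : EuclideanSpace ℝ (Fin d) =>
      weylKernel σ x y * (g x * f y)) (volume.prod volume) :=
    (g.integrable.mul_prod f.integrable).bdd_mul
      (stronglyMeasurable_weylKernel σ).aestronglyMeasurable (.of_forall fun z => hB z.1 z.2)
  calc ∫ x, weylOp σ f x * g x
      = ∫ x, ∫ y, weylKernel σ x y * (g x * f y) := by
        simp only [weylOp_eq_integral_weylKernel, ← integral_mul_const, mul_assoc, mul_comm (g _)]
    _ = ∫ y, ∫ x, weylKernel σ x y * (g x * f y) := integral_integral_swap hint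
    _ = ∫ y, f y * (starRingEnd ℂ) (weylOp (schwartzConj σ) (schwartzConj g) y) := by
        simp only [weylOp_eq_integral_weylKernel, ← integral_conj, map_mul, schwartzConj_apply,
          conj_weylKernel_schwartzConj, conj_conj, mul_comm (f _), ← integral_mul_const, mul_assoc]

end WeylKernel

section WeylDuality

variable {d : ℕ} {r s r' s' : ℝ≥0∞} {σ : 𝓢(EuclideanSpace ℝ (Fin d ⊕ Fin d), ℂ)} {K : ℝ≥0∞}

theorem enorm_integral_weylOp_mul_le [r.HolderConjugate r'] [s.HolderConjugate s']
    (h : ∀ f : 𝓢(EuclideanSpace ℝ (Fin d), ℂ),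
      amalgamNorm volume latticeCube r s (weylOp (schwartzConj σ) f) ≤
        K * amalgamNorm volume latticeCube r s f)
    (f g : 𝓢(EuclideanSpace ℝ (Fin d), ℂ)) :
    ‖∫ x, weylOp σ f x * g x‖ₑ ≤ K * amalgamNorm volume latticeCube r' s' f *
      amalgamNorm volume latticeCube r s g := by
  rw [integral_weylOp_mul]
  set T := weylOp (schwartzConj σ) (schwartzConj g)
  have hT : Measurable T := (stronglyMeasurable_weylOp _ _).measurable
  calc ‖∫ y, f y * (starRingEnd ℂ) (T y)‖ₑ
      ≤ ∫⁻ y, ‖T y‖ₑ * ‖f y‖ₑ := by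
        refine (enorm_integral_le_lintegral_enorm _).trans_eq (lintegral_congr fun y => ?_)
        rw [enorm_mul, RCLike.enorm_conj, mul_comm]
    _ ≤ amalgamNorm volume latticeCube r s T * amalgamNorm volume latticeCube r' s' f :=
        lintegral_enorm_mul_le_amalgamNorm_mul_amalgamNorm measurableSet_latticeCube
          pairwise_disjoint_latticeCube iUnion_latticeCube hT f.continuous.measurable
    _ ≤ K * amalgamNorm volume latticeCube r s (schwartzConj g) *
          amalgamNorm volume latticeCube r' s' f := by
        gcongr
        exact h _
    _ = K * amalgamNorm volume latticeCube r' s' f * amalgamNorm volume latticeCube r s g := by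
        rw [amalgamNorm_congr_norm (g := g) fun x => by simp]
        ring

theorem amalgamNorm_weylOp_le [r.HolderConjugate r'] [s.HolderConjugate s']
    (h : ∀ f : 𝓢(EuclideanSpace ℝ (Fin d), ℂ),
      amalgamNorm volume latticeCube r s (weylOp (schwartzConj σ) f) ≤
        K * amalgamNorm volume latticeCube r s f)
    (f : 𝓢(EuclideanSpace ℝ (Fin d), ℂ)) :
    amalgamNorm volume latticeCube r' s' (weylOp σ f) ≤
      K * amalgamNorm volume latticeCube r' s' f := by
  obtain ⟨B, hB⟩ := exists_norm_weylOp_le σ f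
  rw [← amalgamNorm_congr_cells interior_latticeCube_ae_eq]
  refine amalgamNorm_le_of_forall_schwartzMap (r := r) (s := s) (fun n => isOpen_interior)
    (fun n => (isBounded_latticeCube n).subset interior_subset)
    (fun m n hmn => (pairwise_disjoint_latticeCube hmn).mono interior_subset interior_subset)
    (stronglyMeasurable_weylOp σ f).measurable hB fun g => ?_
  rw [amalgamNorm_congr_cells interior_latticeCube_ae_eq]
  exact enorm_integral_weylOp_mul_le h f g

theorem weyl_amalgam_duality_general (hr : 1 ≤ r) (hs : 1 ≤ s)
    (h : ∀ f : 𝓢(EuclideanSpace ℝ (Fin d), ℂ),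
      wNorm d r s (weylOp (schwartzConj σ) f) ≤ K * wNorm d r s f)
    (f : 𝓢(EuclideanSpace ℝ (Fin d), ℂ)) :
    wNorm d (dualExp r) (dualExp s) (weylOp σ f) ≤ K * wNorm d (dualExp r) (dualExp s) f := by
  have hr' := holderConjugate_dualExp_s6 hr
  have hs' := holderConjugate_dualExp_s6 hs
  simp only [wNorm_eq_amalgamNorm hr'.ne_zero hs'.ne_zero,
    wNorm_eq_amalgamNorm hr'.symm.ne_zero hs'.symm.ne_zero] at h ⊢
  exact amalgamNorm_weylOp_le h f

end WeylDuality

/-- duality for Weyl operators on Wiener amalgam spaces. -/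
theorem weyl_amalgam_duality (d : ℕ) (p q r s : ℝ≥0∞)
    (hp : 1 ≤ p) (hq : 1 ≤ q) (hr : 1 ≤ r) (hs : 1 ≤ s)
    (h : ∃ C : ℝ, 0 < C ∧
      ∀ (σ : SchwartzMap (EuclideanSpace ℝ (Fin d ⊕ Fin d)) ℂ)
        (f : SchwartzMap (EuclideanSpace ℝ (Fin d)) ℂ),
        wNorm d r s (weylOp ⇑σ ⇑f) ≤
          ENNReal.ofReal C * modNorm p q ⇑σ * wNorm d r s ⇑f) :
    ∃ C' : ℝ, 0 < C' ∧
      ∀ (σ : SchwartzMap (EuclideanSpace ℝ (Fin d ⊕ Fin d)) ℂ)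
        (f : SchwartzMap (EuclideanSpace ℝ (Fin d)) ℂ),
        wNorm d (dualExp r) (dualExp s) (weylOp ⇑σ ⇑f) ≤
          ENNReal.ofReal C' * modNorm p q ⇑σ *
            wNorm d (dualExp r) (dualExp s) ⇑f := by
  obtain ⟨C, hC, hbound⟩ := h
  refine ⟨C, hC, fun σ => weyl_amalgam_duality_general hr hs fun f => ?_⟩
  simpa only [modNorm_schwartzConj] using hbound (schwartzConj σ) f
end
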